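/- **Setting.** A DAG $G$ on nodes $1,\dots,n$ is given by parent sets $\pi_i\subseteq\{1,\dots,i-1\}$; $p_i=|\pi_i|$ is the in-degree of $i$ and $d_{avg}=\frac1n\sum_i p_i$. $G$ is a *polytree* if its underlying undirected graph is acyclic (possibly disconnected). A Gaussian Bayesian network on $G$ with parameters $A_i\in\mathbb R^{\pi_i}$, $\sigma_i>0$ is the law of $X\in\mathbb R^n$ with $X_i=\sum_{j\in\pi_i}(A_i)_jX_j+\eta_i$, where the $\eta_i\sim N(0,\sigma_i^2)$ are independent. $d_{TV}(P,Q)=\sup_S|P(S)-Q(S)|$ over measurable $S$. **Estimator.** Given $m$ i.i.d. samples from $P$, use the first $m_1=\lfloor m/2\rfloor$ samples as follows: for each node $i$ with $p_i\ge1$, form $\lfloor m_1/p_i\rfloor$ disjoint batches of $p_i$ samples; in each batch solve the $p_i\times p_i$ linear system equating the values of node $i$ to linear combinations of the values of its parents (the solution is set to $0$ if the system is singular); let $\widehat A_i$ be the coordinate-wise median of the batch solutions. For every node $i$ let $\widehat\sigma_i^2$ be the mean over the remaining $m-m_1$ samples of $(X_i-\sum_{j\in\pi_i}(\widehat A_i)_jX_j)^2$.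 Let $Q$ be the Gaussian Bayesian network on $G$ with parameters $(\widehat A_i,\widehat\sigma_i)$. **Theorem.** There is a universal constant $C>0$ such that the following holds. 1. Let $\varepsilon,\delta\in(0,1)$, let $G$ be a polytree on $n$ nodes with all in-degrees at most $d$, and let $P$ be any Gaussian Bayesian network on $G$. If $$m\ \ge\ C\cdot\frac{n\,\max(1,d_{avg}d)}{\varepsilon^2}\,\log\frac{n}{\varepsilon\delta},$$ then with probability at least $1-\delta$ over the samples $d_{TV}(P,Q)\le\varepsilon$. 2. If in addition $n\ge2$ and the underlying graph of $G$ is connected, then the same conclusion holds for every $$m\ \ge\ C\cdot\frac{n\,d_{avg}\,d}{\varepsilon^2}\,\log\frac{n}{\varepsilon\delta}.$$ 3. (Running time; a step is an arithmetic operation $+,-,\times,\div$ on reals, the loading of a rational constant, or a comparison of two reals, and computations are algebraic computation trees with worst-case step count.) Let $\omega\ge2$ be an exponent such that $p\times p$ real matrices can be multiplied in $O(p^\omega)$ steps. Then there is a constant $K$, depending only on $\omega$ (and $C$), such that for every polytree $G$ on $n$ nodes with all in-degrees at most $d$ and every $m\ge1$, all the $\widehat A_i$ and $\widehat\sigma_i^2$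 can be computed from the $m$ samples in at most $K\,m\,n\max(1,d_{avg}d^{\omega-2})$ steps. If moreover $n\ge2$ and the underlying graph is connected, then for all $\varepsilon,\delta\in(0,1)$ and $m=\big\lceil C\frac{n d_{avg}d}{\varepsilon^2}\log\frac n{\varepsilon\delta}\big\rceil$ at most $K\,\frac{n^2d_{avg}^2d^{\omega-1}}{\varepsilon^2}\log\frac{n}{\varepsilon\delta}$ steps suffice. -/

import Mathlib

open MeasureTheory ProbabilityTheory Matrix

namespace GBN

noncomputable section

/-- Total variation distance `sup_s |P(s) − Q(s)|` over measurable sets `s`. -/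
def dTV {E : Type*} [MeasurableSpace E] (P Q : Measure E) : ℝ :=
  ⨆ s : {s : Set E // MeasurableSet s}, |P.real s.1 - Q.real s.1|

/-! ### Gaussian Bayesian networks

A DAG on `n` nodes is given by its parent sets `π i`, with `j < i` for `j ∈ π i`. -/

/-- The underlying undirected graph of the DAG with parent sets `π`. -/
def underlyingGraph {n : ℕ} (π : Fin n → Finset (Fin n)) : SimpleGraph (Fin n) :=
  SimpleGraph.fromRel fun i j => j ∈ π i

/-- The average in-degree. -/
def avgInDegree {n : ℕ} (π : Fin n → Finset (Fin n)) : ℝ :=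
  (∑ i, ((π i).card : ℝ)) / n

/-- The matrix `B` with `B i j = (A i) j` for `j ∈ π i` and `0` otherwise. -/
def coeffMatrix {n : ℕ} (π : Fin n → Finset (Fin n)) (A : ∀ i, {j // j ∈ π i} → ℝ) :
    Matrix (Fin n) (Fin n) ℝ :=
  Matrix.of fun i j => if h : j ∈ π i then A i ⟨j, h⟩ else 0

/-- The Gaussian Bayesian network with coefficients `A` and noise standard deviations `σ`:
the pushforward of `⊗ᵢ N(0, σᵢ²)` under `η ↦ (I − B)⁻¹ η`. -/
def gaussianBN {n : ℕ} (π : Fin n → Finset (Fin n)) (A : ∀ i, {j // j ∈ π i} → ℝ)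
    (σ : Fin n → ℝ) : Measure (Fin n → ℝ) :=
  Measure.map (fun η => (1 - coeffMatrix π A)⁻¹ *ᵥ η)
    (Measure.pi fun i => gaussianReal 0 (Real.toNNReal (σ i ^ 2)))

/-! ### The estimator -/

/-- The sample median of `k` values: the mean of the two middle order statistics
(which coincide for odd `k`). -/
def sampleMedian {k : ℕ} (x : Fin k → ℝ) : ℝ :=
  let l := (Multiset.map x Finset.univ.val).sort (· ≤ ·)
  (l.getD ((k - 1) / 2) 0 + l.getD (k / 2) 0) / 2

/-- The `s`-th batch of `p` consecutive samples. -/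
def batch {E : Type*} {m₁ p : ℕ} (x : Fin m₁ → E) (s : Fin (m₁ / p)) (r : Fin p) : E :=
  x ⟨p * s.1 + r.1, by
    calc p * s.1 + r.1 < p * s.1 + p := Nat.add_lt_add_left r.2 _
      _ = p * (s.1 + 1) := by ring
      _ ≤ p * (m₁ / p) := Nat.mul_le_mul le_rfl s.2
      _ ≤ m₁ := Nat.mul_div_le m₁ p⟩

/-- The `p × p` matrix of a batch for the parent set `S`, `p = |S|`: row `r` holds the values
of the parents (listed in increasing order) in the `r`-th sample of the batch. -/
def batchMatrix {n : ℕ} (S : Finset (Fin n)) (x : Fin S.card → Fin n → ℝ) :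
    Matrix (Fin S.card) (Fin S.card) ℝ :=
  Matrix.of fun r c => x r (S.orderEmbOfFin rfl c)

/-- The solution `a` of the linear system `X a = (x r i)_r` of a batch for node `i` with parent
set `S` (by convention `0` if `X` is singular). -/
def batchSolution {n : ℕ} (S : Finset (Fin n)) (i : Fin n) (x : Fin S.card → Fin n → ℝ) :
    Fin S.card → ℝ :=
  (batchMatrix S x)⁻¹ *ᵥ fun r => x r i

/-- Coefficient recovery: coordinate-wise median of the batch solutions. -/
def coeffRecovery {n m₁ : ℕ} (π : Fin n → Finset (Fin n)) (x : Fin m₁ → Fin n → ℝ) :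
    ∀ i, {j // j ∈ π i} → ℝ := fun i j =>
  sampleMedian fun s : Fin (m₁ / (π i).card) =>
    batchSolution (π i) i (batch x s) (((π i).orderIsoOfFin rfl).symm j)

/-- Variance recovery: empirical mean of the squared residuals. -/
def varianceRecovery {n m₂ : ℕ} (π : Fin n → Finset (Fin n)) (A : ∀ i, {j // j ∈ π i} → ℝ)
    (y : Fin m₂ → Fin n → ℝ) (i : Fin n) : ℝ :=
  (∑ s, (y s i - ∑ j, A i j * y s j.1) ^ 2) / m₂

def firstHalf {E : Type*} {m : ℕ} (x : Fin m → E) (s : Fin (m / 2)) : E :=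
  x ⟨s.1, by omega⟩

def secondHalf {E : Type*} {m : ℕ} (x : Fin m → E) (s : Fin (m - m / 2)) : E :=
  x ⟨m / 2 + s.1, by omega⟩

/-- The estimated coefficients `Â` computed from `m` samples. -/
def coeffEst {n m : ℕ} (π : Fin n → Finset (Fin n)) (x : Fin m → Fin n → ℝ) :
    ∀ i, {j // j ∈ π i} → ℝ :=
  coeffRecovery π (firstHalf x)

/-- The estimated variances `σ̂²` computed from `m` samples. -/
def varEst {n m : ℕ} (π : Fin n → Finset (Fin n)) (x : Fin m → Fin n → ℝ) : Fin n → ℝ :=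
  varianceRecovery π (coeffEst π x) (secondHalf x)

/-- The learned network `Q`, with parameters `(Âᵢ, σ̂ᵢ)`. -/
def learnedBN {n m : ℕ} (π : Fin n → Finset (Fin n)) (x : Fin m → Fin n → ℝ) :
    Measure (Fin n → ℝ) :=
  gaussianBN π (coeffEst π x) fun i => √(varEst π x i)

/-- With probability at least `1 − δ` over `m` i.i.d. samples from `gaussianBN π A σ`, the
learned network is within total variation distance `ε` of it. -/
def LearnsWithin {n : ℕ} (π : Fin n → Finset (Fin n)) (A : ∀ i, {j // j ∈ π i} → ℝ)
    (σ : Fin n → ℝ) (m : ℕ) (ε δ : ℝ) : Prop :=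
  ENNReal.ofReal (1 - δ) ≤ (Measure.pi fun _ : Fin m => gaussianBN π A σ)
    {x | dTV (gaussianBN π A σ) (learnedBN π x) ≤ ε}

/-! ### Running time

Algebraic computation trees: real arithmetic and comparisons at unit cost. -/

inductive ArithOp
  | add | sub | mul | div

def ArithOp.apply : ArithOp → ℝ → ℝ → ℝ
  | .add, a, b => a + b
  | .sub, a, b => a - b
  | .mul, a, b => a * b
  | .div, a, b => a / b

/-- Algebraic computation trees with real values available in the registers `α` and outputs
indexed by `κ`. Every `const` and `op` node stores one new value, in the register `none` of
`Option α`; a `branch` node compares two registers. -/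
inductive ArithTree (κ : Type) : Type → Type 1
  | ret {α : Type} (out : κ → α) : ArithTree κ α
  | const {α : Type} (c : ℚ) (next : ArithTree κ (Option α)) : ArithTree κ α
  | op {α : Type} (o : ArithOp) (a b : α) (next : ArithTree κ (Option α)) : ArithTree κ α
  | branch {α : Type} (a b : α) (lt ge : ArithTree κ α) : ArithTree κ α

/-- The outputs of a tree on the register contents `v`. -/
def ArithTree.eval {κ : Type} : {α : Type} → ArithTree κ α → (α → ℝ) → κ → ℝ
  | _, .ret out, v => fun k => v (out k)
  | _, .const c next, v => next.eval fun r => r.elim (c : ℝ) v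
  | _, .op o a b next, v => next.eval fun r => r.elim (o.apply (v a) (v b)) v
  | _, .branch a b lt ge, v => if v a < v b then lt.eval v else ge.eval v

/-- The worst-case number of steps of a tree. -/
def ArithTree.cost {κ : Type} : {α : Type} → ArithTree κ α → ℕ
  | _, .ret _ => 0
  | _, .const _ next => next.cost + 1
  | _, .op _ _ _ next => next.cost + 1
  | _, .branch _ _ lt ge => max lt.cost ge.cost + 1

/-- `F` can be computed in at most `T` steps on every input. -/
def ComputableInTime {α κ : Type} (F : (α → ℝ) → κ → ℝ) (T : ℝ) : Prop :=
  ∃ t : ArithTree κ α, (t.cost : ℝ) ≤ T ∧ ∀ v, t.eval v = F v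

/-- `p × p` matrix multiplication, on the lists of entries. -/
def matMul (p : ℕ) (v : (Fin p × Fin p) ⊕ (Fin p × Fin p) → ℝ) : Fin p × Fin p → ℝ := fun e =>
  ((Matrix.of fun i j => v (.inl (i, j)) : Matrix (Fin p) (Fin p) ℝ) *
    (Matrix.of fun i j => v (.inr (i, j)) : Matrix (Fin p) (Fin p) ℝ)) e.1 e.2

/-- `ω ≥ 2` is an achievable exponent of matrix multiplication: `p × p` matrices can be
multiplied in `O(p^ω)` steps. -/
def IsMatMulExponent (ω : ℝ) : Prop :=
  2 ≤ ω ∧ ∃ K : ℝ, ∀ p : ℕ, 1 ≤ p → ComputableInTime (matMul p) (K * (p : ℝ) ^ ω)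

/-- The map from the `m · n` sample values to all the estimated coefficients and variances. -/
def estimator {n : ℕ} (π : Fin n → Finset (Fin n)) (m : ℕ) (v : Fin m × Fin n → ℝ) :
    ((i : Fin n) × {j // j ∈ π i}) ⊕ Fin n → ℝ :=
  Sum.elim (fun e => coeffEst π (fun s i => v (s, i)) e.1 e.2)
    (varEst π (fun s i => v (s, i)))

end

end GBN

/-!
When distinct parents of a node have disjoint sets of ancestors, as in a polytree, they are
independent. After dividing every variable by its standard deviation, a batch for a node with `p`
parents is therefore a `p × p` linear system with i.i.d. standard Gaussian coefficients and an
independent standard Gaussian right-hand side. By rotation invariance each coordinate of its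
solution is the ratio of two independent standard Gaussians, i.e. a Cauchy variable, so the median
over `k` batches is within `τ` of the true value except with probability `exp (-Ω(k τ²))`.
The normalized empirical residual variance is a chi-square mean. The Bretagnolle–Huber inequality
and the chain rule for the Kullback–Leibler divergence turn these node-wise errors into a bound on
the total variation distance.

For the running time, the normal equations reduce each linear system to the inversion of a positive
semidefinite matrix, which divides into Schur complements without pivoting, and medians are found
by linear-time selection.
-/

namespace GBN

/-! ### Product measures and Gaussian marginals -/

section PiMeasure

theorem update_preimage_univ_pi {ι : Type*} [DecidableEq ι] {E : ι → Type*} (k : ι)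
    (s : ∀ i, Set (E i)) :
    (fun z : (∀ i, E i) × E k => Function.update z.1 k z.2) ⁻¹' Set.univ.pi s =
      Set.univ.pi (Function.update s k Set.univ) ×ˢ s k := by
  ext ⟨x, y⟩
  simp only [Set.mem_preimage, Set.mem_univ_pi, Set.mem_prod]
  refine ⟨fun h => ⟨fun i => ?_, by simpa using h k⟩, fun ⟨hx, hy⟩ i => ?_⟩ <;>
    obtain rfl | hi := eq_or_ne i k
  · simp
  · simpa [hi] using h i
  · simpa using hy
  · simpa [hi] using hx i

variable {ι κ : Type*} [Fintype ι] [Fintype κ]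

theorem measurePreserving_pi_precomp {E : Type*} [MeasurableSpace E] (μ : ι → Measure E)
    [∀ i, IsProbabilityMeasure (μ i)] {f : κ → ι} (hf : f.Injective) :
    MeasurePreserving (fun x k => x (f k)) (Measure.pi μ) (Measure.pi fun k => μ (f k)) := by
  refine ⟨by fun_prop, ?_⟩
  have hindep := (iIndepFun_pi (μ := μ) (X := fun _ => id) fun _ => aemeasurable_id).precomp hf
  have hmap := hindep.map_fun_eq_pi_map fun k => (measurable_pi_apply (f k)).aemeasurable
  have heval (k : κ) : (Measure.pi μ).map (fun x => x (f k)) = μ (f k) :=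
    (measurePreserving_eval μ (f k)).map_eq
  simpa only [id_eq, heval] using hmap

theorem measurePreserving_pi_curry {E : Type*} [MeasurableSpace E] (μ : ι → κ → Measure E)
    [∀ i k, IsProbabilityMeasure (μ i k)] :
    MeasurePreserving (fun x i k => x (i, k)) (Measure.pi fun q : ι × κ => μ q.1 q.2)
      (Measure.pi fun i => Measure.pi (μ i)) :=
  ⟨by fun_prop, by simp_rw [← Measure.infinitePi_eq_pi]; exact Measure.infinitePi_map_curry μ⟩

theorem measurePreserving_pi_uncurry {E : Type*} [MeasurableSpace E] (μ : ι → κ → Measure E)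
    [∀ i k, IsProbabilityMeasure (μ i k)] :
    MeasurePreserving (fun x (q : ι × κ) => x q.1 q.2) (Measure.pi fun i => Measure.pi (μ i))
      (Measure.pi fun q : ι × κ => μ q.1 q.2) :=
  ⟨by fun_prop, by simp_rw [← Measure.infinitePi_eq_pi]; exact Measure.infinitePi_map_curry_symm μ⟩

theorem measurePreserving_pi_swap {E : Type*} [MeasurableSpace E] (μ : ι → κ → Measure E)
    [∀ i k, IsProbabilityMeasure (μ i k)] :
    MeasurePreserving (fun x k i => x i k) (Measure.pi fun i => Measure.pi (μ i))
      (Measure.pi fun k => Measure.pi fun i => μ i k) :=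
  (measurePreserving_pi_curry fun k i => μ i k).comp <|
    (measurePreserving_pi_precomp (fun q : ι × κ => μ q.1 q.2) Prod.swap_injective).comp <|
      measurePreserving_pi_uncurry μ

theorem measurePreserving_update_pi [DecidableEq ι] {E : ι → Type*} [∀ i, MeasurableSpace (E i)]
    (μ : ∀ i, Measure (E i)) [∀ i, IsProbabilityMeasure (μ i)] (k : ι) :
    MeasurePreserving (fun z : (∀ i, E i) × E k => Function.update z.1 k z.2)
      ((Measure.pi μ).prod (μ k)) (Measure.pi μ) := by
  refine ⟨measurable_update', (Measure.pi_eq fun s hs => ?_).symm⟩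
  have hoff : ∏ i ∈ Finset.univ.erase k, μ i (Function.update s k Set.univ i) =
      ∏ i ∈ Finset.univ.erase k, μ i (s i) :=
    Finset.prod_congr rfl fun i hi => by rw [Function.update_of_ne (Finset.ne_of_mem_erase hi)]
  rw [Measure.map_apply measurable_update' (MeasurableSet.univ_pi hs), update_preimage_univ_pi,
    Measure.prod_prod, Measure.pi_pi, ← Finset.mul_prod_erase _ _ (Finset.mem_univ k),
    ← Finset.mul_prod_erase (f := fun i => μ i (s i)) _ (Finset.mem_univ k), hoff,
    Function.update_self, measure_univ, one_mul, mul_comm]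

theorem ae_pi_of_ae_update [DecidableEq ι] {E : ι → Type*} [∀ i, MeasurableSpace (E i)]
    (μ : ∀ i, Measure (E i)) [∀ i, IsProbabilityMeasure (μ i)] (k : ι) {p : (∀ i, E i) → Prop}
    (hp : MeasurableSet {x | p x})
    (h : ∀ᵐ x ∂Measure.pi μ, ∀ᵐ y ∂μ k, p (Function.update x k y)) :
    ∀ᵐ x ∂Measure.pi μ, p x := by
  have hupdate := measurePreserving_update_pi μ k
  rw [← hupdate.map_eq, ae_map_iff hupdate.aemeasurable hp]
  exact (Measure.ae_prod_iff_ae_ae (hupdate.measurable hp)).2 h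

/-- Chernoff's bound, stated with `lintegral` so that no integrability has to be checked. -/
theorem measure_pi_sum_nonneg_le {E : Type*} [MeasurableSpace E] (μ : Measure E)
    [IsProbabilityMeasure μ] {f : E → ℝ} (hf : Measurable f) :
    (Measure.pi fun _ : ι => μ) {x | 0 ≤ ∑ i, f (x i)} ≤
      (∫⁻ x, ENNReal.ofReal (Real.exp (f x)) ∂μ) ^ Fintype.card ι := by
  have hexp : Measurable fun x => ENNReal.ofReal (Real.exp (f x)) := by fun_prop
  calc (Measure.pi fun _ : ι => μ) {x | 0 ≤ ∑ i, f (x i)}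
      ≤ (Measure.pi fun _ : ι => μ) {x | 1 ≤ ∏ i, ENNReal.ofReal (Real.exp (f (x i)))} := by
        refine measure_mono fun x (hx : 0 ≤ ∑ i, f (x i)) => ?_
        rw [Set.mem_ofPred_eq, ← ENNReal.ofReal_prod_of_nonneg fun _ _ => (Real.exp_pos _).le,
          ← Real.exp_sum]
        simpa using hx
    _ ≤ ∫⁻ x, ∏ i, ENNReal.ofReal (Real.exp (f (x i))) ∂(Measure.pi fun _ : ι => μ) := by
        have markov := mul_meas_ge_le_lintegral (μ := Measure.pi fun _ : ι => μ)
          (Finset.measurable_fun_prod Finset.univ fun i _ => hexp.comp (measurable_pi_apply i)) 1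
        simpa only [one_mul, Function.comp_apply] using markov
    _ = ∏ _i : ι, ∫⁻ x, ENNReal.ofReal (Real.exp (f x)) ∂μ := by
        rw [lintegral_prod_eq_prod_lintegral_of_indepFun Finset.univ
          (fun (i : ι) (x : ι → E) => ENNReal.ofReal (Real.exp (f (x i))))
          (iIndepFun_pi (μ := fun _ : ι => μ)
            (X := fun _ x => ENNReal.ofReal (Real.exp (f x))) fun _ => hexp.aemeasurable)
          fun i => hexp.comp (measurable_pi_apply i)]
        exact Finset.prod_congr rfl fun i _ =>
          (measurePreserving_eval (fun _ : ι => μ) i).lintegral_comp hexp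
    _ = _ := by rw [Finset.prod_const, Finset.card_univ]

end PiMeasure

section PiGaussian

variable {ι κ : Type*} [Fintype ι] (v : ι → NNReal)

theorem hasGaussianLaw_eval_pi_gaussianReal (a : ι) :
    HasGaussianLaw (fun x : ι → ℝ => x a) (Measure.pi fun a => gaussianReal 0 (v a)) :=
  ⟨by rw [show Measure.map _ _ = _ from (measurePreserving_eval _ a).map_eq]; infer_instance⟩

theorem iIndepFun_eval_pi_gaussianReal :
    iIndepFun (fun a (x : ι → ℝ) => x a) (Measure.pi fun a => gaussianReal 0 (v a)) :=
  iIndepFun_pi (X := fun _ => id) fun _ => aemeasurable_id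

theorem integral_mulVec_pi_gaussianReal (M : Matrix κ ι ℝ) (c : κ) :
    ∫ x, (M *ᵥ x) c ∂(Measure.pi fun a => gaussianReal 0 (v a)) = 0 := by
  have hmean (a : ι) : ∫ x : ι → ℝ, x a ∂(Measure.pi fun a => gaussianReal 0 (v a)) = 0 := by
    rw [integral_comp_eval (μ := fun a => gaussianReal 0 (v a)) (f := fun x => x) (by fun_prop),
      integral_id_gaussianReal]
  simp only [mulVec, dotProduct]
  rw [integral_finsetSum _ fun a _ =>
    ((hasGaussianLaw_eval_pi_gaussianReal v a).memLp_two.integrable one_le_two).const_mul _]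
  simp [integral_const_mul, hmean]

theorem covariance_eval_pi_gaussianReal [DecidableEq ι] (a b : ι) :
    cov[fun x : ι → ℝ => x a, fun x => x b; Measure.pi fun a => gaussianReal 0 (v a)] =
      if a = b then (v a : ℝ) else 0 := by
  split_ifs with h
  · subst h
    have hvar := variance_map (X := fun x : ℝ => x) (by fun_prop)
      (measurable_pi_apply a).aemeasurable (μ := Measure.pi fun a => gaussianReal 0 (v a))
    rw [show Measure.map _ _ = _ from (measurePreserving_eval _ a).map_eq,
      variance_fun_id_gaussianReal] at hvar
    rw [covariance_self (measurable_pi_apply a).aemeasurable, hvar]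
    rfl
  · exact ((iIndepFun_eval_pi_gaussianReal v).indepFun h).covariance_eq_zero
      (hasGaussianLaw_eval_pi_gaussianReal v a).memLp_two
      (hasGaussianLaw_eval_pi_gaussianReal v b).memLp_two

theorem covariance_mulVec_pi_gaussianReal (M : Matrix κ ι ℝ) (c c' : κ) :
    cov[fun x : ι → ℝ => (M *ᵥ x) c, fun x => (M *ᵥ x) c';
      Measure.pi fun a => gaussianReal 0 (v a)] = ∑ a, (v a : ℝ) * (M c a * M c' a) := by
  classical
  simp only [mulVec, dotProduct]
  rw [covariance_fun_sum_fun_sum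
    (fun a => (hasGaussianLaw_eval_pi_gaussianReal v a).memLp_two.const_mul _)
    (fun a => (hasGaussianLaw_eval_pi_gaussianReal v a).memLp_two.const_mul _)]
  refine Finset.sum_congr rfl fun a _ => ?_
  simp only [covariance_const_mul_left, covariance_const_mul_right,
    covariance_eval_pi_gaussianReal, mul_ite, mul_zero, Finset.sum_ite_eq, Finset.mem_univ, if_true]
  ring

theorem map_mulVec_pi_gaussianReal [Fintype κ] (M : Matrix κ ι ℝ)
    (hM : ∀ c c', c ≠ c' → ∑ a, (v a : ℝ) * (M c a * M c' a) = 0) :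
    (Measure.pi fun a => gaussianReal 0 (v a)).map (fun x => M *ᵥ x) =
      Measure.pi fun c => gaussianReal 0 (∑ a, (v a : ℝ) * M c a ^ 2).toNNReal := by
  classical
  set P := Measure.pi fun a => gaussianReal 0 (v a)
  have hlaw : HasGaussianLaw (fun x : ι → ℝ => M *ᵥ x) P :=
    (iIndepFun.hasGaussianLaw (hasGaussianLaw_eval_pi_gaussianReal v)
      (iIndepFun_eval_pi_gaussianReal v)).map_fun
        (LinearMap.toContinuousLinearMap (Matrix.toLin' M))
  have hindep : iIndepFun (fun c (x : ι → ℝ) => (M *ᵥ x) c) P :=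
    HasGaussianLaw.iIndepFun_of_covariance_eq_zero hlaw fun c c' h => by
      rw [covariance_mulVec_pi_gaussianReal, hM c c' h]
  have hmarginal (c : κ) : P.map (fun x => (M *ᵥ x) c) =
      gaussianReal 0 (∑ a, (v a : ℝ) * M c a ^ 2).toNNReal := by
    rw [HasGaussianLaw.map_eq_gaussianReal (hlaw.eval c), ← covariance_self (by fun_prop),
      covariance_mulVec_pi_gaussianReal, integral_mulVec_pi_gaussianReal]
    simp only [sq]
  rw [show P.map (fun x => M *ᵥ x) = _ from hindep.map_fun_eq_pi_map fun c => by fun_prop]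
  simp only [hmarginal]

theorem map_dotProduct_pi_gaussianReal (w : ι → ℝ) :
    (Measure.pi fun a => gaussianReal 0 (v a)).map (fun x => w ⬝ᵥ x) =
      gaussianReal 0 (∑ a, (v a : ℝ) * w a ^ 2).toNNReal := by
  have hmap := congrArg (Measure.map fun y : Unit → ℝ => y ())
    (map_mulVec_pi_gaussianReal v (Matrix.of fun _ : Unit => w) (by simp))
  rwa [Measure.map_map (by fun_prop) (by fun_prop), (measurePreserving_eval _ ()).map_eq] at hmap

end PiGaussian

/-! ### Anticoncentration for Gaussian linear systems -/

section StandardGaussian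

/-- The constant `φ(1) φ(2)`, with `φ` the standard Gaussian density: a ratio of two independent
standard Gaussians lies in `[-τ, τ]` with probability at least `2 φ(1) φ(2) τ` for `τ ≤ 1`. -/
noncomputable def anticoncConst : ℝ := gaussianPDFReal 0 1 1 * gaussianPDFReal 0 1 2

theorem anticoncConst_pos : 0 < anticoncConst :=
  mul_pos (gaussianPDFReal_pos _ _ _ one_ne_zero) (gaussianPDFReal_pos _ _ _ one_ne_zero)

theorem mul_gaussianPDFReal_le_gaussianReal_Icc {a b R : ℝ} (ha : -R ≤ a) (hb : b ≤ R) :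
    ENNReal.ofReal ((b - a) * gaussianPDFReal 0 1 R) ≤ gaussianReal 0 1 (Set.Icc a b) := by
  rw [gaussianReal_apply 0 one_ne_zero]
  calc ENNReal.ofReal ((b - a) * gaussianPDFReal 0 1 R)
      = ∫⁻ _ in Set.Icc a b, ENNReal.ofReal (gaussianPDFReal 0 1 R) := by
        rw [setLIntegral_const, Real.volume_Icc, mul_comm,
          ENNReal.ofReal_mul (gaussianPDFReal_nonneg _ _ _)]
    _ ≤ ∫⁻ x in Set.Icc a b, gaussianPDF 0 1 x := by
        refine setLIntegral_mono (by fun_prop) fun x hx => ENNReal.ofReal_le_ofReal ?_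
        have hxR : |x - 0| ≤ |R - 0| := by
          simp only [sub_zero]
          exact (abs_le.2 ⟨by linarith [hx.1], by linarith [hx.2]⟩).trans (le_abs_self R)
        simp only [gaussianPDFReal]
        gcongr ?_ * Real.exp (-?_ / _)
        exact sq_le_sq.2 hxR

variable {ι : Type*} [Fintype ι]

/-- The standard Gaussian measure on `ℝ^ι`. -/
noncomputable abbrev stdPi (ι : Type*) [Fintype ι] : Measure (ι → ℝ) :=
  Measure.pi fun _ => gaussianReal 0 1

theorem measurePreserving_neg_stdPi : MeasurePreserving (fun x => -x) (stdPi ι) (stdPi ι) :=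
  measurePreserving_pi _ _ fun _ =>
    ⟨measurable_neg, gaussianReal_map_neg.trans (by rw [neg_zero])⟩

theorem dotProduct_self_pos {w : ι → ℝ} (hw : w ≠ 0) : 0 < w ⬝ᵥ w := by
  simpa using dotProduct_star_self_pos_iff.2 hw

theorem measurePreserving_dotProduct_stdPi {w : ι → ℝ} (hw : w ≠ 0) :
    MeasurePreserving (fun x => w ⬝ᵥ x / √(w ⬝ᵥ w)) (stdPi ι) (gaussianReal 0 1) := by
  have hpos := dotProduct_self_pos hw
  have hnorm : ∑ a : ι, ((1 : NNReal) : ℝ) * ((√(w ⬝ᵥ w))⁻¹ • w) a ^ 2 = 1 := by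
    have hsum : ∑ i, w i ^ 2 = w ⬝ᵥ w := by simp [dotProduct, sq]
    simp only [NNReal.coe_one, one_mul, Pi.smul_apply, smul_eq_mul, mul_pow, ← Finset.mul_sum,
      inv_pow, Real.sq_sqrt hpos.le, hsum, inv_mul_cancel₀ hpos.ne']
  have hmap := map_dotProduct_pi_gaussianReal (fun _ : ι => 1) ((√(w ⬝ᵥ w))⁻¹ • w)
  rw [hnorm, Real.toNNReal_one] at hmap
  refine ⟨by fun_prop, ?_⟩
  simpa only [smul_dotProduct, smul_eq_mul, ← div_eq_inv_mul] using hmap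

theorem ae_dotProduct_ne_zero {w : ι → ℝ} (hw : w ≠ 0) : ∀ᵐ x ∂stdPi ι, w ⬝ᵥ x ≠ 0 := by
  have := nullSingletonClass_gaussianReal (μ := 0) (v := 1) one_ne_zero
  have hne : ∀ᵐ y ∂gaussianReal 0 1, y ≠ 0 := by simp [ae_iff]
  filter_upwards [(measurePreserving_dotProduct_stdPi hw).quasiMeasurePreserving.ae hne]
    with x hx hzero
  exact hx (by rw [hzero, zero_div])

theorem anticoncConst_le_measure_abs_dotProduct_le {w : ι → ℝ} (hw : w ≠ 0) {τ : ℝ}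
    (h0 : 0 < τ) (h1 : τ ≤ 1) :
    ENNReal.ofReal (2 * anticoncConst * τ) ≤
      ((stdPi ι).prod (stdPi ι)) {z | |w ⬝ᵥ z.2| ≤ τ * |w ⬝ᵥ z.1|} := by
  have hpos := Real.sqrt_pos.2 (dotProduct_self_pos hw)
  have hlaw := measurePreserving_dotProduct_stdPi hw
  have hlarge : ENNReal.ofReal ((2 - 1) * gaussianPDFReal 0 1 2) ≤
      stdPi ι ((fun x => w ⬝ᵥ x / √(w ⬝ᵥ w)) ⁻¹' Set.Icc 1 2) := by
    rw [hlaw.measure_preimage measurableSet_Icc.nullMeasurableSet]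
    exact mul_gaussianPDFReal_le_gaussianReal_Icc (by norm_num) le_rfl
  have hsmall : ENNReal.ofReal ((τ - -τ) * gaussianPDFReal 0 1 1) ≤
      stdPi ι ((fun x => w ⬝ᵥ x / √(w ⬝ᵥ w)) ⁻¹' Set.Icc (-τ) τ) := by
    rw [hlaw.measure_preimage measurableSet_Icc.nullMeasurableSet]
    exact mul_gaussianPDFReal_le_gaussianReal_Icc (by linarith) h1
  calc _ = ENNReal.ofReal ((2 - 1) * gaussianPDFReal 0 1 2) *
        ENNReal.ofReal ((τ - -τ) * gaussianPDFReal 0 1 1) := by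
        rw [← ENNReal.ofReal_mul (mul_nonneg (by norm_num) (gaussianPDFReal_nonneg _ _ _)),
          anticoncConst]
        congr 1; ring
    _ ≤ _ := mul_le_mul' hlarge hsmall
    _ = ((stdPi ι).prod (stdPi ι)) _ := (Measure.prod_prod _ _).symm
    _ ≤ _ := by
        refine measure_mono ?_
        rintro ⟨b, a⟩ ⟨⟨hb, -⟩, ha⟩
        simp only [Set.mem_ofPred_eq, Set.mem_preimage, Set.mem_Icc] at ha hb ⊢
        rw [← abs_le, abs_div, abs_of_pos hpos, div_le_iff₀ hpos] at ha
        rw [le_div_iff₀ hpos, one_mul] at hb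
        exact ha.trans (mul_le_mul_of_nonneg_left (hb.trans (le_abs_self _)) h0.le)

end StandardGaussian

section GaussianSystem

variable {ι : Type*} [Fintype ι] [DecidableEq ι]

theorem det_updateCol_eq_dotProduct (M : Matrix ι ι ℝ) (c : ι) (b : ι → ℝ) :
    (M.updateCol c b).det = M.adjugate c ⬝ᵥ b := by
  rw [← cramer_apply, cramer_eq_adjugate_mulVec]; rfl

theorem adjugate_row_ne_zero {M : Matrix ι ι ℝ} (hM : M.det ≠ 0) (c : ι) : M.adjugate c ≠ 0 := by
  intro h
  rw [← updateCol_eq_self M c, det_updateCol_eq_dotProduct, h, zero_dotProduct] at hM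
  exact hM rfl

theorem inv_mulVec_apply_eq_det_div_det (M : Matrix ι ι ℝ) (b : ι → ℝ) (c : ι) :
    (M⁻¹ *ᵥ b) c = (M.updateCol c b).det / M.det := by
  rw [inv_def, Ring.inverse_eq_inv', smul_mulVec, ← cramer_eq_adjugate_mulVec, Pi.smul_apply,
    cramer_apply, smul_eq_mul, inv_mul_eq_div]

theorem measurable_inv_mulVec {α : Type*} [TopologicalSpace α] [MeasurableSpace α]
    [OpensMeasurableSpace α] {M : α → Matrix ι ι ℝ} {b : α → ι → ℝ} (hM : Continuous M)
    (hb : Continuous b) (c : ι) : Measurable fun x => ((M x)⁻¹ *ᵥ b x) c := by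
  simp only [inv_mulVec_apply_eq_det_div_det]
  exact (hM.matrix_updateCol c hb).matrix_det.measurable.div hM.matrix_det.measurable

/-- The square matrix with columns `z (some c)`; together with the right-hand side `z none` it
forms a linear system. -/
def colMatrix (z : Option ι → ι → ℝ) : Matrix ι ι ℝ := Matrix.of fun r c => z (some c) r

/-- A coordinate of the solution of the linear system `z`. -/
noncomputable def systemSolution (c : ι) (z : Option ι → ι → ℝ) : ℝ :=
  ((colMatrix z)⁻¹ *ᵥ z none) c

/-- The law of a linear system whose columns and right-hand side are independent standard
Gaussian vectors. -/
noncomputable abbrev stdSystem (ι : Type*) [Fintype ι] : Measure (Option ι → ι → ℝ) :=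
  Measure.pi fun _ => stdPi ι

theorem continuous_colMatrix {ι : Type*} : Continuous (colMatrix (ι := ι)) :=
  continuous_matrix fun r c => by simp only [colMatrix, of_apply]; fun_prop

theorem measurable_systemSolution (c : ι) : Measurable (systemSolution c) :=
  measurable_inv_mulVec continuous_colMatrix (continuous_apply none) c

theorem colMatrix_update_some {ι : Type*} [DecidableEq ι] (z : Option ι → ι → ℝ) (c : ι)
    (b : ι → ℝ) : colMatrix (Function.update z (some c) b) = (colMatrix z).updateCol c b := by
  ext r k
  obtain rfl | h := eq_or_ne k c
  · simp [colMatrix]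
  · simp [colMatrix, h]

theorem colMatrix_update_none {ι : Type*} [DecidableEq ι] (z : Option ι → ι → ℝ) (b : ι → ℝ) :
    colMatrix (Function.update z none b) = colMatrix z := by
  ext r k
  simp [colMatrix]

/-- The columns of the identity matrix are replaced one at a time by Gaussian columns. -/
theorem ae_det_colMatrix_ne_zero : ∀ᵐ z ∂stdSystem ι, (colMatrix z).det ≠ 0 := by
  let e : Option ι → ι → ℝ := fun o => o.elim 0 fun c => Pi.single c 1
  suffices H : ∀ s : Finset (Option ι), ∀ᵐ z ∂stdSystem ι, (colMatrix (s.piecewise z e)).det ≠ 0 by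
    simpa only [Finset.piecewise_univ] using H Finset.univ
  intro s
  induction s using Finset.induction_on with
  | empty =>
    have he : colMatrix e = 1 := by
      ext r c; simp [colMatrix, e, Matrix.one_apply, Pi.single_apply]
    simp [he]
  | insert o s ho ih =>
    have hmeas : MeasurableSet {z | (colMatrix ((insert o s).piecewise z e)).det ≠ 0} := by
      have hcont : Continuous fun z => (insert o s).piecewise z e := continuous_pi fun i => by
        by_cases hi : i ∈ insert o s <;> simp only [Finset.piecewise, hi, if_true, if_false] <;>
          fun_prop
      exact (continuous_colMatrix.comp hcont).matrix_det.measurable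
        (measurableSet_singleton (0 : ℝ)).compl
    refine ae_pi_of_ae_update _ o hmeas ?_
    filter_upwards [ih] with z hz
    have hinsert (b : ι → ℝ) : (insert o s).piecewise (Function.update z o b) e =
        Function.update (s.piecewise z e) o b := by
      rw [Finset.piecewise_insert, Function.update_self]
      ext i : 1
      obtain rfl | hi := eq_or_ne i o
      · simp
      · by_cases his : i ∈ s <;> simp [hi, his]
    cases o with
    | none =>
      refine Filter.Eventually.of_forall fun b => ?_
      rwa [hinsert, colMatrix_update_none]
    | some c =>
      filter_upwards [ae_dotProduct_ne_zero (adjugate_row_ne_zero hz c)] with b hb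
      rwa [hinsert, colMatrix_update_some, det_updateCol_eq_dotProduct]

theorem measurePreserving_resample_column (c : ι) :
    MeasurePreserving
      (fun z : (Option ι → ι → ℝ) × (ι → ℝ) × (ι → ℝ) =>
        Function.update (Function.update z.1 (some c) z.2.1) none z.2.2)
      ((stdSystem ι).prod ((stdPi ι).prod (stdPi ι))) (stdSystem ι) :=
  (measurePreserving_update_pi (fun _ : Option ι => stdPi ι) none).comp <|
    ((measurePreserving_update_pi (fun _ : Option ι => stdPi ι) (some c)).prod
      (MeasurePreserving.id (stdPi ι))).comp
        (measurePreserving_prodAssoc (stdSystem ι) (stdPi ι) (stdPi ι)).symm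

/-- By Cramer's rule the solution is `⟨w, a⟩ / ⟨w, b⟩`, where `a` is the right-hand side, `b` the
`c`-th column and `w`, a row of the adjugate, depends on the other columns only. -/
theorem anticoncConst_le_measure_abs_systemSolution_le (c : ι) {τ : ℝ} (h0 : 0 < τ) (h1 : τ ≤ 1) :
    ENNReal.ofReal (2 * anticoncConst * τ) ≤ stdSystem ι {z | |systemSolution c z| ≤ τ} := by
  have hresample := measurePreserving_resample_column c
  have hS : MeasurableSet {z : Option ι → ι → ℝ | |systemSolution c z| ≤ τ} :=
    measurableSet_le (measurable_systemSolution c).abs measurable_const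
  rw [← hresample.measure_preimage hS.nullMeasurableSet,
    Measure.prod_apply (hresample.measurable hS)]
  calc ENNReal.ofReal (2 * anticoncConst * τ)
      = ∫⁻ _, ENNReal.ofReal (2 * anticoncConst * τ) ∂(stdSystem ι) := by simp
    _ ≤ _ := by
        refine lintegral_mono_ae ?_
        filter_upwards [ae_det_colMatrix_ne_zero (ι := ι)] with z hz
        refine (anticoncConst_le_measure_abs_dotProduct_le (adjugate_row_ne_zero hz c) h0 h1).trans
          (measure_mono ?_)
        rintro ⟨b, a⟩ hab
        simp only [Set.mem_ofPred_eq, Set.mem_preimage, ← det_updateCol_eq_dotProduct] at hab ⊢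
        rw [systemSolution, inv_mulVec_apply_eq_det_div_det, colMatrix_update_none,
          colMatrix_update_some, Function.update_self, updateCol_idem, abs_div]
        exact div_le_of_le_mul₀ (abs_nonneg _) h0.le hab

theorem measurePreserving_neg_none_stdSystem :
    MeasurePreserving (fun z => Function.update z none (-z none)) (stdSystem ι) (stdSystem ι) := by
  let f : Option ι → (ι → ℝ) → ι → ℝ := fun o => o.elim (fun x => -x) fun _ => id
  have hf : (fun (z : Option ι → ι → ℝ) o => f o (z o)) =
      fun z => Function.update z none (-z none) := by
    ext z o : 2
    cases o <;> simp [f]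
  rw [← hf]
  refine measurePreserving_pi _ _ fun o => ?_
  cases o with
  | none => exact measurePreserving_neg_stdPi
  | some c => exact MeasurePreserving.id _

theorem systemSolution_neg_none (c : ι) (z : Option ι → ι → ℝ) :
    systemSolution c (Function.update z none (-z none)) = -systemSolution c z := by
  simp [systemSolution, colMatrix_update_none, mulVec_neg]

end GaussianSystem

section SymmetricTail

theorem measure_tail_le_of_symmetric {Ω : Type*} [MeasurableSpace Ω] {μ : Measure Ω}
    [IsProbabilityMeasure μ] {X : Ω → ℝ} (hX : Measurable X)
    (hsymm : ∀ t, μ.real {x | X x < -t} = μ.real {x | t < X x}) {t q : ℝ} (ht : 0 ≤ t)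
    (hq : ENNReal.ofReal (2 * q) ≤ μ {x | |X x| ≤ t}) :
    μ {x | t < X x} ≤ ENNReal.ofReal (1 / 2 - q) ∧
      μ {x | X x < -t} ≤ ENNReal.ofReal (1 / 2 - q) := by
  have hcover : μ.real {x | t < X x} + μ.real {x | X x < -t} + μ.real {x | |X x| ≤ t} ≤ 1 := by
    rw [← measureReal_union _ (measurableSet_lt hX measurable_const),
      ← measureReal_union _ (measurableSet_le hX.abs measurable_const)]
    · exact measureReal_le_one
    · rw [Set.disjoint_left]
      rintro x (hx | hx) hx' <;> simp only [Set.mem_ofPred_eq, abs_le] at hx hx' <;>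
        linarith [hx'.1, hx'.2]
    · rw [Set.disjoint_left]
      intro x hx hx'
      simp only [Set.mem_ofPred_eq] at hx hx'
      linarith
  have hcentral : 2 * q ≤ μ.real {x | |X x| ≤ t} :=
    (ENNReal.ofReal_le_iff_le_toReal (measure_ne_top _ _)).1 hq
  have htail : μ.real {x | t < X x} ≤ 1 / 2 - q := by linarith [hsymm t]
  rw [← ofReal_measureReal (s := {x | t < X x}), ← ofReal_measureReal (s := {x | X x < -t})]
  exact ⟨ENNReal.ofReal_le_ofReal htail, ENNReal.ofReal_le_ofReal ((hsymm t).le.trans htail)⟩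

theorem measure_systemSolution_tail_le {ι : Type*} [Fintype ι] [DecidableEq ι] (c : ι) {τ : ℝ}
    (h0 : 0 < τ) (h1 : τ ≤ 1) :
    stdSystem ι {z | τ < systemSolution c z} ≤ ENNReal.ofReal (1 / 2 - anticoncConst * τ) ∧
      stdSystem ι {z | systemSolution c z < -τ} ≤ ENNReal.ofReal (1 / 2 - anticoncConst * τ) := by
  have hmeas := measurable_systemSolution c
  refine measure_tail_le_of_symmetric hmeas (fun t => ?_) h0.le ?_
  · rw [← measurePreserving_neg_none_stdSystem.measureReal_preimage
      (measurableSet_lt hmeas measurable_const).nullMeasurableSet]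
    simp only [Set.preimage_ofPred_eq, systemSolution_neg_none, neg_lt_neg_iff]
  · rw [← mul_assoc]
    exact anticoncConst_le_measure_abs_systemSolution_le c h0 h1

end SymmetricTail

/-! ### Medians and chi-square tails -/

section Median

theorem getD_iff_lt_countP (p : ℝ → Prop) [DecidablePred p] (hp : ∀ a b, a ≤ b → p b → p a) :
    ∀ (l : List ℝ), l.Pairwise (· ≤ ·) → ∀ r, r < l.length →
      (p (l.getD r 0) ↔ r < l.countP p)
  | [], _, r, hr => absurd hr (by simp)
  | a :: l, hl, r, hr => by
    rw [List.pairwise_cons] at hl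
    have countP_eq_zero : ¬ p a → l.countP p = 0 := fun ha => by
      rw [List.countP_eq_zero]
      intro b hb
      simpa using fun h => ha (hp a b (hl.1 b hb) h)
    cases r with
    | zero => by_cases ha : p a <;> simp [ha, countP_eq_zero]
    | succ r =>
      have ih := getD_iff_lt_countP p hp l hl.2 r (by simpa using hr)
      simp only [List.getD_cons_succ, ih]
      by_cases ha : p a <;> simp [ha, countP_eq_zero]

/-- The `r`-th order statistic of a multiset of reals, counting from `0`; it is `0` when `r` is
at least the cardinality. -/
noncomputable def ordStat (s : Multiset ℝ) (r : ℕ) : ℝ := (s.sort (· ≤ ·)).getD r 0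

theorem ordStat_iff (p : ℝ → Prop) [DecidablePred p] (hp : ∀ a b, a ≤ b → p b → p a)
    {s : Multiset ℝ} {r : ℕ} (hr : r < s.card) : p (ordStat s r) ↔ r < s.countP p := by
  rw [ordStat, getD_iff_lt_countP p hp (s.sort (· ≤ ·)) (s.pairwise_sort _) r (by simpa using hr)]
  conv_rhs => rw [← Multiset.sort_eq s (· ≤ ·), Multiset.coe_countP]

theorem ordStat_le_iff {s : Multiset ℝ} {r : ℕ} (hr : r < s.card) (t : ℝ) :
    ordStat s r ≤ t ↔ r < s.countP (· ≤ t) :=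
  ordStat_iff (· ≤ t) (fun _ _ h h' => h.trans h') hr

theorem ordStat_lt_iff {s : Multiset ℝ} {r : ℕ} (hr : r < s.card) (t : ℝ) :
    ordStat s r < t ↔ r < s.countP (· < t) :=
  ordStat_iff (· < t) (fun _ _ h h' => h.trans_lt h') hr

theorem ordStat_mono {s : Multiset ℝ} {r q : ℕ} (hrq : r ≤ q) (hq : q < s.card) :
    ordStat s r ≤ ordStat s q :=
  (ordStat_le_iff (hrq.trans_lt hq) _).2 (hrq.trans_lt ((ordStat_le_iff hq _).1 le_rfl))

variable {k : ℕ}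

theorem sampleMedian_eq (x : Fin k → ℝ) :
    sampleMedian x = (ordStat (Finset.univ.val.map x) ((k - 1) / 2) +
      ordStat (Finset.univ.val.map x) (k / 2)) / 2 := rfl

theorem countP_map_univ (x : Fin k → ℝ) (p : ℝ → Prop) [DecidablePred p] :
    (Finset.univ.val.map x).countP p = (Finset.univ.filter fun s => p (x s)).card := by
  rw [Multiset.countP_map]; rfl

theorem ordStat_map_univ_mid_le (hk : 0 < k) (x : Fin k → ℝ) :
    ordStat (Finset.univ.val.map x) ((k - 1) / 2) ≤ ordStat (Finset.univ.val.map x) (k / 2) :=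
  ordStat_mono (by lia) (by simp; lia)

theorem le_two_mul_card_of_lt_sampleMedian (hk : 0 < k) {x : Fin k → ℝ} {a : ℝ}
    (h : a < sampleMedian x) : k ≤ 2 * (Finset.univ.filter fun s => a < x s).card := by
  have upper : ¬ ordStat (Finset.univ.val.map x) (k / 2) ≤ a := by
    linarith [sampleMedian_eq x, ordStat_map_univ_mid_le hk x]
  rw [ordStat_le_iff (by simp; lia), countP_map_univ] at upper
  have split := Finset.card_filter_add_card_filter_not (s := Finset.univ) (fun s => x s ≤ a)
  simp only [not_le, Finset.card_univ, Fintype.card_fin] at split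
  lia

theorem le_two_mul_card_of_sampleMedian_lt (hk : 0 < k) {x : Fin k → ℝ} {a : ℝ}
    (h : sampleMedian x < a) : k ≤ 2 * (Finset.univ.filter fun s => x s < a).card := by
  have lower : ordStat (Finset.univ.val.map x) ((k - 1) / 2) < a := by
    linarith [sampleMedian_eq x, ordStat_map_univ_mid_le hk x]
  rw [ordStat_lt_iff (by simp; lia), countP_map_univ] at lower
  lia

theorem measurable_ordStat_map_univ {r : ℕ} (hr : r < k) :
    Measurable fun x : Fin k → ℝ => ordStat (Finset.univ.val.map x) r := by
  refine measurable_of_Iic fun t => ?_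
  have preimage_eq : (fun x : Fin k → ℝ => ordStat (Finset.univ.val.map x) r) ⁻¹' Set.Iic t =
      {x | r < ∑ s, if x s ≤ t then 1 else 0} := by
    ext x
    simp only [Set.mem_preimage, Set.mem_Iic, Set.mem_ofPred_eq]
    rw [ordStat_le_iff (by simpa using hr), countP_map_univ, Finset.card_filter]
  rw [preimage_eq]
  refine measurableSet_lt measurable_const (Finset.measurable_fun_sum _ fun s _ => ?_)
  exact Measurable.ite (measurableSet_le (measurable_pi_apply s) measurable_const)
    measurable_const measurable_const

theorem measurable_sampleMedian : Measurable (sampleMedian (k := k)) := by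
  rcases Nat.eq_zero_or_pos k with rfl | hk
  · exact measurable_const' fun x y => congrArg _ (Subsingleton.elim x y)
  · exact ((measurable_ordStat_map_univ (by lia)).add
      (measurable_ordStat_map_univ (by lia))).div_const 2

end Median

section MajorityVote

theorem cosh_sub_mul_sinh_le_exp_neg_sq {γ : ℝ} (h0 : 0 ≤ γ) (h1 : γ ≤ 1 / 2) :
    Real.cosh (2 * γ) - 2 * γ * Real.sinh (2 * γ) ≤ Real.exp (-γ ^ 2) := by
  have sq_le : γ ^ 2 ≤ 1 / 4 := by nlinarith
  have cosh_le : Real.cosh (2 * γ) ≤ Real.exp (2 * γ ^ 2) :=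
    (Real.cosh_le_exp_half_sq _).trans_eq (by congr 1; ring)
  have exp_le : Real.exp (2 * γ ^ 2) ≤ 1 + 2 * γ ^ 2 + (2 * γ ^ 2) ^ 2 := by
    have := Real.abs_exp_sub_one_sub_id_le (x := 2 * γ ^ 2)
      (by rw [abs_of_nonneg (by positivity)]; linarith)
    linarith [(abs_le.1 this).2]
  have le_sinh : 2 * γ * (2 * γ) ≤ 2 * γ * Real.sinh (2 * γ) :=
    mul_le_mul_of_nonneg_left (Real.self_le_sinh_iff.2 (by positivity)) (by positivity)
  nlinarith [Real.add_one_le_exp (-γ ^ 2), sq_nonneg γ]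

theorem sum_ite_mem_eq {E : Type*} {S : Set E} [DecidablePred (· ∈ S)] {k : ℕ}
    (x : Fin k → E) (t : ℝ) :
    ∑ s, (if x s ∈ S then t else -t) =
      t * (2 * (Finset.univ.filter fun s => x s ∈ S).card - k) := by
  have summand_eq : ∀ s, (if x s ∈ S then t else -t) =
      t * (2 * (if x s ∈ S then 1 else 0) - 1) := by
    intro s; split_ifs <;> ring
  simp only [summand_eq, ← Finset.mul_sum, Finset.sum_sub_distrib, Finset.card_filter]
  push_cast
  simp

variable {E : Type*} [MeasurableSpace E] (μ : Measure E) [IsProbabilityMeasure μ] {S : Set E}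
  [DecidablePred (· ∈ S)] {γ : ℝ}

theorem lintegral_exp_ite_mem_le (hS : MeasurableSet S) (h1 : γ ≤ 1 / 2)
    (hμ : μ S ≤ ENNReal.ofReal (1 / 2 - γ)) {t : ℝ} (ht : 0 ≤ t) :
    ∫⁻ y, ENNReal.ofReal (Real.exp (if y ∈ S then t else -t)) ∂μ ≤
      ENNReal.ofReal (Real.cosh t - 2 * γ * Real.sinh t) := by
  have two_mul_sinh_nonneg : 0 ≤ 2 * Real.sinh t := by simpa using ht
  have eq_indicator_add : ∀ y, ENNReal.ofReal (Real.exp (if y ∈ S then t else -t)) =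
      S.indicator (fun _ => ENNReal.ofReal (2 * Real.sinh t)) y +
        ENNReal.ofReal (Real.exp (-t)) := by
    intro y
    by_cases hy : y ∈ S
    · simp only [hy, if_true, Set.indicator_of_mem]
      rw [← ENNReal.ofReal_add two_mul_sinh_nonneg (Real.exp_pos _).le, Real.sinh_eq]
      congr 1; ring
    · simp only [hy, if_false, not_false_eq_true, Set.indicator_of_notMem, zero_add]
  simp only [eq_indicator_add]
  rw [lintegral_add_right _ measurable_const, lintegral_indicator_const hS, lintegral_const,
    measure_univ, mul_one]
  calc _ ≤ ENNReal.ofReal (2 * Real.sinh t) * ENNReal.ofReal (1 / 2 - γ) +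
        ENNReal.ofReal (Real.exp (-t)) := by gcongr
    _ = ENNReal.ofReal (2 * Real.sinh t * (1 / 2 - γ) + Real.exp (-t)) := by
      rw [← ENNReal.ofReal_mul two_mul_sinh_nonneg, ← ENNReal.ofReal_add _ (Real.exp_pos _).le]
      exact mul_nonneg two_mul_sinh_nonneg (by linarith)
    _ = _ := by rw [← Real.cosh_sub_sinh]; congr 1; ring

theorem measure_pi_le_two_mul_card_le_exp (k : ℕ) (hS : MeasurableSet S)
    (h0 : 0 ≤ γ) (h1 : γ ≤ 1 / 2) (hμ : μ S ≤ ENNReal.ofReal (1 / 2 - γ)) :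
    (Measure.pi fun _ : Fin k => μ)
        {x | k ≤ 2 * (Finset.univ.filter fun s => x s ∈ S).card} ≤
      ENNReal.ofReal (Real.exp (-(k * γ ^ 2))) := by
  calc (Measure.pi fun _ : Fin k => μ) {x | k ≤ 2 * (Finset.univ.filter fun s => x s ∈ S).card}
      ≤ (Measure.pi fun _ : Fin k => μ) {x | 0 ≤ ∑ s, if x s ∈ S then 2 * γ else -(2 * γ)} := by
        refine measure_mono fun x hx => ?_
        rw [Set.mem_ofPred_eq, sum_ite_mem_eq]
        have : (k : ℝ) ≤ 2 * (Finset.univ.filter fun s => x s ∈ S).card := by exact_mod_cast hx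
        exact mul_nonneg (by positivity) (by linarith)
    _ ≤ (∫⁻ y, ENNReal.ofReal (Real.exp (if y ∈ S then 2 * γ else -(2 * γ))) ∂μ) ^ k := by
        simpa using measure_pi_sum_nonneg_le (ι := Fin k) μ
          (f := fun y => if y ∈ S then 2 * γ else -(2 * γ))
          (Measurable.ite hS measurable_const measurable_const)
    _ ≤ ENNReal.ofReal (Real.exp (-γ ^ 2)) ^ k := by
        gcongr
        exact (lintegral_exp_ite_mem_le μ hS h1 hμ (by positivity)).trans
          (ENNReal.ofReal_le_ofReal (cosh_sub_mul_sinh_le_exp_neg_sq h0 h1))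
    _ = _ := by
        rw [← ENNReal.ofReal_pow (Real.exp_pos _).le, ← Real.exp_nat_mul]
        congr 2; ring

end MajorityVote

section ChiSquare

theorem inv_one_sub_le_exp {x : ℝ} (h0 : -(1 / 2) ≤ x) (h1 : x ≤ 1 / 2) :
    (1 - x)⁻¹ ≤ Real.exp (x + x ^ 2) := by
  rw [inv_le_iff_one_le_mul₀ (by linarith)]
  rcases le_total 0 x with h | h
  · have quadratic_le := Real.quadratic_le_exp_of_nonneg (x := x + x ^ 2) (by positivity)
    have one_le : 1 ≤ (1 + (x + x ^ 2) + (x + x ^ 2) ^ 2 / 2) * (1 - x) := by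
      have : 0 ≤ 1 - x - x ^ 2 - x ^ 3 := by nlinarith
      nlinarith [mul_nonneg (sq_nonneg x) this]
    exact one_le.trans (mul_le_mul_of_nonneg_right quadratic_le (by linarith))
  · have exp_neg_le : Real.exp (-(x + x ^ 2)) ≤ 1 - x := by
      have := (abs_le.1 (Real.abs_exp_sub_one_sub_id_le (x := -(x + x ^ 2))
        (abs_le.2 ⟨by nlinarith, by nlinarith⟩))).2
      nlinarith [mul_nonneg (sq_nonneg x) (show 0 ≤ 1 - (1 + x) ^ 2 by nlinarith)]
    calc 1 = Real.exp (x + x ^ 2) * Real.exp (-(x + x ^ 2)) := by rw [← Real.exp_add]; simp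
      _ ≤ _ := mul_le_mul_of_nonneg_left exp_neg_le (Real.exp_pos _).le

theorem lintegral_exp_mul_sq_gaussianReal_eq {t : ℝ} (ht : t < 1 / 2) (c : ℝ) :
    ∫⁻ x, ENNReal.ofReal (Real.exp (t * x ^ 2 + c)) ∂(gaussianReal 0 1) =
      ENNReal.ofReal (√((1 - 2 * t)⁻¹) * Real.exp c) := by
  rw [gaussianReal_of_var_ne_zero _ one_ne_zero,
    lintegral_withDensity_eq_lintegral_mul _ (by fun_prop) (by fun_prop)]
  have integrand_eq : ∀ x : ℝ,
      (gaussianPDF 0 1 * fun x => ENNReal.ofReal (Real.exp (t * x ^ 2 + c))) x =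
        ENNReal.ofReal ((√(2 * Real.pi))⁻¹ * Real.exp c * Real.exp (-(1 / 2 - t) * x ^ 2)) := by
    intro x
    simp only [Pi.mul_apply, gaussianPDF]
    rw [← ENNReal.ofReal_mul (gaussianPDFReal_nonneg _ _ _)]
    congr 1
    simp only [gaussianPDFReal, NNReal.coe_one, mul_one, sub_zero, mul_assoc]
    rw [← Real.exp_add, ← Real.exp_add]
    congr 2; ring
  have normalization : (√(2 * Real.pi))⁻¹ * √(Real.pi / (1 / 2 - t)) = √((1 - 2 * t)⁻¹) := by
    rw [← Real.sqrt_inv, ← Real.sqrt_mul (by positivity)]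
    congr 1
    have : 1 - 2 * t ≠ 0 := by linarith
    field_simp
  simp only [integrand_eq]
  rw [← ofReal_integral_eq_lintegral_ofReal
    ((integrable_exp_neg_mul_sq (by linarith)).const_mul _)
    (Filter.Eventually.of_forall fun x => by positivity), integral_const_mul, integral_gaussian,
    ← normalization]
  congr 1; ring

theorem lintegral_exp_mul_sq_gaussianReal_le {t : ℝ} (h0 : -(1 / 4) ≤ t) (h1 : t ≤ 1 / 4) (c : ℝ) :
    ∫⁻ x, ENNReal.ofReal (Real.exp (t * x ^ 2 + c)) ∂(gaussianReal 0 1) ≤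
      ENNReal.ofReal (Real.exp (t + 2 * t ^ 2 + c)) := by
  rw [lintegral_exp_mul_sq_gaussianReal_eq (by linarith), Real.exp_add]
  gcongr
  rw [Real.sqrt_le_iff]
  refine ⟨(Real.exp_pos _).le, (inv_one_sub_le_exp (by linarith) (by linarith)).trans_eq ?_⟩
  rw [← Real.exp_nat_mul]; congr 1; push_cast; ring

/-- The probability that the mean of `m` squared standard Gaussians deviates from `1` by more
than `u`. -/
noncomputable def chiSqTail (m : ℕ) (u : ℝ) : ENNReal :=
  stdPi (Fin m) {x | u < |(∑ s, x s ^ 2) / m - 1|}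

theorem stdPi_sum_mul_sq_add_nonneg_le (m : ℕ) {t c : ℝ} (h0 : -(1 / 4) ≤ t) (h1 : t ≤ 1 / 4) :
    stdPi (Fin m) {x | 0 ≤ ∑ s, (t * x s ^ 2 + c)} ≤
      ENNReal.ofReal (Real.exp (m * (t + 2 * t ^ 2 + c))) := by
  calc stdPi (Fin m) {x | 0 ≤ ∑ s, (t * x s ^ 2 + c)}
      ≤ (∫⁻ x, ENNReal.ofReal (Real.exp (t * x ^ 2 + c)) ∂(gaussianReal 0 1)) ^ m := by
        simpa using measure_pi_sum_nonneg_le (ι := Fin m) (gaussianReal 0 1)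
          (f := fun x => t * x ^ 2 + c) (by fun_prop)
    _ ≤ ENNReal.ofReal (Real.exp (t + 2 * t ^ 2 + c)) ^ m := by
        gcongr
        exact lintegral_exp_mul_sq_gaussianReal_le h0 h1 c
    _ = _ := by rw [← ENNReal.ofReal_pow (Real.exp_pos _).le, ← Real.exp_nat_mul]

theorem chiSqTail_le {m : ℕ} (hm : 0 < m) {u : ℝ} (h0 : 0 < u) (h1 : u ≤ 1) :
    chiSqTail m u ≤ ENNReal.ofReal (2 * Real.exp (-(m * u ^ 2 / 8))) := by
  have hm' : (0 : ℝ) < m := by exact_mod_cast hm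
  have upper := stdPi_sum_mul_sq_add_nonneg_le m (t := u / 4) (c := -(u / 4) * (1 + u))
    (by linarith) (by linarith)
  have lower := stdPi_sum_mul_sq_add_nonneg_le m (t := -(u / 4)) (c := u / 4 * (1 - u))
    (by linarith) (by linarith)
  rw [show (m : ℝ) * _ = -(m * u ^ 2 / 8) by ring] at upper lower
  have subset : {x : Fin m → ℝ | u < |(∑ s, x s ^ 2) / m - 1|} ⊆
      {x | 0 ≤ ∑ s, (u / 4 * x s ^ 2 + -(u / 4) * (1 + u))} ∪
      {x | 0 ≤ ∑ s, (-(u / 4) * x s ^ 2 + u / 4 * (1 - u))} := by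
    intro x hx
    simp only [Set.mem_union, Set.mem_ofPred_eq, Finset.sum_add_distrib, ← Finset.mul_sum,
      Finset.sum_const, Finset.card_univ, Fintype.card_fin, nsmul_eq_mul] at hx ⊢
    rcases lt_abs.1 hx with h | h
    · left
      have : (1 + u) * m < ∑ s, x s ^ 2 := by
        rw [← lt_div_iff₀ hm']; linarith
      nlinarith
    · right
      have : ∑ s, x s ^ 2 < (1 - u) * m := by
        rw [← div_lt_iff₀ hm']; linarith
      nlinarith
  calc chiSqTail m u ≤ _ := measure_mono subset
    _ ≤ _ := measure_union_le _ _
    _ ≤ _ := add_le_add upper lower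
    _ = _ := by rw [← ENNReal.ofReal_add (Real.exp_pos _).le (Real.exp_pos _).le]; congr 1; ring

theorem chiSqTail_half_le_exp_of_hundred_le {m : ℕ} (hm : 100 ≤ m) :
    chiSqTail m (1 / 2) ≤ ENNReal.ofReal (Real.exp (-(m / 100))) := by
  refine (chiSqTail_le (by lia) (by norm_num) (by norm_num)).trans (ENNReal.ofReal_le_ofReal ?_)
  have hm' : (100 : ℝ) ≤ m := by exact_mod_cast hm
  have two_le : (2 : ℝ) ≤ Real.exp 1 := by linarith [Real.add_one_le_exp (1 : ℝ)]
  calc 2 * Real.exp (-(m * (1 / 2) ^ 2 / 8))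
      ≤ Real.exp 1 * Real.exp (-(m * (1 / 2) ^ 2 / 8)) := by gcongr
    _ = Real.exp (1 + -(m * (1 / 2) ^ 2 / 8)) := (Real.exp_add _ _).symm
    _ ≤ _ := Real.exp_le_exp.2 (by linarith)

theorem abs_mean_sq_sub_one_le_half {m : ℕ} (hm : 0 < m) {x : Fin m → ℝ}
    (hx : ∀ s, x s ∈ Set.Icc (4 / 5 : ℝ) (6 / 5)) : |(∑ s, x s ^ 2) / m - 1| ≤ 1 / 2 := by
  have hm' : (0 : ℝ) < m := by exact_mod_cast hm
  have upper : ∑ s, x s ^ 2 ≤ ∑ _s : Fin m, (36 / 25 : ℝ) :=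
    Finset.sum_le_sum fun s _ => by nlinarith [(hx s).1, (hx s).2]
  have lower : ∑ _s : Fin m, (16 / 25 : ℝ) ≤ ∑ s, x s ^ 2 :=
    Finset.sum_le_sum fun s _ => by nlinarith [(hx s).1]
  simp only [Finset.sum_const, Finset.card_univ, Fintype.card_fin, nsmul_eq_mul] at upper lower
  rw [abs_le, le_sub_iff_add_le, sub_le_iff_le_add, le_div_iff₀ hm', div_le_iff₀ hm']
  constructor <;> linarith

theorem chiSqTail_half_le_one_sub_pow {m : ℕ} (hm : 0 < m) {q : ℝ} (hq0 : 0 ≤ q)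
    (hq : ENNReal.ofReal q ≤ gaussianReal 0 1 (Set.Icc (4 / 5) (6 / 5))) :
    chiSqTail m (1 / 2) ≤ ENNReal.ofReal (1 - q ^ m) := by
  have box_measurable : MeasurableSet (Set.univ.pi fun _ : Fin m => Set.Icc (4 / 5 : ℝ) (6 / 5)) :=
    MeasurableSet.univ_pi fun _ => measurableSet_Icc
  have le_box : ENNReal.ofReal (q ^ m) ≤
      stdPi (Fin m) (Set.univ.pi fun _ => Set.Icc (4 / 5) (6 / 5)) := by
    rw [Measure.pi_pi, ENNReal.ofReal_pow hq0]
    simp only [Finset.prod_const, Finset.card_univ, Fintype.card_fin]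
    gcongr
  calc chiSqTail m (1 / 2)
      ≤ stdPi (Fin m) (Set.univ.pi fun _ => Set.Icc (4 / 5) (6 / 5))ᶜ :=
        measure_mono fun x hx hx' =>
          (abs_mean_sq_sub_one_le_half hm fun s => hx' s trivial).not_gt hx
    _ = 1 - _ := by rw [measure_compl box_measurable (measure_ne_top _ _), measure_univ]
    _ ≤ 1 - ENNReal.ofReal (q ^ m) := tsub_le_tsub_left le_box _
    _ = _ := by rw [ENNReal.ofReal_sub _ (by positivity), ENNReal.ofReal_one]

/- Chernoff's bound `2 exp (-m / 32)` is void for small `m`, where the box `[4/5, 6/5]^m`, of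
probability bounded below, is used instead. -/
theorem exists_chiSqTail_half_le : ∃ κ : ℝ, 0 < κ ∧ ∀ m : ℕ, 0 < m →
    chiSqTail m (1 / 2) ≤ ENNReal.ofReal (Real.exp (-(κ * m))) := by
  set q : ℝ := (6 / 5 - 4 / 5) * gaussianPDFReal 0 1 (6 / 5)
  have q_pos : 0 < q := mul_pos (by norm_num) (gaussianPDFReal_pos _ _ _ one_ne_zero)
  have q_le_measure : ENNReal.ofReal q ≤ gaussianReal 0 1 (Set.Icc (4 / 5) (6 / 5)) :=
    mul_gaussianPDFReal_le_gaussianReal_Icc (by norm_num) le_rfl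
  have q_le_one : q ≤ 1 := ENNReal.ofReal_le_one.1 (q_le_measure.trans prob_le_one)
  have pow_le_one : q ^ 100 ≤ 1 := pow_le_one₀ q_pos.le q_le_one
  refine ⟨q ^ 100 / 100, by positivity, fun m hm => ?_⟩
  rcases le_or_gt 100 m with h | h
  · refine (chiSqTail_half_le_exp_of_hundred_le h).trans
      (ENNReal.ofReal_le_ofReal (Real.exp_le_exp.2 ?_))
    nlinarith [m.cast_nonneg (α := ℝ)]
  · refine (chiSqTail_half_le_one_sub_pow hm q_pos.le q_le_measure).trans
      (ENNReal.ofReal_le_ofReal ?_)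
    have h' : (m : ℝ) ≤ 100 := by exact_mod_cast h.le
    have pow_le_pow : q ^ 100 ≤ q ^ m := pow_le_pow_of_le_one q_pos.le q_le_one h.le
    nlinarith [Real.add_one_le_exp (-(q ^ 100 / 100 * m)), pow_pos q_pos 100]

end ChiSquare

/-! ### Total variation between networks -/

section BretagnolleHuber

variable {E : Type*} [MeasurableSpace E] {P Q : Measure E}

theorem measureReal_eq_setIntegral_of_withDensity {f : E → ℝ} (hf : Measurable f)
    (h0 : ∀ x, 0 ≤ f x) (hQ : Q = P.withDensity fun x => ENNReal.ofReal (f x)) {S : Set E}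
    (hS : MeasurableSet S) : Q.real S = ∫ x in S, f x ∂P := by
  rw [measureReal_def, hQ, withDensity_apply _ hS, integral_eq_lintegral_of_nonneg_ae
    (Filter.Eventually.of_forall h0) hf.aestronglyMeasurable]

theorem integrable_of_withDensity [IsFiniteMeasure Q] {f : E → ℝ} (hf : Measurable f)
    (h0 : ∀ x, 0 ≤ f x) (hQ : Q = P.withDensity fun x => ENNReal.ofReal (f x)) :
    Integrable f P := by
  refine ⟨hf.aestronglyMeasurable, ?_⟩
  rw [hasFiniteIntegral_iff_ofReal (Filter.Eventually.of_forall h0), ← setLIntegral_univ,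
    ← withDensity_apply _ MeasurableSet.univ, ← hQ]
  exact measure_lt_top Q _

variable [IsProbabilityMeasure P]

theorem integral_one_add_mul_sq {g : E → ℝ} (hg : MemLp g 2 P) (c : ℝ) :
    ∫ x, (1 + c * g x) ^ 2 ∂P = 1 + 2 * c * ∫ x, g x ∂P + c ^ 2 * ∫ x, g x ^ 2 ∂P := by
  have hg1 : Integrable g P := hg.integrable one_le_two
  have linear : Integrable (fun x => 1 + 2 * c * g x) P :=
    (integrable_const 1).add (hg1.const_mul _)
  have expand : ∀ x, (1 + c * g x) ^ 2 = 1 + 2 * c * g x + c ^ 2 * g x ^ 2 := fun x => by ring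
  simp only [expand]
  rw [integral_add linear (hg.integrable_sq.const_mul _),
    integral_add (integrable_const 1) (hg1.const_mul _), integral_const_mul, integral_const_mul]
  simp

theorem integral_abs_one_sub_sq_le {g : E → ℝ} (hg : MemLp g 2 P) (h0 : ∀ x, 0 ≤ g x)
    (h1 : ∫ x, g x ^ 2 ∂P = 1) :
    ∫ x, |1 - g x ^ 2| ∂P ≤ 2 * √(1 - (∫ x, g x ∂P) ^ 2) := by
  have factor : ∀ x, |1 - g x ^ 2| = |1 + -1 * g x| * (1 + 1 * g x) := fun x => by
    rw [← abs_of_nonneg (show 0 ≤ 1 + 1 * g x by linarith [h0 x]), ← abs_mul]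
    congr 1; ring
  have memLp : ∀ c : ℝ, MemLp (fun x => 1 + c * g x) (ENNReal.ofReal 2) P := fun c => by
    rw [ENNReal.ofReal_ofNat]
    exact (memLp_const (1 : ℝ)).add (hg.const_mul c)
  have cauchySchwarz := integral_mul_le_Lp_mul_Lq_of_nonneg (μ := P) Real.HolderConjugate.two_two
    (f := fun x => |1 + -1 * g x|) (g := fun x => 1 + 1 * g x)
    (Filter.Eventually.of_forall fun x => abs_nonneg _)
    (Filter.Eventually.of_forall fun x => by simpa using add_nonneg zero_le_one (h0 x))
    (memLp (-1)).abs (memLp 1)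
  simp only [Real.rpow_two, sq_abs, integral_one_add_mul_sq hg, h1, ← Real.sqrt_eq_rpow]
    at cauchySchwarz
  simp only [factor]
  refine cauchySchwarz.trans_eq ?_
  set b := ∫ x, g x ∂P
  have b_le : 0 ≤ 1 + 2 * -1 * b + (-1) ^ 2 * 1 := by
    have sq_integral := integral_one_add_mul_sq hg (-1)
    rw [h1] at sq_integral
    exact sq_integral ▸ integral_nonneg fun x => sq_nonneg _
  rw [← Real.sqrt_mul b_le, show (2 : ℝ) = √(2 ^ 2) by simp, ← Real.sqrt_mul (by positivity)]
  congr 1; norm_num; ring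

variable [IsProbabilityMeasure Q]

theorem abs_measureReal_sub_le_half_integral {f : E → ℝ} (hf : Measurable f)
    (h0 : ∀ x, 0 ≤ f x) (hQ : Q = P.withDensity fun x => ENNReal.ofReal (f x)) {S : Set E}
    (hS : MeasurableSet S) : |P.real S - Q.real S| ≤ (∫ x, |1 - f x| ∂P) / 2 := by
  have hfi : Integrable f P := integrable_of_withDensity hf h0 hQ
  have le_setIntegral : ∀ T, MeasurableSet T →
      |P.real T - Q.real T| ≤ ∫ x in T, |1 - f x| ∂P := fun T hT => by
    have : P.real T - Q.real T = ∫ x in T, (1 - f x) ∂P := by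
      rw [integral_sub (integrable_const _).integrableOn hfi.integrableOn,
        measureReal_eq_setIntegral_of_withDensity hf h0 hQ hT]
      simp
    rw [this]
    exact abs_integral_le_integral_abs
  have compl_eq : |P.real Sᶜ - Q.real Sᶜ| = |P.real S - Q.real S| := by
    rw [probReal_compl_eq_one_sub hS, probReal_compl_eq_one_sub hS, ← abs_neg]
    congr 1; ring
  have split : _ = ∫ x, |1 - f x| ∂P :=
    integral_add_compl hS ((integrable_const 1).sub hfi).abs
  linarith [le_setIntegral S hS, le_setIntegral Sᶜ hS.compl]

theorem exp_neg_integral_le_sq_integral_exp {ℓ : E → ℝ} (hℓ : Integrable ℓ P)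
    (hexp : Integrable (fun x => Real.exp (-ℓ x / 2)) P) :
    Real.exp (-∫ x, ℓ x ∂P) ≤ (∫ x, Real.exp (-ℓ x / 2) ∂P) ^ 2 := by
  have jensen := ConvexOn.map_integral_le (μ := P) (g := Real.exp) (f := fun x => -ℓ x / 2)
    convexOn_exp Real.continuous_exp.continuousOn isClosed_univ
    (Filter.Eventually.of_forall fun x => Set.mem_univ _) (hℓ.neg.div_const 2) hexp
  rw [integral_div, integral_neg] at jensen
  calc Real.exp (-∫ x, ℓ x ∂P) = Real.exp (-(∫ x, ℓ x ∂P) / 2) ^ 2 := by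
        rw [← Real.exp_nat_mul]; congr 1; push_cast; ring
    _ ≤ _ := by gcongr

/- The Bretagnolle–Huber inequality: `∫ ℓ ∂P` is the Kullback–Leibler divergence of `P` from
`Q`. -/
theorem dTV_le_sqrt_one_sub_exp_neg_integral {ℓ : E → ℝ} (hℓ : Measurable ℓ)
    (hQ : Q = P.withDensity fun x => ENNReal.ofReal (Real.exp (-ℓ x))) (hInt : Integrable ℓ P) :
    dTV P Q ≤ √(1 - Real.exp (-∫ x, ℓ x ∂P)) := by
  have exp_half_sq : ∀ x, Real.exp (-ℓ x / 2) ^ 2 = Real.exp (-ℓ x) := fun x => by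
    rw [← Real.exp_nat_mul]; congr 1; push_cast; ring
  have exp_measurable : Measurable fun x => Real.exp (-ℓ x) := by fun_prop
  have memLp : MemLp (fun x => Real.exp (-ℓ x / 2)) 2 P := by
    refine (memLp_two_iff_integrable_sq (by fun_prop)).2 ?_
    simp only [exp_half_sq]
    exact integrable_of_withDensity exp_measurable (fun x => (Real.exp_pos _).le) hQ
  have integral_sq : ∫ x, Real.exp (-ℓ x / 2) ^ 2 ∂P = 1 := by
    simp only [exp_half_sq]
    rw [← setIntegral_univ, ← measureReal_eq_setIntegral_of_withDensity exp_measurable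
      (fun x => (Real.exp_pos _).le) hQ MeasurableSet.univ, probReal_univ]
  have : Nonempty {s : Set E // MeasurableSet s} := ⟨⟨∅, MeasurableSet.empty⟩⟩
  refine ciSup_le fun S => ?_
  calc |P.real S.1 - Q.real S.1| ≤ (∫ x, |1 - Real.exp (-ℓ x)| ∂P) / 2 :=
        abs_measureReal_sub_le_half_integral exp_measurable (fun x => (Real.exp_pos _).le) hQ S.2
    _ ≤ √(1 - (∫ x, Real.exp (-ℓ x / 2) ∂P) ^ 2) := by
        simp only [← exp_half_sq]
        linarith [integral_abs_one_sub_sq_le memLp (fun x => (Real.exp_pos _).le) integral_sq]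
    _ ≤ _ := by
        gcongr
        exact exp_neg_integral_le_sq_integral_exp hInt (memLp.integrable one_le_two)

end BretagnolleHuber

section Density

variable {ι : Type*} [Fintype ι]

theorem pi_gaussianReal_eq_withDensity {v : ι → NNReal} (hv : ∀ i, v i ≠ 0) :
    (Measure.pi fun i => gaussianReal 0 (v i)) =
      volume.withDensity fun x => ENNReal.ofReal (∏ i, gaussianPDFReal 0 (v i) (x i)) := by
  refine Measure.pi_eq fun s hs => ?_
  rw [withDensity_apply _ (MeasurableSet.univ_pi hs), volume_pi, Measure.restrict_pi_pi,
    ← ofReal_integral_eq_lintegral_ofReal, integral_fintype_prod_eq_prod,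
    ENNReal.ofReal_prod_of_nonneg]
  · refine Finset.prod_congr rfl fun i _ => ?_
    rw [gaussianReal_apply_eq_integral _ (hv i)]
  · exact fun i _ => integral_nonneg fun x => gaussianPDFReal_nonneg _ _ _
  · exact Integrable.fintype_prod_dep fun i => (integrable_gaussianPDFReal 0 (v i)).integrableOn
  · exact Filter.Eventually.of_forall fun x =>
      Finset.prod_nonneg fun i _ => gaussianPDFReal_nonneg _ _ _

theorem map_mulVec_withDensity [DecidableEq ι] {T : Matrix ι ι ℝ} (hT : T.det = 1)
    {F : (ι → ℝ) → ENNReal} (hF : Measurable F) :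
    (volume.withDensity F).map (fun x => T⁻¹ *ᵥ x) = volume.withDensity fun x => F (T *ᵥ x) := by
  have det_inv : (T⁻¹).det = 1 := by rw [det_nonsing_inv, hT, Ring.inverse_one]
  have map_volume : (volume : Measure (ι → ℝ)).map (fun x => T⁻¹ *ᵥ x) = volume := by
    have := Real.map_matrix_volume_pi_eq_smul_volume_pi (M := T⁻¹) (by simp [det_inv])
    rw [det_inv, inv_one, abs_one, ENNReal.ofReal_one, one_smul] at this
    exact this
  have hm : Measurable fun x : ι → ℝ => T⁻¹ *ᵥ x := by fun_prop
  ext S hS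
  rw [Measure.map_apply hm hS, withDensity_apply _ (hm hS), withDensity_apply _ hS]
  conv_rhs => rw [← map_volume, setLIntegral_map (f := fun x => F (T *ᵥ x)) hS (by fun_prop) hm]
  simp [mulVec_mulVec, mul_nonsing_inv _ (show IsUnit T.det from hT ▸ isUnit_one)]

end Density

section Network

variable {n : ℕ} {π : Fin n → Finset (Fin n)}

theorem det_one_sub_coeffMatrix (hπ : ∀ i, ∀ j ∈ π i, j < i) (A : ∀ i, {j // j ∈ π i} → ℝ) :
    (1 - coeffMatrix π A).det = 1 := by
  rw [det_of_isLowerTriangular]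
  · refine Finset.prod_eq_one fun i _ => ?_
    have : i ∉ π i := fun h => lt_irrefl _ (hπ i i h)
    simp [coeffMatrix, this]
  · intro i j (hij : i < j)
    have : j ∉ π i := fun h => (hπ i j h).not_gt hij
    simp [coeffMatrix, this, hij.ne]

theorem isUnit_det_one_sub_coeffMatrix (hπ : ∀ i, ∀ j ∈ π i, j < i)
    (A : ∀ i, {j // j ∈ π i} → ℝ) : IsUnit (1 - coeffMatrix π A).det := by
  rw [det_one_sub_coeffMatrix hπ]; exact isUnit_one

theorem one_sub_coeffMatrix_mulVec (A : ∀ i, {j // j ∈ π i} → ℝ) (x : Fin n → ℝ) (i : Fin n) :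
    ((1 - coeffMatrix π A) *ᵥ x) i = x i - ∑ j, A i j * x j.1 := by
  rw [sub_mulVec, one_mulVec, Pi.sub_apply]
  congr 1
  simp only [mulVec, dotProduct, coeffMatrix, of_apply]
  rw [← Finset.sum_subset (Finset.subset_univ (π i)) fun j _ h => by rw [dif_neg h, zero_mul],
    ← Finset.sum_coe_sort]
  exact Finset.sum_congr rfl fun j _ => by rw [dif_pos j.2]

instance (A : ∀ i, {j // j ∈ π i} → ℝ) (σ : Fin n → ℝ) :
    IsProbabilityMeasure (gaussianBN π A σ) := by
  unfold gaussianBN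
  exact Measure.isProbabilityMeasure_map (by fun_prop)

/-- The variance of the residual `X i - ∑ j, A' i j * X j` under the network with parameters `A`
and `σ`. -/
noncomputable def resVar (π : Fin n → Finset (Fin n)) (A : ∀ i, {j // j ∈ π i} → ℝ)
    (σ : Fin n → ℝ) (A' : ∀ i, {j // j ∈ π i} → ℝ) (i : Fin n) : ℝ :=
  ∑ a, σ a ^ 2 * ((1 - coeffMatrix π A') * (1 - coeffMatrix π A)⁻¹) i a ^ 2

theorem map_dotProduct_gaussianBN (A : ∀ i, {j // j ∈ π i} → ℝ) (σ w : Fin n → ℝ) :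
    (gaussianBN π A σ).map (fun x => w ⬝ᵥ x) = gaussianReal 0
      (∑ a, σ a ^ 2 * (w ᵥ* (1 - coeffMatrix π A)⁻¹) a ^ 2).toNNReal := by
  have h := map_dotProduct_pi_gaussianReal (fun a => (σ a ^ 2).toNNReal)
    (w ᵥ* (1 - coeffMatrix π A)⁻¹)
  simp only [Real.coe_toNNReal _ (sq_nonneg _)] at h
  rw [← h, gaussianBN, Measure.map_map (by fun_prop) (by fun_prop)]
  congr 1
  ext x
  simp [dotProduct_mulVec]

theorem map_residual_gaussianBN (A : ∀ i, {j // j ∈ π i} → ℝ) (σ : Fin n → ℝ)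
    (A' : ∀ i, {j // j ∈ π i} → ℝ) (i : Fin n) :
    (gaussianBN π A σ).map (fun x => ((1 - coeffMatrix π A') *ᵥ x) i) =
      gaussianReal 0 (resVar π A σ A' i).toNNReal :=
  map_dotProduct_gaussianBN A σ _

theorem resVar_nonneg (A : ∀ i, {j // j ∈ π i} → ℝ) (σ : Fin n → ℝ)
    (A' : ∀ i, {j // j ∈ π i} → ℝ) (i : Fin n) : 0 ≤ resVar π A σ A' i :=
  Finset.sum_nonneg fun _ _ => by positivity

theorem resVar_self (hπ : ∀ i, ∀ j ∈ π i, j < i) (A : ∀ i, {j // j ∈ π i} → ℝ) (σ : Fin n → ℝ)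
    (i : Fin n) : resVar π A σ A i = σ i ^ 2 := by
  rw [resVar, mul_nonsing_inv _ (isUnit_det_one_sub_coeffMatrix hπ A)]
  simp [Matrix.one_apply]

theorem integral_sq_gaussianReal (v : NNReal) : ∫ y, y ^ 2 ∂(gaussianReal 0 v) = v := by
  have h := variance_eq_sub (X := fun y : ℝ => y) (μ := gaussianReal 0 v) (memLp_id_gaussianReal 2)
  rw [variance_fun_id_gaussianReal, integral_id_gaussianReal] at h
  simpa using h.symm

theorem integrable_sq_residual (A : ∀ i, {j // j ∈ π i} → ℝ) (σ : Fin n → ℝ)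
    (A' : ∀ i, {j // j ∈ π i} → ℝ) (i : Fin n) :
    Integrable (fun x => ((1 - coeffMatrix π A') *ᵥ x) i ^ 2) (gaussianBN π A σ) := by
  have h : Integrable (fun y : ℝ => y ^ 2) (gaussianReal 0 (resVar π A σ A' i).toNNReal) :=
    (memLp_id_gaussianReal 2).integrable_sq
  rw [← map_residual_gaussianBN] at h
  exact h.comp_measurable (by fun_prop)

theorem integral_sq_residual (A : ∀ i, {j // j ∈ π i} → ℝ) (σ : Fin n → ℝ)
    (A' : ∀ i, {j // j ∈ π i} → ℝ) (i : Fin n) :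
    ∫ x, ((1 - coeffMatrix π A') *ᵥ x) i ^ 2 ∂(gaussianBN π A σ) = resVar π A σ A' i := by
  have h := integral_sq_gaussianReal (resVar π A σ A' i).toNNReal
  rwa [← map_residual_gaussianBN, integral_map (by fun_prop) (by fun_prop),
    Real.coe_toNNReal _ (resVar_nonneg A σ A' i)] at h

theorem gaussianBN_eq_withDensity (hπ : ∀ i, ∀ j ∈ π i, j < i) (A : ∀ i, {j // j ∈ π i} → ℝ)
    {σ : Fin n → ℝ} (hσ : ∀ i, 0 < σ i) :
    gaussianBN π A σ = volume.withDensity fun x => ENNReal.ofReal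
      (∏ i, gaussianPDFReal 0 (σ i ^ 2).toNNReal (((1 - coeffMatrix π A) *ᵥ x) i)) := by
  rw [gaussianBN, pi_gaussianReal_eq_withDensity fun i => by
    simpa using (hσ i).ne']
  exact map_mulVec_withDensity (det_one_sub_coeffMatrix hπ A) (by fun_prop)

/-- The logarithm of the density ratio of `N(0, s²)` at `x` to `N(0, t²)` at `y`. -/
noncomputable def gaussianLogRatio (s t x y : ℝ) : ℝ :=
  Real.log (t / s) - x ^ 2 / (2 * s ^ 2) + y ^ 2 / (2 * t ^ 2)

theorem gaussianPDFReal_mul_exp_neg_gaussianLogRatio {s t : ℝ} (hs : 0 < s) (ht : 0 < t)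
    (x y : ℝ) :
    gaussianPDFReal 0 (s ^ 2).toNNReal x * Real.exp (-gaussianLogRatio s t x y) =
      gaussianPDFReal 0 (t ^ 2).toNNReal y := by
  have exp_eq : Real.exp (-gaussianLogRatio s t x y) =
      s / t * Real.exp (x ^ 2 / (2 * s ^ 2)) * Real.exp (-(y ^ 2 / (2 * t ^ 2))) := by
    rw [show s / t = Real.exp (-Real.log (t / s)) by
      rw [Real.exp_neg, Real.exp_log (by positivity), inv_div], ← Real.exp_add, ← Real.exp_add,
      gaussianLogRatio]
    congr 1; ring
  have sqrt_eq : ∀ r : ℝ, 0 < r → √(2 * Real.pi * r ^ 2) = √(2 * Real.pi) * r := fun r hr => by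
    rw [Real.sqrt_mul (by positivity), Real.sqrt_sq hr.le]
  simp only [exp_eq, gaussianPDFReal, sub_zero, Real.coe_toNNReal _ (sq_nonneg _), neg_div,
    Real.exp_neg, sqrt_eq s hs, sqrt_eq t ht]
  field_simp

/-- The log-likelihood ratio of the network with parameters `A` and `σ` to
the network on the same graph with the primed parameters. -/
noncomputable def logRatio (π : Fin n → Finset (Fin n)) (A : ∀ i, {j // j ∈ π i} → ℝ)
    (σ : Fin n → ℝ) (A' : ∀ i, {j // j ∈ π i} → ℝ) (σ' : Fin n → ℝ) (x : Fin n → ℝ) : ℝ :=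
  ∑ i, gaussianLogRatio (σ i) (σ' i) (((1 - coeffMatrix π A) *ᵥ x) i)
    (((1 - coeffMatrix π A') *ᵥ x) i)

theorem gaussianBN_eq_withDensity_exp_neg_logRatio (hπ : ∀ i, ∀ j ∈ π i, j < i)
    (A A' : ∀ i, {j // j ∈ π i} → ℝ) {σ σ' : Fin n → ℝ} (hσ : ∀ i, 0 < σ i)
    (hσ' : ∀ i, 0 < σ' i) :
    gaussianBN π A' σ' = (gaussianBN π A σ).withDensity
      fun x => ENNReal.ofReal (Real.exp (-logRatio π A σ A' σ' x)) := by
  rw [gaussianBN_eq_withDensity hπ A hσ, gaussianBN_eq_withDensity hπ A' hσ',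
    ← withDensity_mul _ (by fun_prop) (by unfold logRatio gaussianLogRatio; fun_prop)]
  congr 1
  ext x
  rw [Pi.mul_apply, ← ENNReal.ofReal_mul
    (Finset.prod_nonneg fun i _ => gaussianPDFReal_nonneg _ _ _)]
  congr 1
  rw [logRatio, ← Finset.sum_neg_distrib, Real.exp_sum, ← Finset.prod_mul_distrib]
  exact Finset.prod_congr rfl fun i _ =>
    (gaussianPDFReal_mul_exp_neg_gaussianLogRatio (hσ i) (hσ' i) _ _).symm

theorem integrable_gaussianLogRatio_residual (A A' : ∀ i, {j // j ∈ π i} → ℝ)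
    (σ σ' : Fin n → ℝ) (i : Fin n) :
    Integrable (fun x => gaussianLogRatio (σ i) (σ' i) (((1 - coeffMatrix π A) *ᵥ x) i)
      (((1 - coeffMatrix π A') *ᵥ x) i)) (gaussianBN π A σ) :=
  ((integrable_const _).sub ((integrable_sq_residual A σ A i).div_const _)).add
    ((integrable_sq_residual A σ A' i).div_const _)

theorem integral_gaussianLogRatio_residual (hπ : ∀ i, ∀ j ∈ π i, j < i)
    (A A' : ∀ i, {j // j ∈ π i} → ℝ) {σ : Fin n → ℝ} (σ' : Fin n → ℝ) (i : Fin n)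
    (hσ : 0 < σ i) :
    ∫ x, gaussianLogRatio (σ i) (σ' i) (((1 - coeffMatrix π A) *ᵥ x) i)
      (((1 - coeffMatrix π A') *ᵥ x) i) ∂(gaussianBN π A σ) =
      Real.log (σ' i / σ i) - 1 / 2 + resVar π A σ A' i / (2 * σ' i ^ 2) := by
  have int_A := (integrable_sq_residual A σ A i).div_const (2 * σ i ^ 2)
  have int_A' := (integrable_sq_residual A σ A' i).div_const (2 * σ' i ^ 2)
  have int_const : Integrable (fun _ => Real.log (σ' i / σ i)) (gaussianBN π A σ) :=
    integrable_const _
  unfold gaussianLogRatio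
  rw [integral_add (int_const.sub' int_A) int_A', integral_sub int_const int_A, integral_div,
    integral_div, integral_sq_residual, integral_sq_residual, resVar_self hπ, integral_const,
    probReal_univ, one_smul]
  field_simp

theorem dTV_gaussianBN_le (hπ : ∀ i, ∀ j ∈ π i, j < i) (A A' : ∀ i, {j // j ∈ π i} → ℝ)
    {σ σ' : Fin n → ℝ} (hσ : ∀ i, 0 < σ i) (hσ' : ∀ i, 0 < σ' i) :
    dTV (gaussianBN π A σ) (gaussianBN π A' σ') ≤ √(1 - Real.exp (-∑ i,
      (Real.log (σ' i / σ i) - 1 / 2 + resVar π A σ A' i / (2 * σ' i ^ 2)))) := by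
  have integral_eq : ∫ x, logRatio π A σ A' σ' x ∂(gaussianBN π A σ) = ∑ i,
      (Real.log (σ' i / σ i) - 1 / 2 + resVar π A σ A' i / (2 * σ' i ^ 2)) := by
    unfold logRatio
    rw [integral_finsetSum _ fun i _ => integrable_gaussianLogRatio_residual A A' σ σ' i]
    exact Finset.sum_congr rfl fun i _ => integral_gaussianLogRatio_residual hπ A A' σ' i (hσ i)
  rw [← integral_eq]
  exact dTV_le_sqrt_one_sub_exp_neg_integral (by unfold logRatio gaussianLogRatio; fun_prop)
    (gaussianBN_eq_withDensity_exp_neg_logRatio hπ A A' hσ hσ')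
    (integrable_finsetSum _ fun i _ => integrable_gaussianLogRatio_residual A A' σ σ' i)

end Network

/-! ### Networks whose parents are independent -/

section Ancestors

variable {n : ℕ} {π : Fin n → Finset (Fin n)}

/-- `a` is an ancestor of `i`: there is a directed path, possibly of length zero, from `a` to `i`
in the directed graph with parent sets `π`. -/
def IsAncestor (π : Fin n → Finset (Fin n)) : Fin n → Fin n → Prop :=
  Relation.ReflTransGen fun j i => j ∈ π i

/-- Distinct parents of a node have no common ancestor. Since a node is its own ancestor, no
parent is an ancestor of another parent of the same node. -/
def HasDisjointParents (π : Fin n → Finset (Fin n)) : Prop :=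
  ∀ i, ∀ j ∈ π i, ∀ k ∈ π i, j ≠ k → ∀ a, IsAncestor π a j → ¬ IsAncestor π a k

theorem IsAncestor.le (hπ : ∀ i, ∀ j ∈ π i, j < i) {a i : Fin n} (h : IsAncestor π a i) :
    a ≤ i := by
  induction h with
  | refl => exact le_rfl
  | tail _ hbc ih => exact ih.trans (hπ _ _ hbc).le

theorem underlyingGraph_adj_of_mem (hπ : ∀ i, ∀ j ∈ π i, j < i) {i j : Fin n} (h : j ∈ π i) :
    (underlyingGraph π).Adj i j :=
  (SimpleGraph.fromRel_adj _ _ _).2 ⟨(hπ i j h).ne', Or.inl h⟩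

theorem IsAncestor.reachable_deleteEdges (hπ : ∀ i, ∀ j ∈ π i, j < i) {a i : Fin n}
    (h : IsAncestor π a i) (l : Fin n) {k : Fin n} (hk : i < k) :
    ((underlyingGraph π).deleteEdges {s(k, l)}).Reachable i a := by
  induction h with
  | refl => exact .rfl
  | @tail b c _ hbc ih =>
    have hb := hπ c b hbc
    refine SimpleGraph.Reachable.trans (SimpleGraph.Adj.reachable ?_) (ih (hb.trans hk))
    rw [SimpleGraph.deleteEdges_adj, Set.mem_singleton_iff, Sym2.eq_iff]
    exact ⟨underlyingGraph_adj_of_mem hπ hbc, by lia⟩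

/- A common ancestor of the parents `j ≠ k` of `i` would close a cycle through the edge `ij`. -/
theorem hasDisjointParents_of_isAcyclic (hπ : ∀ i, ∀ j ∈ π i, j < i)
    (hG : (underlyingGraph π).IsAcyclic) : HasDisjointParents π := by
  intro i j hj k hk hjk a haj hak
  have bridge := SimpleGraph.isAcyclic_iff_forall_adj_isBridge.1 hG
    (underlyingGraph_adj_of_mem hπ hj)
  rw [SimpleGraph.isBridge_iff] at bridge
  have edge_ik : ((underlyingGraph π).deleteEdges {s(i, j)}).Adj i k := by
    rw [SimpleGraph.deleteEdges_adj, Set.mem_singleton_iff, Sym2.eq_iff]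
    exact ⟨underlyingGraph_adj_of_mem hπ hk, by have := hπ i j hj; lia⟩
  exact bridge (edge_ik.reachable.trans ((hak.reachable_deleteEdges hπ j (hπ i k hk)).trans
    (haj.reachable_deleteEdges hπ j (hπ i j hj)).symm))

variable (hπ : ∀ i, ∀ j ∈ π i, j < i) (A : ∀ i, {j // j ∈ π i} → ℝ)

include hπ

theorem inv_one_sub_coeffMatrix_apply (i a : Fin n) :
    (1 - coeffMatrix π A)⁻¹ i a =
      (1 : Matrix (Fin n) (Fin n) ℝ) i a + ∑ j, A i j * (1 - coeffMatrix π A)⁻¹ j.1 a := by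
  have residual := one_sub_coeffMatrix_mulVec A (fun k => (1 - coeffMatrix π A)⁻¹ k a) i
  have mul_inv : ((1 - coeffMatrix π A) *ᵥ fun k => (1 - coeffMatrix π A)⁻¹ k a) i =
      (1 : Matrix (Fin n) (Fin n) ℝ) i a :=
    congrFun₂ (mul_nonsing_inv _ (isUnit_det_one_sub_coeffMatrix hπ A)) i a
  linarith

theorem isAncestor_of_inv_apply_ne_zero {i a : Fin n} (h : (1 - coeffMatrix π A)⁻¹ i a ≠ 0) :
    IsAncestor π a i := by
  induction i using WellFoundedLT.induction with
  | ind i ih =>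
    rcases eq_or_ne i a with rfl | hia
    · exact .refl
    rw [inv_one_sub_coeffMatrix_apply hπ, Matrix.one_apply_ne hia, zero_add] at h
    obtain ⟨j, -, hj⟩ := Finset.exists_ne_zero_of_sum_ne_zero h
    exact (ih j.1 (hπ i j.1 j.2) (right_ne_zero_of_mul hj)).tail j.2

theorem inv_apply_eq_zero_of_lt {i a : Fin n} (h : i < a) :
    (1 - coeffMatrix π A)⁻¹ i a = 0 := by
  by_contra h0
  exact ((isAncestor_of_inv_apply_ne_zero hπ A h0).le hπ).not_gt h

theorem inv_apply_self (i : Fin n) : (1 - coeffMatrix π A)⁻¹ i i = 1 := by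
  rw [inv_one_sub_coeffMatrix_apply hπ, Matrix.one_apply_eq, Finset.sum_eq_zero, add_zero]
  intro k _
  rw [inv_apply_eq_zero_of_lt hπ A (hπ i k.1 k.2), mul_zero]

theorem inv_apply_mul_inv_apply_eq_zero (hG : HasDisjointParents π) {i j k : Fin n}
    (hj : j ∈ π i) (hk : k ∈ π i) (hjk : j ≠ k) (a : Fin n) :
    (1 - coeffMatrix π A)⁻¹ j a * (1 - coeffMatrix π A)⁻¹ k a = 0 := by
  by_contra h
  exact hG i j hj k hk hjk a (isAncestor_of_inv_apply_ne_zero hπ A (left_ne_zero_of_mul h))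
    (isAncestor_of_inv_apply_ne_zero hπ A (right_ne_zero_of_mul h))

theorem one_apply_mul_inv_apply_eq_zero {i j : Fin n} (hj : j ∈ π i) (a : Fin n) :
    (1 : Matrix (Fin n) (Fin n) ℝ) i a * (1 - coeffMatrix π A)⁻¹ j a = 0 := by
  rcases eq_or_ne i a with rfl | hia
  · rw [inv_apply_eq_zero_of_lt hπ A (hπ i j hj), mul_zero]
  · rw [Matrix.one_apply_ne hia, zero_mul]

end Ancestors

section ResidualVariance

variable {n : ℕ} {π : Fin n → Finset (Fin n)}

/-- The variance of `X j` under the network with parameters `A` and `σ`. -/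
noncomputable def nodeVar (π : Fin n → Finset (Fin n)) (A : ∀ i, {j // j ∈ π i} → ℝ)
    (σ : Fin n → ℝ) (j : Fin n) : ℝ :=
  ∑ a, σ a ^ 2 * (1 - coeffMatrix π A)⁻¹ j a ^ 2

variable (hπ : ∀ i, ∀ j ∈ π i, j < i) (A : ∀ i, {j // j ∈ π i} → ℝ)

include hπ in
theorem nodeVar_pos {σ : Fin n → ℝ} (hσ : ∀ i, 0 < σ i) (j : Fin n) : 0 < nodeVar π A σ j := by
  have self_le : σ j ^ 2 * (1 - coeffMatrix π A)⁻¹ j j ^ 2 ≤ nodeVar π A σ j :=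
    Finset.single_le_sum (f := fun a => σ a ^ 2 * (1 - coeffMatrix π A)⁻¹ j a ^ 2)
      (fun _ _ => by positivity) (Finset.mem_univ j)
  rw [inv_apply_self hπ, one_pow, mul_one] at self_le
  exact (pow_pos (hσ j) 2).trans_le self_le

theorem sq_sum_of_pairwise_mul_eq_zero {J : Type*} [Fintype J] (f : J → ℝ)
    (h : ∀ j k, j ≠ k → f j * f k = 0) : (∑ j, f j) ^ 2 = ∑ j, f j ^ 2 := by
  classical
  rw [sq, Finset.sum_mul_sum]
  refine Finset.sum_congr rfl fun j _ => ?_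
  rw [Finset.sum_eq_single j (fun k _ hk => h j k hk.symm) (by simp), sq]

include hπ

theorem one_sub_coeffMatrix_mul_inv_apply (A' : ∀ i, {j // j ∈ π i} → ℝ) (i a : Fin n) :
    ((1 - coeffMatrix π A') * (1 - coeffMatrix π A)⁻¹) i a =
      (1 : Matrix (Fin n) (Fin n) ℝ) i a +
        ∑ j, (A i j - A' i j) * (1 - coeffMatrix π A)⁻¹ j.1 a := by
  change ((1 - coeffMatrix π A') *ᵥ fun k => (1 - coeffMatrix π A)⁻¹ k a) i = _
  rw [one_sub_coeffMatrix_mulVec, inv_one_sub_coeffMatrix_apply hπ]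
  simp only [sub_mul, Finset.sum_sub_distrib]
  ring

theorem sq_one_sub_coeffMatrix_mul_inv_apply (hG : HasDisjointParents π)
    (A' : ∀ i, {j // j ∈ π i} → ℝ) (i a : Fin n) :
    ((1 - coeffMatrix π A') * (1 - coeffMatrix π A)⁻¹) i a ^ 2 =
      (1 : Matrix (Fin n) (Fin n) ℝ) i a ^ 2 +
        ∑ j, ((A i j - A' i j) * (1 - coeffMatrix π A)⁻¹ j.1 a) ^ 2 := by
  have cross_eq_zero : (1 : Matrix (Fin n) (Fin n) ℝ) i a *
      ∑ j, (A i j - A' i j) * (1 - coeffMatrix π A)⁻¹ j.1 a = 0 := by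
    rw [Finset.mul_sum]
    exact Finset.sum_eq_zero fun j _ => by
      rw [mul_left_comm, one_apply_mul_inv_apply_eq_zero hπ A j.2, mul_zero]
  have sq_sum := sq_sum_of_pairwise_mul_eq_zero
    (fun j => (A i j - A' i j) * (1 - coeffMatrix π A)⁻¹ j.1 a) fun j k hjk => by
      rw [mul_mul_mul_comm, inv_apply_mul_inv_apply_eq_zero hπ A hG j.2 k.2
        (fun h => hjk (Subtype.ext h)), mul_zero]
  rw [one_sub_coeffMatrix_mul_inv_apply hπ, add_sq, mul_assoc, cross_eq_zero, sq_sum, mul_zero,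
    add_zero]

theorem resVar_eq (hG : HasDisjointParents π) (σ : Fin n → ℝ)
    (A' : ∀ i, {j // j ∈ π i} → ℝ) (i : Fin n) :
    resVar π A σ A' i = σ i ^ 2 + ∑ j, (A' i j - A i j) ^ 2 * nodeVar π A σ j.1 := by
  simp only [resVar, sq_one_sub_coeffMatrix_mul_inv_apply hπ A hG, mul_add,
    Finset.sum_add_distrib]
  congr 1
  · simp [Matrix.one_apply]
  · simp only [Finset.mul_sum, nodeVar]
    rw [Finset.sum_comm]
    refine Finset.sum_congr rfl fun j _ => Finset.sum_congr rfl fun a _ => ?_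
    ring

variable {σ : Fin n → ℝ} (hσ : ∀ i, 0 < σ i) {A' : ∀ i, {j // j ∈ π i} → ℝ} {τ : ℝ} {i : Fin n}

include hσ

theorem sq_le_resVar (hG : HasDisjointParents π) : σ i ^ 2 ≤ resVar π A σ A' i := by
  rw [resVar_eq hπ A hG]
  exact le_add_of_nonneg_right <| Finset.sum_nonneg fun j _ =>
    mul_nonneg (sq_nonneg _) (nodeVar_pos hπ A hσ _).le

theorem resVar_le (hG : HasDisjointParents π)
    (hA : ∀ j, |A' i j - A i j| ≤ τ * (σ i / √(nodeVar π A σ j.1))) :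
    resVar π A σ A' i ≤ (1 + (π i).card * τ ^ 2) * σ i ^ 2 := by
  have term_le : ∀ j, (A' i j - A i j) ^ 2 * nodeVar π A σ j.1 ≤ τ ^ 2 * σ i ^ 2 := fun j => by
    have hv := nodeVar_pos hπ A hσ j.1
    calc (A' i j - A i j) ^ 2 * nodeVar π A σ j.1
        ≤ (τ * (σ i / √(nodeVar π A σ j.1))) ^ 2 * nodeVar π A σ j.1 := by
          rw [← sq_abs (A' i j - A i j)]
          gcongr
          exact hA j
      _ = τ ^ 2 * σ i ^ 2 := by
          rw [mul_pow, div_pow, Real.sq_sqrt hv.le]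
          field_simp
  calc resVar π A σ A' i = σ i ^ 2 + ∑ j, (A' i j - A i j) ^ 2 * nodeVar π A σ j.1 :=
        resVar_eq hπ A hG σ A' i
    _ ≤ σ i ^ 2 + ∑ _j : {j // j ∈ π i}, τ ^ 2 * σ i ^ 2 :=
        add_le_add_right (Finset.sum_le_sum fun j _ => term_le j) _
    _ = _ := by simp; ring

end ResidualVariance

section ParameterCloseness

/- With `z = w / r`, the left-hand side is at most half of `(z - 1)² / z + (r / s² - 1)`. -/
theorem log_sqrt_div_sub_half_add_le {s r w u : ℝ} (hs : 0 < s) (hr : 0 < r) (hw : 0 < w)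
    (hu : u ≤ 1 / 2) (hwr : |w / r - 1| ≤ u) :
    Real.log (√w / s) - 1 / 2 + r / (2 * √w ^ 2) ≤ (r / s ^ 2 - 1 + 2 * u ^ 2) / 2 := by
  have log_eq : Real.log (√w / s) = (Real.log (w / r) + Real.log (r / s ^ 2)) / 2 := by
    rw [← Real.log_mul (by positivity) (by positivity),
      show w / r * (r / s ^ 2) = (√w / s) ^ 2 by
        rw [div_pow, Real.sq_sqrt hw.le]; field_simp, Real.log_pow]
    push_cast; ring
  have ratio_eq : r / (2 * √w ^ 2) = (w / r)⁻¹ / 2 := by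
    rw [Real.sq_sqrt hw.le]; field_simp
  have log_r_le : Real.log (r / s ^ 2) ≤ r / s ^ 2 - 1 :=
    Real.log_le_sub_one_of_pos (by positivity)
  rw [log_eq, ratio_eq]
  have z_pos : 0 < w / r := by positivity
  generalize w / r = z at *
  have log_z_le : Real.log z ≤ z - 1 := Real.log_le_sub_one_of_pos z_pos
  have deviation_le : z - 1 + (z⁻¹ - 1) ≤ 2 * u ^ 2 := by
    have : z - 1 + (z⁻¹ - 1) = (z - 1) ^ 2 / z := by field_simp; ring
    rw [this, div_le_iff₀ z_pos]
    obtain ⟨hz0, hz1⟩ := abs_le.1 hwr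
    nlinarith [sq_le_sq' hz0 hz1, sq_nonneg u]
  linarith

theorem dTV_gaussianBN_le_of_close {n : ℕ} {π : Fin n → Finset (Fin n)}
    (hπ : ∀ i, ∀ j ∈ π i, j < i) (hG : HasDisjointParents π)
    (A A' : ∀ i, {j // j ∈ π i} → ℝ) {σ : Fin n → ℝ} (hσ : ∀ i, 0 < σ i)
    {w τ : Fin n → ℝ} {u ε : ℝ} (hu : u ≤ 1 / 2) (hε : 0 ≤ ε)
    (hA : ∀ i j, |A' i j - A i j| ≤ τ i * (σ i / √(nodeVar π A σ j.1)))
    (hw : ∀ i, |w i / resVar π A σ A' i - 1| ≤ u)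
    (hsum : ∑ i, ((π i).card * τ i ^ 2 + 2 * u ^ 2) / 2 ≤ ε ^ 2) :
    dTV (gaussianBN π A σ) (gaussianBN π A' fun i => √(w i)) ≤ ε := by
  have resVar_pos : ∀ i, 0 < resVar π A σ A' i := fun i =>
    (pow_pos (hσ i) 2).trans_le (sq_le_resVar hπ A hσ hG)
  have w_pos : ∀ i, 0 < w i := fun i => by
    have : 0 < w i / resVar π A σ A' i := by linarith [(abs_le.1 (hw i)).1]
    exact (div_pos_iff_of_pos_right (resVar_pos i)).1 this
  have term_le : ∀ i,
      Real.log (√(w i) / σ i) - 1 / 2 + resVar π A σ A' i / (2 * √(w i) ^ 2) ≤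
        ((π i).card * τ i ^ 2 + 2 * u ^ 2) / 2 := fun i => by
    have ratio_le : resVar π A σ A' i / σ i ^ 2 ≤ 1 + (π i).card * τ i ^ 2 :=
      (div_le_iff₀ (pow_pos (hσ i) 2)).2 (resVar_le hπ A hσ hG (hA i))
    linarith [log_sqrt_div_sub_half_add_le (hσ i) (resVar_pos i) (w_pos i) hu (hw i)]
  have divergence_le := (Finset.sum_le_sum fun i (_ : i ∈ Finset.univ) => term_le i).trans hsum
  refine (dTV_gaussianBN_le hπ A A' hσ fun i => Real.sqrt_pos.2 (w_pos i)).trans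
    (Real.sqrt_le_iff.2 ⟨hε, ?_⟩)
  linarith [Real.add_one_le_exp (-∑ i, (Real.log (√(w i) / σ i) - 1 / 2 +
    resVar π A σ A' i / (2 * √(w i) ^ 2)))]

end ParameterCloseness

/-! ### Tails of the recovered coefficients -/

section Measurability

variable {n : ℕ} {π : Fin n → Finset (Fin n)}

theorem measurable_batchSolution (S : Finset (Fin n)) (i : Fin n) (c : Fin S.card) :
    Measurable fun x : Fin S.card → Fin n → ℝ => batchSolution S i x c := by
  refine measurable_inv_mulVec (continuous_matrix fun r c => ?_) (by fun_prop) c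
  simp only [batchMatrix, of_apply]
  fun_prop

theorem measurable_batch {E : Type*} [MeasurableSpace E] {m₁ p : ℕ} (s : Fin (m₁ / p)) :
    Measurable fun x : Fin m₁ → E => batch x s := by
  unfold batch; fun_prop

theorem measurable_coeffRecovery {m₁ : ℕ} (i : Fin n) (j : {j // j ∈ π i}) :
    Measurable fun x : Fin m₁ → Fin n → ℝ => coeffRecovery π x i j :=
  measurable_sampleMedian.comp <| measurable_pi_lambda _ fun s =>
    (measurable_batchSolution (π i) i _).comp (measurable_batch s)

end Measurability

section NormalizedSystem

variable {n : ℕ} {π : Fin n → Finset (Fin n)}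

/-- The noise of node `i` (at `none`) and the values of its parents, all divided by their standard
deviations. -/
noncomputable def normalized (π : Fin n → Finset (Fin n)) (A : ∀ i, {j // j ∈ π i} → ℝ)
    (σ : Fin n → ℝ) (i : Fin n) (x : Fin n → ℝ) : Option (Fin (π i).card) → ℝ
  | none => ((1 - coeffMatrix π A) *ᵥ x) i / σ i
  | some c => x ((π i).orderEmbOfFin rfl c) / √(nodeVar π A σ ((π i).orderEmbOfFin rfl c))

/-- The matrix expressing the variables `normalized` through the noise variables `η`. -/
noncomputable def normalizedMatrix (π : Fin n → Finset (Fin n)) (A : ∀ i, {j // j ∈ π i} → ℝ)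
    (σ : Fin n → ℝ) (i : Fin n) : Matrix (Option (Fin (π i).card)) (Fin n) ℝ
  | none, a => (1 : Matrix (Fin n) (Fin n) ℝ) i a / σ i
  | some c, a => (1 - coeffMatrix π A)⁻¹ ((π i).orderEmbOfFin rfl c) a /
      √(nodeVar π A σ ((π i).orderEmbOfFin rfl c))

variable (A : ∀ i, {j // j ∈ π i} → ℝ)

theorem measurable_normalized (σ : Fin n → ℝ) (i : Fin n) : Measurable (normalized π A σ i) := by
  refine measurable_pi_lambda _ fun o => ?_
  cases o <;> simp only [normalized] <;> fun_prop

variable (hπ : ∀ i, ∀ j ∈ π i, j < i)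

include hπ

theorem normalized_inv_mulVec (σ : Fin n → ℝ) (i : Fin n) (η : Fin n → ℝ) :
    normalized π A σ i ((1 - coeffMatrix π A)⁻¹ *ᵥ η) = normalizedMatrix π A σ i *ᵥ η := by
  ext (_ | c)
  · simp only [normalized, mulVec_mulVec,
      mul_nonsing_inv _ (isUnit_det_one_sub_coeffMatrix hπ A), one_mulVec]
    simp [normalizedMatrix, mulVec, dotProduct, Matrix.one_apply, div_eq_inv_mul]
  · simp only [normalized, normalizedMatrix, mulVec, dotProduct, Finset.sum_div]
    exact Finset.sum_congr rfl fun a _ => by ring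

theorem normalizedMatrix_mul_eq_zero (hG : HasDisjointParents π) (σ : Fin n → ℝ) (i : Fin n)
    {o o' : Option (Fin (π i).card)} (hoo : o ≠ o') (a : Fin n) :
    normalizedMatrix π A σ i o a * normalizedMatrix π A σ i o' a = 0 := by
  have mem : ∀ c, (π i).orderEmbOfFin rfl c ∈ π i := Finset.orderEmbOfFin_mem _ _
  rcases o with _ | c <;> rcases o' with _ | c' <;>
    simp only [normalizedMatrix, div_mul_div_comm, div_eq_zero_iff]
  · exact absurd rfl hoo
  · exact .inl (one_apply_mul_inv_apply_eq_zero hπ A (mem c') a)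
  · exact .inl (mul_comm _ _ |>.trans (one_apply_mul_inv_apply_eq_zero hπ A (mem c) a))
  · exact .inl (inv_apply_mul_inv_apply_eq_zero hπ A hG (mem c) (mem c')
      (fun h => hoo (congrArg some (((π i).orderEmbOfFin rfl).injective h))) a)

variable {σ : Fin n → ℝ} (hσ : ∀ i, 0 < σ i)

include hσ

theorem sum_sq_mul_normalizedMatrix_sq (i : Fin n) (o : Option (Fin (π i).card)) :
    ∑ a, σ a ^ 2 * normalizedMatrix π A σ i o a ^ 2 = 1 := by
  cases o with
  | none =>
    have := (hσ i).ne'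
    simp [normalizedMatrix, Matrix.one_apply, ite_pow, div_pow, ← mul_div_assoc,
      ← Finset.sum_div, this]
  | some c =>
    have var_pos := nodeVar_pos hπ A hσ ((π i).orderEmbOfFin rfl c)
    simp only [normalizedMatrix, div_pow, Real.sq_sqrt var_pos.le, ← mul_div_assoc,
      ← Finset.sum_div]
    exact div_self var_pos.ne'

variable (hG : HasDisjointParents π)

include hG

/- Distinct parents have no common ancestor, hence involve disjoint sets of noise variables. -/
theorem measurePreserving_normalized (i : Fin n) :
    MeasurePreserving (normalized π A σ i) (gaussianBN π A σ)
      (stdPi (Option (Fin (π i).card))) := by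
  refine ⟨measurable_normalized A σ i, ?_⟩
  rw [gaussianBN, Measure.map_map (measurable_normalized A σ i) (by fun_prop)]
  simp only [Function.comp_def, normalized_inv_mulVec A hπ]
  rw [map_mulVec_pi_gaussianReal _ (normalizedMatrix π A σ i) fun o o' hoo =>
    Finset.sum_eq_zero fun a _ => by rw [normalizedMatrix_mul_eq_zero A hπ hG σ i hoo, mul_zero]]
  simp only [Real.coe_toNNReal _ (sq_nonneg _), sum_sq_mul_normalizedMatrix_sq A hπ hσ,
    Real.toNNReal_one]

/-- The linear system, with the variables `normalized` as entries, formed by a batch for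
node `i`. -/
noncomputable def normalizedSystem (π : Fin n → Finset (Fin n)) (A : ∀ i, {j // j ∈ π i} → ℝ)
    (σ : Fin n → ℝ) (i : Fin n) (x : Fin (π i).card → Fin n → ℝ)
    (o : Option (Fin (π i).card)) (r : Fin (π i).card) : ℝ :=
  normalized π A σ i (x r) o

theorem measurePreserving_normalizedSystem (i : Fin n) :
    MeasurePreserving (normalizedSystem π A σ i)
      (Measure.pi fun _ : Fin (π i).card => gaussianBN π A σ) (stdSystem (Fin (π i).card)) :=
  (measurePreserving_pi_swap fun _ _ => gaussianReal 0 1).comp <|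
    measurePreserving_pi _ _ fun _ => measurePreserving_normalized A hπ hσ hG i

end NormalizedSystem

section BatchSolution

variable {n : ℕ} {π : Fin n → Finset (Fin n)} (hπ : ∀ i, ∀ j ∈ π i, j < i)
  (A : ∀ i, {j // j ∈ π i} → ℝ) {σ : Fin n → ℝ} (hσ : ∀ i, 0 < σ i) (i : Fin n)

include hπ hσ in
theorem batchMatrix_eq (x : Fin (π i).card → Fin n → ℝ) :
    batchMatrix (π i) x = colMatrix (normalizedSystem π A σ i x) *
      diagonal fun c => √(nodeVar π A σ ((π i).orderEmbOfFin rfl c)) := by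
  ext r c
  rw [mul_diagonal]
  exact (div_mul_cancel₀ _ (Real.sqrt_pos.2 (nodeVar_pos hπ A hσ _)).ne').symm

include hσ in
theorem node_values_eq (x : Fin (π i).card → Fin n → ℝ) :
    (fun r => x r i) = batchMatrix (π i) x *ᵥ (fun c => A i ((π i).orderIsoOfFin rfl c)) +
      σ i • normalizedSystem π A σ i x none := by
  ext r
  have parents_eq : (batchMatrix (π i) x *ᵥ (fun c => A i ((π i).orderIsoOfFin rfl c))) r =
      ∑ j, A i j * x r j.1 := by
    simp only [mulVec, dotProduct, batchMatrix, of_apply]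
    rw [← Equiv.sum_comp ((π i).orderIsoOfFin rfl).toEquiv]
    exact Finset.sum_congr rfl fun c _ => mul_comm _ _
  rw [Pi.add_apply, Pi.smul_apply, smul_eq_mul, parents_eq]
  simp only [normalizedSystem, normalized]
  rw [one_sub_coeffMatrix_mulVec, mul_div_cancel₀ _ (hσ i).ne', add_sub_cancel]

include hπ hσ

theorem batchSolution_eq {x : Fin (π i).card → Fin n → ℝ}
    (hx : (colMatrix (normalizedSystem π A σ i x)).det ≠ 0) (c : Fin (π i).card) :
    batchSolution (π i) i x c = A i ((π i).orderIsoOfFin rfl c) +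
      σ i / √(nodeVar π A σ ((π i).orderEmbOfFin rfl c)) *
        systemSolution c (normalizedSystem π A σ i x) := by
  set s : Fin (π i).card → ℝ := fun c => √(nodeVar π A σ ((π i).orderEmbOfFin rfl c))
  have s_pos : ∀ c, 0 < s c := fun c => Real.sqrt_pos.2 (nodeVar_pos hπ A hσ _)
  have isUnit_s : IsUnit (diagonal s).det := by
    rw [det_diagonal]
    exact (Finset.prod_pos fun c _ => s_pos c).ne'.isUnit
  have isUnit_batch : IsUnit (batchMatrix (π i) x).det := by
    rw [batchMatrix_eq hπ A hσ, det_mul]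
    exact hx.isUnit.mul isUnit_s
  have inv_s : (diagonal s)⁻¹ = diagonal fun c => (s c)⁻¹ := by
    refine inv_eq_left_inv ?_
    rw [diagonal_mul_diagonal, ← diagonal_one]
    exact congrArg diagonal (funext fun c => inv_mul_cancel₀ (s_pos c).ne')
  rw [batchSolution, node_values_eq A hσ, mulVec_add, mulVec_mulVec,
    nonsing_inv_mul _ isUnit_batch, one_mulVec, mulVec_smul, batchMatrix_eq hπ A hσ,
    Matrix.mul_inv_rev, ← mulVec_mulVec, inv_s]
  simp only [Pi.add_apply, Pi.smul_apply, mulVec_diagonal, smul_eq_mul, systemSolution]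
  ring

theorem measure_batchSolution_tail_le (hG : HasDisjointParents π) (c : Fin (π i).card) {τ : ℝ}
    (h0 : 0 < τ) (h1 : τ ≤ 1) :
    let t := τ * (σ i / √(nodeVar π A σ ((π i).orderEmbOfFin rfl c)))
    let a := A i ((π i).orderIsoOfFin rfl c)
    (Measure.pi fun _ : Fin (π i).card => gaussianBN π A σ)
        {x | a + t < batchSolution (π i) i x c} ≤ ENNReal.ofReal (1 / 2 - anticoncConst * τ) ∧
    (Measure.pi fun _ : Fin (π i).card => gaussianBN π A σ)
        {x | batchSolution (π i) i x c < a - t} ≤ ENNReal.ofReal (1 / 2 - anticoncConst * τ) := by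
  intro t a
  have preserving := measurePreserving_normalizedSystem A hπ hσ hG i
  have measurable := measurable_systemSolution c
  obtain ⟨upper, lower⟩ := measure_systemSolution_tail_le c h0 h1
  rw [← preserving.measure_preimage
    (measurableSet_lt measurable_const measurable).nullMeasurableSet] at upper
  rw [← preserving.measure_preimage
    (measurableSet_lt measurable measurable_const).nullMeasurableSet] at lower
  have ae_det : ∀ᵐ x ∂(Measure.pi fun _ : Fin (π i).card => gaussianBN π A σ),
      (colMatrix (normalizedSystem π A σ i x)).det ≠ 0 :=
    preserving.quasiMeasurePreserving.ae ae_det_colMatrix_ne_zero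
  have scale_pos : 0 < σ i / √(nodeVar π A σ ((π i).orderEmbOfFin rfl c)) :=
    div_pos (hσ i) (Real.sqrt_pos.2 (nodeVar_pos hπ A hσ _))
  refine ⟨(measure_mono_ae ?_).trans upper, (measure_mono_ae ?_).trans lower⟩
  · filter_upwards [ae_det] with x det_ne (hx : a + t < _)
    rw [batchSolution_eq hπ A hσ i det_ne, add_lt_add_iff_left, mul_comm (_ / _)] at hx
    exact lt_of_mul_lt_mul_right hx scale_pos.le
  · filter_upwards [ae_det] with x det_ne (hx : _ < a - t)
    rw [batchSolution_eq hπ A hσ i det_ne, sub_eq_add_neg, add_lt_add_iff_left, ← neg_mul,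
      mul_comm (_ / _)] at hx
    exact lt_of_mul_lt_mul_right hx scale_pos.le

end BatchSolution

section CoefficientRecovery

theorem gaussianPDFReal_zero_one_le (x : ℝ) : gaussianPDFReal 0 1 x ≤ 1 / 2 := by
  simp only [gaussianPDFReal, NNReal.coe_one, mul_one, sub_zero]
  have inv_sqrt_le : (√(2 * Real.pi))⁻¹ ≤ 1 / 2 := by
    rw [one_div]
    gcongr
    exact Real.le_sqrt_of_sq_le (by nlinarith [Real.pi_gt_three])
  have exp_le : Real.exp (-x ^ 2 / 2) ≤ 1 := by
    rw [Real.exp_le_one_iff]; nlinarith [sq_nonneg x]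
  nlinarith [Real.exp_pos (-x ^ 2 / 2)]

theorem anticoncConst_le : anticoncConst ≤ 1 / 2 := by
  rw [anticoncConst]
  nlinarith [gaussianPDFReal_zero_one_le 1, gaussianPDFReal_zero_one_le 2,
    gaussianPDFReal_nonneg 0 1 1, gaussianPDFReal_nonneg 0 1 2]

theorem measurePreserving_batch {E : Type*} [MeasurableSpace E] (μ : Measure E)
    [IsProbabilityMeasure μ] (m₁ p : ℕ) :
    MeasurePreserving (fun x (s : Fin (m₁ / p)) => batch x s) (Measure.pi fun _ : Fin m₁ => μ)
      (Measure.pi fun _ : Fin (m₁ / p) => Measure.pi fun _ : Fin p => μ) := by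
  let index (q : Fin (m₁ / p) × Fin p) : Fin m₁ := batch id q.1 q.2
  have index_injective : index.Injective := by
    rintro ⟨s, r⟩ ⟨s', r'⟩ h
    have p_pos : 0 < p := r.pos
    have val_eq : p * s.1 + r.1 = p * s'.1 + r'.1 := congrArg Fin.val h
    have s_eq : s.1 = s'.1 := by
      simpa [Nat.mul_add_div p_pos, Nat.div_eq_of_lt r.2, Nat.div_eq_of_lt r'.2] using
        congrArg (· / p) val_eq
    rw [s_eq] at val_eq
    exact Prod.ext (Fin.ext s_eq) (Fin.ext (Nat.add_left_cancel val_eq))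
  exact (measurePreserving_pi_curry fun (_ : Fin (m₁ / p)) (_ : Fin p) => μ).comp
    (measurePreserving_pi_precomp (fun _ : Fin m₁ => μ) index_injective)

open scoped Classical in
theorem measurableSet_le_two_mul_card {ι E : Type*} [Fintype ι] [MeasurableSpace E] {S : Set E}
    (hS : MeasurableSet S) (k : ℕ) :
    MeasurableSet {y : ι → E | k ≤ 2 * (Finset.univ.filter fun s => y s ∈ S).card} := by
  simp only [Finset.card_filter]
  refine measurableSet_le measurable_const <| Measurable.const_mul
    (Finset.measurable_fun_sum _ fun s _ => ?_) 2
  exact Measurable.ite (measurable_pi_apply s hS) measurable_const measurable_const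

open scoped Classical in
theorem measure_le_two_mul_card_batch_mem_le {E : Type*} [MeasurableSpace E] (μ : Measure E)
    [IsProbabilityMeasure μ] (m₁ p : ℕ) {S : Set (Fin p → E)} (hS : MeasurableSet S) {γ : ℝ}
    (h0 : 0 ≤ γ) (h1 : γ ≤ 1 / 2)
    (hμ : (Measure.pi fun _ : Fin p => μ) S ≤ ENNReal.ofReal (1 / 2 - γ)) :
    (Measure.pi fun _ : Fin m₁ => μ)
        {x | m₁ / p ≤ 2 * (Finset.univ.filter fun s : Fin (m₁ / p) => batch x s ∈ S).card} ≤
      ENNReal.ofReal (Real.exp (-((m₁ / p : ℕ) * γ ^ 2))) := by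
  have majority := measure_pi_le_two_mul_card_le_exp _ (m₁ / p) hS h0 h1 hμ
  rwa [← (measurePreserving_batch μ m₁ p).measure_preimage
    (measurableSet_le_two_mul_card hS _).nullMeasurableSet] at majority

variable {n : ℕ} {π : Fin n → Finset (Fin n)}

theorem measure_coeffRecovery_tail_le (hπ : ∀ i, ∀ j ∈ π i, j < i) (hG : HasDisjointParents π)
    (A : ∀ i, {j // j ∈ π i} → ℝ) {σ : Fin n → ℝ} (hσ : ∀ i, 0 < σ i) {m₁ : ℕ} (i : Fin n)
    (j : {j // j ∈ π i}) (hm : (π i).card ≤ m₁) {τ : ℝ} (h0 : 0 < τ) (h1 : τ ≤ 1) :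
    (Measure.pi fun _ : Fin m₁ => gaussianBN π A σ)
        {x | τ * (σ i / √(nodeVar π A σ j.1)) < |coeffRecovery π x i j - A i j|} ≤
      ENNReal.ofReal (2 * Real.exp (-((m₁ / (π i).card : ℕ) * (anticoncConst * τ) ^ 2))) := by
  set c := ((π i).orderIsoOfFin rfl).symm j with hc
  have iso_c : (π i).orderIsoOfFin rfl c = j := by simp [hc]
  have emb_c : (π i).orderEmbOfFin rfl c = j.1 := by
    rw [← Finset.coe_orderIsoOfFin_apply, iso_c]
  obtain ⟨upper, lower⟩ := measure_batchSolution_tail_le hπ A hσ i hG c h0 h1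
  simp only [iso_c, emb_c] at upper lower
  set t := τ * (σ i / √(nodeVar π A σ j.1))
  have k_pos : 0 < m₁ / (π i).card := Nat.div_pos hm (Finset.card_pos.2 ⟨j.1, j.2⟩)
  have measurable := measurable_batchSolution (π i) i c
  have γ_nonneg : 0 ≤ anticoncConst * τ := mul_nonneg anticoncConst_pos.le h0.le
  have γ_le : anticoncConst * τ ≤ 1 / 2 := by nlinarith [anticoncConst_le, anticoncConst_pos]
  have upper_majority := measure_le_two_mul_card_batch_mem_le _ m₁ _
    (measurableSet_lt measurable_const measurable) γ_nonneg γ_le upper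
  have lower_majority := measure_le_two_mul_card_batch_mem_le _ m₁ _
    (measurableSet_lt measurable measurable_const) γ_nonneg γ_le lower
  rw [two_mul, ENNReal.ofReal_add (Real.exp_pos _).le (Real.exp_pos _).le]
  refine (measure_mono fun x (hx : t < _) => ?_).trans
    ((measure_union_le _ _).trans (add_le_add upper_majority lower_majority))
  rcases lt_abs.1 hx with h | h
  · exact .inl <| le_two_mul_card_of_lt_sampleMedian k_pos
      (x := fun s => batchSolution (π i) i (batch x s) c) (lt_sub_iff_add_lt'.1 h)
  · exact .inr <| le_two_mul_card_of_sampleMedian_lt k_pos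
      (x := fun s => batchSolution (π i) i (batch x s) c)
      (show coeffRecovery π x i j < A i j - t by linarith)

end CoefficientRecovery

/-! ### Sample complexity -/

section Deviation

theorem measurePreserving_halves {E : Type*} [MeasurableSpace E] (μ : Measure E)
    [IsProbabilityMeasure μ] (m : ℕ) :
    MeasurePreserving (fun x => (firstHalf x, secondHalf x)) (Measure.pi fun _ : Fin m => μ)
      ((Measure.pi fun _ : Fin (m / 2) => μ).prod (Measure.pi fun _ : Fin (m - m / 2) => μ)) := by
  let index : Fin (m / 2) ⊕ Fin (m - m / 2) → Fin m := Sum.elim (firstHalf id) (secondHalf id)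
  have index_injective : index.Injective := by
    rintro (a | a) (b | b) h <;> have val_eq := congrArg Fin.val h <;>
      simp only [index, Sum.elim_inl, Sum.elim_inr, firstHalf, secondHalf, id] at val_eq
    · exact congrArg Sum.inl (Fin.ext val_eq)
    · lia
    · lia
    · exact congrArg Sum.inr (Fin.ext (Nat.add_left_cancel val_eq))
  exact (measurePreserving_sumPiEquivProdPi fun _ : Fin (m / 2) ⊕ Fin (m - m / 2) => μ).comp
    (measurePreserving_pi_precomp (fun _ : Fin m => μ) index_injective)

variable {n : ℕ} {π : Fin n → Finset (Fin n)} (A : ∀ i, {j // j ∈ π i} → ℝ)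

theorem measurePreserving_residual_div (σ : Fin n → ℝ) (A' : ∀ i, {j // j ∈ π i} → ℝ) {i : Fin n}
    (hr : 0 < resVar π A σ A' i) :
    MeasurePreserving (fun x => ((1 - coeffMatrix π A') *ᵥ x) i / √(resVar π A σ A' i))
      (gaussianBN π A σ) (gaussianReal 0 1) := by
  refine ⟨by fun_prop, ?_⟩
  have map_div := congrArg (Measure.map fun y : ℝ => y / √(resVar π A σ A' i))
    (map_residual_gaussianBN A σ A' i)
  rw [Measure.map_map (by fun_prop) (by fun_prop), gaussianReal_map_div_const, zero_div]
    at map_div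
  convert map_div using 2
  · rfl
  · apply NNReal.eq
    simp [Real.coe_toNNReal _ hr.le, Real.sq_sqrt hr.le, hr.ne']

theorem measure_varianceRecovery_tail_eq (σ : Fin n → ℝ) (A' : ∀ i, {j // j ∈ π i} → ℝ) {i : Fin n}
    (hr : 0 < resVar π A σ A' i) (m₂ : ℕ) (u : ℝ) :
    (Measure.pi fun _ : Fin m₂ => gaussianBN π A σ)
      {y | u < |varianceRecovery π A' y i / resVar π A σ A' i - 1|} = chiSqTail m₂ u := by
  have preserving := measurePreserving_pi _ _ fun _ : Fin m₂ =>
    measurePreserving_residual_div A σ A' hr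
  rw [chiSqTail, ← preserving.measure_preimage
    (measurableSet_lt measurable_const (by fun_prop)).nullMeasurableSet]
  congr 1
  ext y
  simp only [Set.mem_ofPred_eq, Set.mem_preimage, varianceRecovery, div_pow,
    Real.sq_sqrt hr.le, ← Finset.sum_div, one_sub_coeffMatrix_mulVec]
  rw [div_right_comm]

variable (hπ : ∀ i, ∀ j ∈ π i, j < i) (hG : HasDisjointParents π)

include hπ hG

theorem measurableSet_varianceRecovery_tail (σ : Fin n → ℝ) (i : Fin n) (u : ℝ) (m₁ m₂ : ℕ) :
    MeasurableSet {z : (Fin m₁ → Fin n → ℝ) × (Fin m₂ → Fin n → ℝ) |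
      u < |varianceRecovery π (coeffRecovery π z.1) z.2 i /
        resVar π A σ (coeffRecovery π z.1) i - 1|} := by
  have measurable_coeff : ∀ j, Measurable fun z : (Fin m₁ → Fin n → ℝ) × (Fin m₂ → Fin n → ℝ) =>
      coeffRecovery π z.1 i j := fun j => (measurable_coeffRecovery i j).comp measurable_fst
  simp only [resVar_eq hπ A hG, varianceRecovery]
  refine measurableSet_lt measurable_const (Measurable.abs (Measurable.sub_const
    (Measurable.div (Measurable.div_const ?_ _) ?_) _)) <;> fun_prop

variable {σ : Fin n → ℝ} (hσ : ∀ i, 0 < σ i)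

include hσ

theorem measure_varEst_tail_eq (m : ℕ) (i : Fin n) (u : ℝ) :
    (Measure.pi fun _ : Fin m => gaussianBN π A σ)
      {x | u < |varEst π x i / resVar π A σ (coeffEst π x) i - 1|} =
        chiSqTail (m - m / 2) u := by
  have measurable := measurableSet_varianceRecovery_tail A hπ hG σ i u (m / 2) (m - m / 2)
  refine ((measurePreserving_halves (gaussianBN π A σ) m).measure_preimage
    measurable.nullMeasurableSet).trans ?_
  rw [Measure.prod_apply measurable]
  refine (lintegral_congr fun x => measure_varianceRecovery_tail_eq A σ (coeffRecovery π x)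
    ((pow_pos (hσ i) 2).trans_le (sq_le_resVar hπ A hσ hG)) _ u).trans ?_
  simp

theorem measure_coeffEst_tail_le {m : ℕ} (i : Fin n) (j : {j // j ∈ π i})
    (hm : (π i).card ≤ m / 2) {τ : ℝ} (h0 : 0 < τ) (h1 : τ ≤ 1) :
    (Measure.pi fun _ : Fin m => gaussianBN π A σ)
        {x | τ * (σ i / √(nodeVar π A σ j.1)) < |coeffEst π x i j - A i j|} ≤
      ENNReal.ofReal (2 * Real.exp (-((m / 2 / (π i).card : ℕ) * (anticoncConst * τ) ^ 2))) := by
  have preserving := measurePreserving_fst.comp (measurePreserving_halves (gaussianBN π A σ) m)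
  refine (preserving.measure_preimage (measurableSet_lt measurable_const
    ((measurable_coeffRecovery i j).sub_const _).abs).nullMeasurableSet).trans_le ?_
  exact measure_coeffRecovery_tail_le hπ hG A hσ i j hm h0 h1

end Deviation

section SampleComplexity

variable {n : ℕ} {π : Fin n → Finset (Fin n)}

/-- The estimates computed from the sample `x` are within the tolerances `τ` (for the coefficients,
in units of `σ i / √Var X j`) and `u` (relative, for the variances of the residuals). -/
def IsAccurate (π : Fin n → Finset (Fin n)) (A : ∀ i, {j // j ∈ π i} → ℝ) (σ τ : Fin n → ℝ)
    (u : ℝ) {m : ℕ} (x : Fin m → Fin n → ℝ) : Prop :=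
  (∀ i j, |coeffEst π x i j - A i j| ≤ τ i * (σ i / √(nodeVar π A σ j.1))) ∧
    ∀ i, |varEst π x i / resVar π A σ (coeffEst π x) i - 1| ≤ u

variable (hπ : ∀ i, ∀ j ∈ π i, j < i) (hG : HasDisjointParents π)
  (A : ∀ i, {j // j ∈ π i} → ℝ) {σ : Fin n → ℝ} (hσ : ∀ i, 0 < σ i) {τ : Fin n → ℝ} {u : ℝ}
  {m : ℕ}

include hπ hG hσ

theorem measure_not_isAccurate_le (hτ0 : ∀ i, 0 < (π i).card → 0 < τ i) (hτ1 : ∀ i, τ i ≤ 1)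
    (hm : ∀ i, (π i).card ≤ m / 2) :
    (Measure.pi fun _ : Fin m => gaussianBN π A σ) {x | ¬ IsAccurate π A σ τ u x} ≤
      ∑ i, (π i).card * ENNReal.ofReal
        (2 * Real.exp (-((m / 2 / (π i).card : ℕ) * (anticoncConst * τ i) ^ 2))) +
      n * chiSqTail (m - m / 2) u := by
  have not_isAccurate_subset : {x : Fin m → Fin n → ℝ | ¬ IsAccurate π A σ τ u x} ⊆
      (⋃ i, ⋃ j, {x | τ i * (σ i / √(nodeVar π A σ j.1)) < |coeffEst π x i j - A i j|}) ∪
        ⋃ i, {x | u < |varEst π x i / resVar π A σ (coeffEst π x) i - 1|} := by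
    intro x hx
    simp only [Set.mem_ofPred_eq, IsAccurate, not_and_or, not_forall, not_le] at hx
    simpa only [Set.mem_union, Set.mem_iUnion, Set.mem_ofPred_eq] using hx
  refine (measure_mono not_isAccurate_subset).trans
    ((measure_union_le _ _).trans (add_le_add ?_ ?_))
  · refine (measure_iUnion_fintype_le _ _).trans (Finset.sum_le_sum fun i _ => ?_)
    refine (measure_iUnion_fintype_le _ _).trans ((Finset.sum_le_sum fun j _ =>
      measure_coeffEst_tail_le A hπ hG hσ i j (hm i)
        (hτ0 i (Finset.card_pos.2 ⟨j.1, j.2⟩)) (hτ1 i)).trans_eq ?_)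
    simp
  · refine (measure_iUnion_fintype_le _ _).trans_eq ?_
    simp [measure_varEst_tail_eq A hπ hG hσ]

theorem learnsWithin_of_measure_not_isAccurate_le {ε δ : ℝ} (hu : u ≤ 1 / 2) (hε : 0 ≤ ε)
    (hδ : 0 ≤ δ) (hsum : ∑ i, ((π i).card * τ i ^ 2 + 2 * u ^ 2) / 2 ≤ ε ^ 2)
    (h : (Measure.pi fun _ : Fin m => gaussianBN π A σ) {x | ¬ IsAccurate π A σ τ u x} ≤
      ENNReal.ofReal δ) : LearnsWithin π A σ m ε δ := by
  set μ := Measure.pi fun _ : Fin m => gaussianBN π A σ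
  have one_le : 1 ≤ μ {x | IsAccurate π A σ τ u x} + μ {x | ¬ IsAccurate π A σ τ u x} := by
    rw [← measure_univ (μ := μ)]
    exact (measure_mono fun x _ => em _).trans (measure_union_le _ _)
  calc ENNReal.ofReal (1 - δ) ≤ μ {x | IsAccurate π A σ τ u x} := by
        rw [ENNReal.ofReal_sub _ hδ, ENNReal.ofReal_one, tsub_le_iff_right]
        exact one_le.trans (add_le_add le_rfl h)
    _ ≤ _ := measure_mono fun x hx =>
        dTV_gaussianBN_le_of_close hπ hG A _ hσ hu hε hx.1 hx.2 hsum

theorem learnsWithin_of_le_exponents {L ε δ : ℝ} (hu0 : 0 < u) (hu : u ≤ 1 / 2) (hε : 0 ≤ ε)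
    (hδ : 0 ≤ δ) (hτ0 : ∀ i, 0 < (π i).card → 0 < τ i) (hτ1 : ∀ i, τ i ≤ 1)
    (hcard : ∀ i, (π i).card ≤ m / 2) (hm : 0 < m)
    (hsum : ∑ i, ((π i).card * τ i ^ 2 + 2 * u ^ 2) / 2 ≤ ε ^ 2)
    (hcoeff : ∀ i, 0 < (π i).card → L ≤ (m / 2 / (π i).card : ℕ) * (anticoncConst * τ i) ^ 2)
    (hvar : L ≤ (m - m / 2 : ℕ) * u ^ 2 / 8)
    (hL : ((n : ℝ) + 1) * (n * (2 * Real.exp (-L))) ≤ δ) : LearnsWithin π A σ m ε δ := by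
  refine learnsWithin_of_measure_not_isAccurate_le hπ hG A hσ hu hε hδ hsum
    ((measure_not_isAccurate_le hπ hG A hσ hτ0 hτ1 hcard).trans ?_)
  have coeff_le : ∀ i, ((π i).card : ENNReal) * ENNReal.ofReal
      (2 * Real.exp (-((m / 2 / (π i).card : ℕ) * (anticoncConst * τ i) ^ 2))) ≤
        ENNReal.ofReal (n * (2 * Real.exp (-L))) := fun i => by
    rcases Nat.eq_zero_or_pos (π i).card with hi | hi
    · simp [hi]
    rw [ENNReal.ofReal_mul (Nat.cast_nonneg n), ENNReal.ofReal_natCast]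
    gcongr
    · exact (Finset.card_le_univ (π i)).trans_eq (Fintype.card_fin n)
    · exact hcoeff i hi
  have var_le : (n : ENNReal) * chiSqTail (m - m / 2) u ≤
      ENNReal.ofReal (n * (2 * Real.exp (-L))) := by
    rw [ENNReal.ofReal_mul (Nat.cast_nonneg n), ENNReal.ofReal_natCast]
    gcongr
    refine (chiSqTail_le (by lia) hu0 (by linarith)).trans ?_
    gcongr
  refine (add_le_add (Finset.sum_le_sum fun i _ => coeff_le i) var_le).trans ?_
  rw [Finset.sum_const, Finset.card_univ, Fintype.card_fin, nsmul_eq_mul,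
    ← ENNReal.ofReal_natCast, ← ENNReal.ofReal_mul (by positivity),
    ← ENNReal.ofReal_add (by positivity) (by positivity)]
  exact ENNReal.ofReal_le_ofReal (by linarith)

omit hπ hG hσ

theorem sum_sq_card_le {d : ℕ} (hd : ∀ i, (π i).card ≤ d) :
    ∑ i, ((π i).card : ℝ) ^ 2 ≤ n * max 1 (avgInDegree π * d) := by
  rcases Nat.eq_zero_or_pos n with rfl | hn
  · simp
  calc ∑ i, ((π i).card : ℝ) ^ 2 ≤ ∑ i, ((π i).card : ℝ) * d := by
        simp only [sq]
        gcongr with i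
        exact hd i
    _ = n * (avgInDegree π * d) := by
        rw [← Finset.sum_mul, avgInDegree]; field_simp
    _ ≤ _ := by gcongr; exact le_max_right _ _

theorem natCast_le_sum_sq {ι : Type*} [Fintype ι] (f : ι → ℕ) (i : ι) :
    (f i : ℝ) ≤ ∑ i, (f i : ℝ) ^ 2 := by
  calc (f i : ℝ) ≤ (f i : ℝ) ^ 2 := by exact_mod_cast Nat.le_self_pow two_ne_zero (f i)
    _ ≤ _ := Finset.single_le_sum (f := fun i => (f i : ℝ) ^ 2) (fun _ _ => by positivity)
        (Finset.mem_univ i)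

theorem failure_prob_le {n ε δ : ℝ} (hn : 1 ≤ n) (hε0 : 0 < ε) (hε1 : ε < 1) (hδ0 : 0 < δ)
    (hδ1 : δ < 1) (h2 : 2 ≤ n / (ε * δ)) :
    (n + 1) * (n * (2 * Real.exp (-(4 * Real.log (n / (ε * δ)))))) ≤ δ := by
  have hεδ : 0 < ε * δ := mul_pos hε0 hδ0
  have exp_eq : Real.exp (-(4 * Real.log (n / (ε * δ)))) = (ε * δ / n) ^ 4 := by
    rw [← mul_neg, ← Real.log_inv, inv_div, mul_comm, Real.exp_mul,
      Real.exp_log (by positivity)]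
    norm_cast
  rw [exp_eq]
  set t := ε * δ / n with ht
  have mul_t : n * t = ε * δ := by rw [ht]; field_simp
  have t_pos : 0 < t := by positivity
  have t_le : t ≤ 1 / 2 := by
    rw [ht, div_le_iff₀ (by linarith)]
    rw [le_div_iff₀ hεδ] at h2
    linarith
  calc (n + 1) * (n * (2 * t ^ 4)) ≤ 2 * n * (n * (2 * t ^ 4)) := by gcongr; linarith
    _ = (ε * δ) ^ 2 * (4 * t ^ 2) := by rw [← mul_t]; ring
    _ ≤ (ε * δ) ^ 2 * 1 := by gcongr; nlinarith
    _ ≤ δ := by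
        have εδ_le : ε * δ ≤ δ := by nlinarith
        nlinarith

theorem div_le_cast_half_div {m p : ℕ} (h : 0 < p) (hpm : p ≤ m / 2) :
    (m : ℝ) / (8 * p) ≤ (m / 2 / p : ℕ) := by
  have quotient_pos : 1 ≤ m / 2 / p := Nat.div_pos hpm h
  have half_lt : m / 2 < p * (m / 2 / p) + p := by
    rw [← Nat.mul_add_one]; exact Nat.lt_mul_div_succ (m / 2) h
  have p_le : p ≤ p * (m / 2 / p) := Nat.le_mul_of_pos_right _ quotient_pos
  rw [div_le_iff₀ (by positivity)]
  have : m ≤ m / 2 / p * (8 * p) := by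
    calc m ≤ 8 * (p * (m / 2 / p)) := by lia
      _ = _ := by ring
  exact_mod_cast this

/-- The tolerance for the coefficients of a node with `p` parents. It makes
`∑ᵢ pᵢ τᵢ² = ε² (∑ᵢ pᵢ²) / N`, and the required number of batches of `p` samples is
of order `1 / τ²`, so that every node needs a sample of the same order `N / ε²`. -/
noncomputable def coeffTol (ε N : ℝ) (p : ℕ) : ℝ := ε * √(p / N)

/-- The relative tolerance for the `n` residual variances. -/
noncomputable def varTol (ε : ℝ) (n : ℕ) : ℝ := ε / (2 * √n)

section Tolerances

variable {ε N : ℝ}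

theorem coeffTol_sq (hN : 0 ≤ N) (p : ℕ) : coeffTol ε N p ^ 2 = ε ^ 2 * (p / N) := by
  rw [coeffTol, mul_pow, Real.sq_sqrt (by positivity)]

theorem coeffTol_pos (hε : 0 < ε) (hN : 0 < N) {p : ℕ} (hp : 0 < p) : 0 < coeffTol ε N p := by
  rw [coeffTol]; positivity

theorem coeffTol_le_one (hε : ε ≤ 1) {p : ℕ} (hp : p ≤ N) : coeffTol ε N p ≤ 1 := by
  refine mul_le_one₀ hε (Real.sqrt_nonneg _) (Real.sqrt_le_one.2 ?_)
  exact div_le_one_of_le₀ hp ((Nat.cast_nonneg p).trans hp)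

theorem varTol_sq (ε : ℝ) (n : ℕ) : varTol ε n ^ 2 = ε ^ 2 / (4 * n) := by
  rw [varTol, div_pow, mul_pow, Real.sq_sqrt (Nat.cast_nonneg n)]; norm_num

theorem varTol_pos (hε : 0 < ε) (hn : 0 < n) : 0 < varTol ε n := by
  rw [varTol]; positivity

theorem varTol_le_half (hε : ε ≤ 1) (hn : 0 < n) : varTol ε n ≤ 1 / 2 := by
  have one_le_sqrt : 1 ≤ √(n : ℝ) := Real.one_le_sqrt.2 (by exact_mod_cast hn)
  rw [varTol, div_le_iff₀ (by positivity)]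
  linarith

theorem sum_tolerances_le (hn : 0 < n) (hN : 0 < N) {p : Fin n → ℕ}
    (hp : ∑ i, (p i : ℝ) ^ 2 ≤ N) :
    ∑ i, (p i * coeffTol ε N (p i) ^ 2 + 2 * varTol ε n ^ 2) / 2 ≤ ε ^ 2 := by
  have sum_eq : ∑ i, (p i * coeffTol ε N (p i) ^ 2 + 2 * varTol ε n ^ 2) / 2 =
      (ε ^ 2 * ((∑ i, (p i : ℝ) ^ 2) / N) + n * (2 * varTol ε n ^ 2)) / 2 := by
    rw [← Finset.sum_div, Finset.sum_add_distrib]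
    simp only [coeffTol_sq hN.le, Finset.sum_const, Finset.card_univ, Fintype.card_fin,
      nsmul_eq_mul, Finset.sum_div, Finset.mul_sum]
    congr 2
    exact Finset.sum_congr rfl fun i _ => by ring
  have var_eq : n * (2 * varTol ε n ^ 2) = ε ^ 2 / 2 := by rw [varTol_sq]; field_simp; ring
  have ratio_le : (∑ i, (p i : ℝ) ^ 2) / N ≤ 1 := (div_le_one hN).2 hp
  rw [sum_eq, var_eq]
  nlinarith [sq_nonneg ε]

theorem le_batches_mul_coeffTol_sq {c C L : ℝ} (hN : 0 < N) (hL : 0 ≤ L) (hC : 32 ≤ C * c ^ 2)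
    {p : ℕ} (hp : 0 < p) (hpm : p ≤ m / 2) (hm : C * L * N ≤ m * ε ^ 2) :
    4 * L ≤ (m / 2 / p : ℕ) * (c * coeffTol ε N p) ^ 2 := by
  rw [mul_pow, coeffTol_sq hN.le]
  calc 4 * L ≤ C * c ^ 2 / 8 * L := by nlinarith
    _ = C * L * N * (c ^ 2 / (8 * N)) := by field_simp
    _ ≤ m * ε ^ 2 * (c ^ 2 / (8 * N)) := by gcongr
    _ = m / (8 * p) * (c ^ 2 * (ε ^ 2 * (p / N))) := by field_simp
    _ ≤ _ := by
        gcongr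
        exact div_le_cast_half_div hp hpm

theorem le_mul_varTol_sq {C L : ℝ} (hn : 0 < n) (hL : 0 ≤ L) (hC : 256 ≤ C)
    (hm : C * L * n ≤ m * ε ^ 2) : 4 * L ≤ (m - m / 2 : ℕ) * varTol ε n ^ 2 / 8 := by
  have half_le : (m : ℝ) / 2 ≤ (m - m / 2 : ℕ) := by
    rw [div_le_iff₀ two_pos]
    exact_mod_cast (by lia : m ≤ (m - m / 2) * 2)
  rw [varTol_sq]
  calc 4 * L ≤ C * L / 64 := by nlinarith
    _ = C * L * n * (1 / (64 * n)) := by field_simp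
    _ ≤ m * ε ^ 2 * (1 / (64 * n)) := by gcongr
    _ = (m / 2) * (ε ^ 2 / (4 * n)) / 8 := by field_simp; ring
    _ ≤ _ := by gcongr

end Tolerances

include hπ hG hσ in
theorem learnsWithin_of_two_le {d : ℕ} (hd : ∀ i, (π i).card ≤ d) {ε δ C : ℝ} (hε0 : 0 < ε)
    (hε1 : ε < 1) (hδ0 : 0 < δ) (hδ1 : δ < 1) (h2 : 2 ≤ n / (ε * δ)) (hC1 : 256 ≤ C)
    (hC2 : 32 ≤ C * anticoncConst ^ 2)
    (hm : C * (n * max 1 (avgInDegree π * d) / ε ^ 2) * Real.log (n / (ε * δ)) ≤ m) :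
    LearnsWithin π A σ m ε δ := by
  have n_pos : 0 < n := Nat.pos_of_ne_zero fun hn => by norm_num [hn] at h2
  have one_le_n : (1 : ℝ) ≤ n := by exact_mod_cast n_pos
  set N : ℝ := n * max 1 (avgInDegree π * d)
  have n_le_N : (n : ℝ) ≤ N := le_mul_of_one_le_right (by linarith) (le_max_left _ _)
  have N_pos : 0 < N := by linarith
  have sum_sq_le : ∑ i, ((π i).card : ℝ) ^ 2 ≤ N := sum_sq_card_le hd
  have card_le_N : ∀ i, ((π i).card : ℝ) ≤ N := fun i =>
    (natCast_le_sum_sq (fun i => (π i).card) i).trans sum_sq_le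
  set L := Real.log (n / (ε * δ))
  have half_le_L : 1 / 2 ≤ L := by
    linarith [Real.log_le_log two_pos h2, Real.log_two_gt_d9]
  have sample_size : C * L * N ≤ m * ε ^ 2 := by
    rwa [mul_right_comm, ← mul_div_assoc, div_le_iff₀ (by positivity)] at hm
  have two_mul_N_le : 2 * N ≤ m := by
    have : (m : ℝ) * ε ^ 2 ≤ m := mul_le_of_le_one_right (Nat.cast_nonneg m) (by nlinarith)
    nlinarith [mul_le_mul hC1 half_le_L (by norm_num) (by linarith)]
  have card_le_half : ∀ i, (π i).card ≤ m / 2 := fun i => by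
    have : 2 * (π i).card ≤ m := by
      exact_mod_cast (by linarith [card_le_N i] : 2 * ((π i).card : ℝ) ≤ m)
    lia
  have m_pos : 0 < m := by exact_mod_cast (by linarith : (0 : ℝ) < m)
  have n_sample_size : C * L * n ≤ m * ε ^ 2 :=
    (mul_le_mul_of_nonneg_left n_le_N (by nlinarith)).trans sample_size
  exact learnsWithin_of_le_exponents hπ hG A hσ (varTol_pos hε0 n_pos)
    (varTol_le_half hε1.le n_pos) hε0.le hδ0.le (fun i => coeffTol_pos hε0 N_pos)
    (fun i => coeffTol_le_one hε1.le (card_le_N i)) card_le_half m_pos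
    (sum_tolerances_le n_pos N_pos sum_sq_le)
    (fun i hi => le_batches_mul_coeffTol_sq N_pos (by linarith) hC2 hi (card_le_half i) sample_size)
    (le_mul_varTol_sq n_pos (by linarith) hC1 n_sample_size)
    (failure_prob_le one_le_n hε0 hε1 hδ0 hδ1 h2)

include hσ

theorem learnsWithin_of_forall_eq_empty (hempty : ∀ i, π i = ∅) {ε δ : ℝ} (hε : 0 ≤ ε)
    (hδ : 0 ≤ δ) (hn : (n : ℝ) / 4 ≤ ε ^ 2)
    (htail : n * chiSqTail (m - m / 2) (1 / 2) ≤ ENNReal.ofReal δ) : LearnsWithin π A σ m ε δ := by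
  have hπ : ∀ i, ∀ j ∈ π i, j < i := fun i => by simp [hempty i]
  have hG : HasDisjointParents π := fun i => by simp [hempty i]
  refine learnsWithin_of_measure_not_isAccurate_le hπ hG A hσ (τ := 0) (u := 1 / 2) le_rfl hε hδ ?_
    ((measure_not_isAccurate_le hπ hG A hσ (fun i => by simp [hempty i]) (by simp)
      (by simp [hempty])).trans ?_)
  · simp only [hempty, Finset.card_empty, Nat.cast_zero, zero_mul, zero_add, Finset.sum_const,
      Finset.card_univ, Fintype.card_fin, nsmul_eq_mul]
    linarith
  · simpa [hempty] using htail

theorem learnsWithin_of_lt_two (hempty : ∀ i, π i = ∅) {ε δ C κ : ℝ} (hε0 : 0 < ε) (hε1 : ε < 1)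
    (hδ0 : 0 < δ) (hδ1 : δ < 1) (h2 : n / (ε * δ) < 2) (hκ : 0 < κ)
    (hchi : ∀ k : ℕ, 0 < k → chiSqTail k (1 / 2) ≤ ENNReal.ofReal (Real.exp (-(κ * k))))
    (hC : 2 ≤ C * κ) (hm : C * (n / ε ^ 2) * Real.log (n / (ε * δ)) ≤ m) :
    LearnsWithin π A σ m ε δ := by
  rw [div_lt_iff₀ (by positivity)] at h2
  have n_lt : n < 2 := by exact_mod_cast (by nlinarith : (n : ℝ) < 2)
  obtain rfl | rfl : n = 0 ∨ n = 1 := by lia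
  · exact learnsWithin_of_forall_eq_empty A hσ hempty hε0.le hδ0.le
      (by simpa using sq_nonneg ε) (by simp)
  rw [Nat.cast_one] at h2 hm
  have C_pos : 0 < C := by nlinarith
  have log_δ_neg : Real.log δ < 0 := Real.log_neg hδ0 hδ1
  have neg_log_le : C * -Real.log δ ≤ m := by
    refine le_trans (mul_le_mul ?_ ?_ (by linarith) (by positivity)) hm
    · exact le_mul_of_one_le_right C_pos.le ((one_le_div (by positivity)).2 (by nlinarith))
    · rw [one_div, Real.log_inv, Real.log_mul hε0.ne' hδ0.ne']
      linarith [Real.log_neg hε0 hε1]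
  have m_pos : 0 < m := by exact_mod_cast (by nlinarith : (0 : ℝ) < m)
  have le_two_mul : (m : ℝ) ≤ 2 * (m - m / 2 : ℕ) := by
    exact_mod_cast (by lia : m ≤ 2 * (m - m / 2))
  refine learnsWithin_of_forall_eq_empty A hσ hempty hε0.le hδ0.le (by norm_num; nlinarith) ?_
  rw [Nat.cast_one, one_mul]
  refine (hchi _ (by lia)).trans (ENNReal.ofReal_le_ofReal ?_)
  rw [← Real.le_log_iff_exp_le hδ0]
  nlinarith

omit hσ

theorem exists_learnsWithin_const : ∃ C : ℝ, 256 ≤ C ∧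
    ∀ (ε δ : ℝ), 0 < ε → ε < 1 → 0 < δ → δ < 1 →
      ∀ (n d : ℕ) (π : Fin n → Finset (Fin n)),
        (∀ i, ∀ j ∈ π i, j < i) → (∀ i, (π i).card ≤ d) → HasDisjointParents π →
        ∀ (A : ∀ i, {j // j ∈ π i} → ℝ) (σ : Fin n → ℝ), (∀ i, 0 < σ i) →
        ∀ m : ℕ, C * (n * max 1 (avgInDegree π * d) / ε ^ 2) * Real.log (n / (ε * δ)) ≤ m →
          LearnsWithin π A σ m ε δ := by
  obtain ⟨κ, hκ, hchi⟩ := exists_chiSqTail_half_le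
  have hc := anticoncConst_pos
  have coeff_term_pos : 0 < 32 / anticoncConst ^ 2 := by positivity
  have chi_term_pos : 0 < 2 / κ := by positivity
  refine ⟨256 + 32 / anticoncConst ^ 2 + 2 / κ, by linarith, ?_⟩
  set C := 256 + 32 / anticoncConst ^ 2 + 2 / κ
  intro ε δ hε0 hε1 hδ0 hδ1 n d π hπ hd hG A σ hσ m hm
  by_cases h2 : 2 ≤ n / (ε * δ)
  · exact learnsWithin_of_two_le hπ hG A hσ hd hε0 hε1 hδ0 hδ1 h2 (by linarith)
      (by rw [← div_le_iff₀ (by positivity)]; linarith) hm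
  have n_lt : n < 2 := by
    rw [not_le, div_lt_iff₀ (by positivity)] at h2
    exact_mod_cast (by nlinarith : (n : ℝ) < 2)
  have hempty : ∀ i, π i = ∅ := fun i => Finset.eq_empty_of_forall_notMem fun j hj => by
    have := hπ i j hj
    lia
  refine learnsWithin_of_lt_two (C := C) A hσ hempty hε0 hε1 hδ0 hδ1 (not_le.1 h2) hκ hchi
    (by rw [← div_le_iff₀ hκ]; linarith) ?_
  simpa [avgInDegree, hempty] using hm

end SampleComplexity

/-! ### Computation trees -/

namespace ArithTree

variable {κ ι β : Type}

/-- Renames the registers read by a tree. -/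
def rename : {α β : Type} → (α → β) → ArithTree κ α → ArithTree κ β
  | _, _, f, .ret out => .ret (f ∘ out)
  | _, _, f, .const c next => .const c (next.rename (Option.map f))
  | _, _, f, .op o a b next => .op o (f a) (f b) (next.rename (Option.map f))
  | _, _, f, .branch a b lt ge => .branch (f a) (f b) (lt.rename f) (ge.rename f)

theorem cost_rename : ∀ {α β : Type} (f : α → β) (t : ArithTree κ α), (t.rename f).cost = t.cost
  | _, _, _, .ret _ => rfl
  | _, _, _, .const _ next => by simp [rename, cost, cost_rename _ next]
  | _, _, _, .op _ _ _ next => by simp [rename, cost, cost_rename _ next]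
  | _, _, _, .branch _ _ lt ge => by simp [rename, cost, cost_rename _ lt, cost_rename _ ge]

theorem elim_comp_optionMap {α β : Type} (f : α → β) (x : ℝ) (v : β → ℝ) :
    (fun r : Option β => r.elim x v) ∘ Option.map f = fun r => r.elim x (v ∘ f) := by
  funext r; cases r <;> rfl

theorem eval_rename : ∀ {α β : Type} (f : α → β) (t : ArithTree κ α) (v : β → ℝ),
    (t.rename f).eval v = t.eval (v ∘ f)
  | _, _, _, .ret _, _ => rfl
  | _, _, _, .const _ next, _ => by
    simp only [rename, eval, eval_rename _ next, elim_comp_optionMap]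
  | _, _, _, .op _ _ _ next, _ => by
    simp only [rename, eval, eval_rename _ next, elim_comp_optionMap, Function.comp]
  | _, _, _, .branch _ _ lt ge, _ => by
    simp only [rename, eval, eval_rename _ lt, eval_rename _ ge, Function.comp]

/-- Sequential composition: runs `t'` on the outputs of a tree together with the registers `g` of
that tree. -/
def bind (t' : ArithTree ι (κ ⊕ β)) : {α : Type} → (β → α) → ArithTree κ α → ArithTree ι α
  | _, g, .ret out => t'.rename (Sum.elim out g)
  | _, g, .const c next => .const c (t'.bind (some ∘ g) next)
  | _, g, .op o a b next => .op o a b (t'.bind (some ∘ g) next)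
  | _, g, .branch a b lt ge => .branch a b (t'.bind g lt) (t'.bind g ge)

theorem cost_bind (t' : ArithTree ι (κ ⊕ β)) : ∀ {α : Type} (g : β → α) (t : ArithTree κ α),
    (t'.bind g t).cost = t.cost + t'.cost
  | _, _, .ret _ => by simp [bind, cost, cost_rename]
  | _, _, .const _ next => by simp only [bind, cost, cost_bind t' _ next]; lia
  | _, _, .op _ _ _ next => by simp only [bind, cost, cost_bind t' _ next]; lia
  | _, _, .branch _ _ lt ge => by simp only [bind, cost, cost_bind t' _ lt, cost_bind t' _ ge]; lia

theorem eval_bind (t' : ArithTree ι (κ ⊕ β)) : ∀ {α : Type} (g : β → α) (t : ArithTree κ α)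
    (v : α → ℝ), (t'.bind g t).eval v = t'.eval (Sum.elim (t.eval v) (v ∘ g))
  | _, _, .ret out, v => by
    rw [bind, eval_rename, Sum.comp_elim]
    rfl
  | _, _, .const _ next, _ => by
    simp only [bind, eval, eval_bind t' _ next]
    rfl
  | _, _, .op _ _ _ next, _ => by
    simp only [bind, eval, eval_bind t' _ next]
    rfl
  | _, _, .branch _ _ lt ge, _ => by
    simp only [bind, eval, eval_bind t' _ lt, eval_bind t' _ ge]
    split_ifs <;> rfl

end ArithTree

namespace ComputableInTime

variable {α β κ ι : Type}

theorem mono {F : (α → ℝ) → κ → ℝ} {S T : ℝ} (h : ComputableInTime F S) (hST : S ≤ T) :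
    ComputableInTime F T := by
  obtain ⟨t, cost_le, eval_eq⟩ := h
  exact ⟨t, cost_le.trans hST, eval_eq⟩

theorem nonneg {F : (α → ℝ) → κ → ℝ} {T : ℝ} (h : ComputableInTime F T) : 0 ≤ T := by
  obtain ⟨t, cost_le, -⟩ := h
  exact (Nat.cast_nonneg _).trans cost_le

theorem proj (f : κ → α) : ComputableInTime (fun v k => v (f k)) 0 :=
  ⟨.ret f, by simp [ArithTree.cost], fun _ => rfl⟩

theorem precomp {F : (α → ℝ) → κ → ℝ} {T : ℝ} (hF : ComputableInTime F T) (f : α → β) :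
    ComputableInTime (fun v : β → ℝ => F fun a => v (f a)) T := by
  obtain ⟨t, cost_le, eval_eq⟩ := hF
  refine ⟨t.rename f, by rwa [ArithTree.cost_rename], fun v => ?_⟩
  rw [ArithTree.eval_rename, eval_eq]
  rfl

theorem bind {F : (α → ℝ) → κ → ℝ} {G : (κ ⊕ α → ℝ) → ι → ℝ} {S T : ℝ}
    (hF : ComputableInTime F S) (hG : ComputableInTime G T) :
    ComputableInTime (fun v => G (Sum.elim (F v) v)) (S + T) := by
  obtain ⟨t, cost_le, eval_eq⟩ := hF
  obtain ⟨t', cost_le', eval_eq'⟩ := hG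
  refine ⟨t'.bind id t, ?_, fun v => ?_⟩
  · rw [ArithTree.cost_bind]; push_cast; linarith
  · rw [ArithTree.eval_bind, eval_eq, eval_eq']; rfl

theorem comp {F : (α → ℝ) → κ → ℝ} {G : (κ → ℝ) → ι → ℝ} {S T : ℝ} (hG : ComputableInTime G T)
    (hF : ComputableInTime F S) : ComputableInTime (fun v => G (F v)) (S + T) :=
  hF.bind (hG.precomp Sum.inl)

theorem reindex {F : (α → ℝ) → κ → ℝ} {T : ℝ} (hF : ComputableInTime F T) (f : ι → κ) :
    ComputableInTime (fun v i => F v (f i)) T := by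
  simpa using (proj f).comp hF

theorem pair {F : (α → ℝ) → κ → ℝ} {G : (α → ℝ) → ι → ℝ} {S T : ℝ}
    (hF : ComputableInTime F S) (hG : ComputableInTime G T) :
    ComputableInTime (fun v => Sum.elim (F v) (G v)) (S + T) := by
  have keep_F : ComputableInTime (fun v : κ ⊕ α → ℝ => Sum.elim (G fun a => v (.inr a)) v) T := by
    simpa using (hG.precomp Sum.inr).bind (proj (id : ι ⊕ (κ ⊕ α) → _))
  have swapped := (hF.bind keep_F).reindex
    (Sum.elim (fun k => Sum.inr (Sum.inl k)) Sum.inl : κ ⊕ ι → ι ⊕ (κ ⊕ α))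
  convert swapped using 3 with v k
  cases k <;> rfl

theorem pi [Fintype ι] {κ : ι → Type} {F : ∀ i, (α → ℝ) → κ i → ℝ} {T : ι → ℝ}
    (h : ∀ i, ComputableInTime (F i) (T i)) :
    ComputableInTime (fun v (k : Σ i, κ i) => F k.1 v k.2) (∑ i, T i) := by
  classical
  suffices subfamily : ∀ s : Finset ι,
      ComputableInTime (fun v (k : Σ i : s, κ i) => F k.1 v k.2) (∑ i ∈ s, T i) by
    exact (subfamily Finset.univ).reindex fun k : Σ i, κ i => ⟨⟨k.1, Finset.mem_univ _⟩, k.2⟩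
  intro s
  induction s using Finset.induction_on with
  | empty =>
    refine ⟨.ret fun k => absurd k.1.2 (Finset.notMem_empty _), by simp [ArithTree.cost],
      fun v => ?_⟩
    funext k
    exact absurd k.1.2 (Finset.notMem_empty _)
  | insert a s ha ih =>
    rw [Finset.sum_insert ha]
    have insert_family := ((h a).pair ih).reindex fun k : Σ i : ↥(insert a s), κ i =>
      if hk : k.1.1 = a then (Sum.inl (hk ▸ k.2) : κ a ⊕ Σ i : s, κ i)
      else Sum.inr ⟨⟨k.1, (Finset.mem_insert.1 k.1.2).resolve_left hk⟩, k.2⟩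
    convert insert_family using 3 with v k
    obtain ⟨⟨i, hi⟩, k⟩ := k
    by_cases hk : i = a
    · subst hk; simp
    · simp [hk]

theorem of_forall [Fintype κ] {F : (α → ℝ) → κ → ℝ} {T : κ → ℝ}
    (h : ∀ k, ComputableInTime (fun v (_ : Unit) => F v k) (T k)) :
    ComputableInTime F (∑ k, T k) :=
  (pi h).reindex fun k => ⟨k, ()⟩

theorem const (c : ℚ) : ComputableInTime (fun (_ : α → ℝ) (_ : Unit) => (c : ℝ)) 1 :=
  ⟨.const c (.ret fun _ => none), by simp [ArithTree.cost], fun _ => rfl⟩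

theorem var (a : α) : ComputableInTime (fun v (_ : Unit) => v a) 0 := proj fun _ => a

section Arithmetic

variable {f g : (α → ℝ) → ℝ} {S T : ℝ}

theorem op (o : ArithOp) (hf : ComputableInTime (fun v (_ : Unit) => f v) S)
    (hg : ComputableInTime (fun v (_ : Unit) => g v) T) :
    ComputableInTime (fun v (_ : Unit) => o.apply (f v) (g v)) (S + T + 1) := by
  have op_registers : ComputableInTime (fun (v : Unit ⊕ Unit → ℝ) (_ : Unit) =>
      o.apply (v (.inl ())) (v (.inr ()))) 1 :=
    ⟨.op o (.inl ()) (.inr ()) (.ret fun _ => none), by simp [ArithTree.cost], fun _ => rfl⟩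
  exact op_registers.comp (hf.pair hg)

theorem add (hf : ComputableInTime (fun v (_ : Unit) => f v) S)
    (hg : ComputableInTime (fun v (_ : Unit) => g v) T) :
    ComputableInTime (fun v (_ : Unit) => f v + g v) (S + T + 1) := op .add hf hg

theorem sub (hf : ComputableInTime (fun v (_ : Unit) => f v) S)
    (hg : ComputableInTime (fun v (_ : Unit) => g v) T) :
    ComputableInTime (fun v (_ : Unit) => f v - g v) (S + T + 1) := op .sub hf hg

theorem mul (hf : ComputableInTime (fun v (_ : Unit) => f v) S)
    (hg : ComputableInTime (fun v (_ : Unit) => g v) T) :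
    ComputableInTime (fun v (_ : Unit) => f v * g v) (S + T + 1) := op .mul hf hg

theorem div (hf : ComputableInTime (fun v (_ : Unit) => f v) S)
    (hg : ComputableInTime (fun v (_ : Unit) => g v) T) :
    ComputableInTime (fun v (_ : Unit) => f v / g v) (S + T + 1) := op .div hf hg

end Arithmetic

theorem sum [Fintype ι] {f : ι → (α → ℝ) → ℝ} {T : ι → ℝ}
    (h : ∀ i, ComputableInTime (fun v (_ : Unit) => f i v) (T i)) :
    ComputableInTime (fun v (_ : Unit) => ∑ i, f i v) (∑ i, (T i + 1) + 1) := by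
  classical
  suffices partial_sum : ∀ s : Finset ι, ComputableInTime (fun v (_ : Unit) => ∑ i ∈ s, f i v)
      (∑ i ∈ s, (T i + 1) + 1) from partial_sum Finset.univ
  intro s
  induction s using Finset.induction_on with
  | empty => simpa using const (α := α) 0
  | insert a s ha ih =>
    simp only [Finset.sum_insert ha]
    exact (add (h a) ih).mono (by linarith)

end ComputableInTime

/-! ### Linear-time selection -/

/-- Comparison trees over the registers `α` with results in `β`. -/
inductive CmpTree (α β : Type) : Type
  | ret (b : β) : CmpTree α β
  | cmp (x y : α) (lt ge : CmpTree α β) : CmpTree α β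

namespace CmpTree

variable {α β γ κ : Type}

/-- The result of a comparison tree on the register contents `v`. -/
noncomputable def run (v : α → ℝ) : CmpTree α β → β
  | .ret b => b
  | .cmp x y lt ge => if v x < v y then lt.run v else ge.run v

/-- The number of comparisons made on the register contents `v`. Branches that no input reaches do
not count: recursive selection would otherwise have to bound its cost on impossible pivots. -/
noncomputable def costOn (v : α → ℝ) : CmpTree α β → ℕ
  | .ret _ => 0
  | .cmp x y lt ge => (if v x < v y then lt.costOn v else ge.costOn v) + 1

/-- Sequential composition of comparison trees. -/
def bind : CmpTree α β → (β → CmpTree α γ) → CmpTree α γ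
  | .ret b, g => g b
  | .cmp x y lt ge, g => .cmp x y (lt.bind g) (ge.bind g)

theorem run_bind (v : α → ℝ) (g : β → CmpTree α γ) : ∀ t : CmpTree α β,
    (t.bind g).run v = (g (t.run v)).run v
  | .ret _ => rfl
  | .cmp _ _ lt ge => by
    simp only [bind, run, run_bind v g lt, run_bind v g ge]; split_ifs <;> rfl

theorem costOn_bind (v : α → ℝ) (g : β → CmpTree α γ) : ∀ t : CmpTree α β,
    (t.bind g).costOn v = t.costOn v + (g (t.run v)).costOn v
  | .ret _ => by simp [bind, costOn, run]
  | .cmp _ _ lt ge => by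
    simp only [bind, costOn, run, costOn_bind v g lt, costOn_bind v g ge]; split_ifs <;> lia

/-- The leftmost result of a tree, a default value for truncated trees. -/
def leftmost : CmpTree α β → β
  | .ret b => b
  | .cmp _ _ lt _ => lt.leftmost

/-- The arithmetic tree that makes the first `T` comparisons of a comparison tree. -/
def toArith (out : β → κ → α) : ℕ → CmpTree α β → ArithTree κ α
  | _, .ret b => .ret (out b)
  | 0, .cmp _ _ lt _ => .ret (out lt.leftmost)
  | T + 1, .cmp x y lt ge => .branch x y (toArith out T lt) (toArith out T ge)

theorem cost_toArith_le (out : β → κ → α) : ∀ (T : ℕ) (t : CmpTree α β),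
    (toArith out T t).cost ≤ T
  | _, .ret _ => by simp [toArith, ArithTree.cost]
  | 0, .cmp _ _ _ _ => by simp [toArith, ArithTree.cost]
  | T + 1, .cmp _ _ lt ge => by
    simpa only [toArith, ArithTree.cost, add_le_add_iff_right, max_le_iff] using
      ⟨cost_toArith_le out T lt, cost_toArith_le out T ge⟩

theorem eval_toArith (out : β → κ → α) (v : α → ℝ) : ∀ (T : ℕ) (t : CmpTree α β),
    t.costOn v ≤ T → (toArith out T t).eval v = fun k => v (out (t.run v) k)
  | _, .ret _, _ => by simp [toArith, ArithTree.eval, run]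
  | 0, .cmp _ _ _ _, h => by simp [costOn] at h
  | T + 1, .cmp _ _ lt ge, h => by
    simp only [costOn] at h
    simp only [toArith, ArithTree.eval, run]
    split_ifs at h ⊢
    · exact eval_toArith out v T lt (by lia)
    · exact eval_toArith out v T ge (by lia)

/-- Computes the sublist of the `x` for which register `f x` is below register `g x`. -/
def filterLt (f g : γ → α) : List γ → CmpTree α (List γ)
  | [] => .ret []
  | x :: l => .cmp (f x) (g x) ((filterLt f g l).bind fun r => .ret (x :: r)) (filterLt f g l)

theorem run_filterLt (v : α → ℝ) (f g : γ → α) : ∀ l : List γ,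
    (filterLt f g l).run v = l.filter fun x => v (f x) < v (g x)
  | [] => rfl
  | x :: l => by
    simp only [filterLt, run, run_bind, run_filterLt v f g l, List.filter_cons,
      decide_eq_true_eq]

theorem costOn_filterLt (v : α → ℝ) (f g : γ → α) : ∀ l : List γ,
    (filterLt f g l).costOn v = l.length
  | [] => rfl
  | x :: l => by
    simp only [filterLt, costOn, costOn_bind, costOn_filterLt v f g l, List.length_cons, add_zero,
      ite_self]

end CmpTree

section Rank

variable {α : Type}

/-- In the list `l` sorted by the values `v`, the value of `a` stands at position `r`, counted
from `0`. -/
def IsRank (v : α → ℝ) (l : List α) (r : ℕ) (a : α) : Prop :=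
  l.countP (fun x => v x < v a) ≤ r ∧ r < l.countP fun x => v x ≤ v a

theorem countP_le_add_countP_lt (v : α → ℝ) (l : List α) (t : ℝ) :
    l.countP (fun x => v x ≤ t) + l.countP (fun x => t < v x) = l.length := by
  simpa using (List.length_eq_countP_add_countP (fun x => v x ≤ t) (l := l)).symm

theorem countP_lt_add_countP_le (v : α → ℝ) (l : List α) (t : ℝ) :
    l.countP (fun x => v x < t) + l.countP (fun x => t ≤ v x) = l.length := by
  simpa using (List.length_eq_countP_add_countP (fun x => v x < t) (l := l)).symm

theorem isRank_iff_countP {v : α → ℝ} {l : List α} {r : ℕ} {a : α} : IsRank v l r a ↔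
    l.countP (fun x => v x < v a) ≤ r ∧ l.countP (fun x => v a < v x) + r < l.length := by
  have length_eq := countP_le_add_countP_lt v l (v a)
  exact and_congr_right fun _ => by lia

theorem isRank_iff_ordStat_eq {v : α → ℝ} {l : List α} {r : ℕ} {a : α} (hr : r < l.length) :
    IsRank v l r a ↔ ordStat (l.map v : Multiset ℝ) r = v a := by
  have hr' : r < Multiset.card (l.map v : Multiset ℝ) := by simpa using hr
  rw [le_antisymm_iff, ordStat_le_iff hr', ← not_lt, ordStat_lt_iff hr', Multiset.coe_countP,
    List.countP_map, Multiset.coe_countP, List.countP_map, not_lt, and_comm]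
  rfl

theorem ordStat_mem {s : Multiset ℝ} {r : ℕ} (hr : r < s.card) : ordStat s r ∈ s := by
  rw [ordStat, List.getD_eq_getElem _ _ (by simpa using hr), ← Multiset.mem_sort (r := (· ≤ ·))]
  exact List.getElem_mem _

theorem exists_isRank (v : α → ℝ) {l : List α} {r : ℕ} (hr : r < l.length) :
    ∃ a ∈ l, IsRank v l r a := by
  obtain ⟨a, ha, v_eq⟩ := List.mem_map.1
    (Multiset.mem_coe.1 (ordStat_mem (s := (l.map v : Multiset ℝ)) (r := r) (by simpa using hr)))
  exact ⟨a, ha, (isRank_iff_ordStat_eq hr).2 v_eq.symm⟩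

theorem IsRank.of_filter_lt {v : α → ℝ} {l : List α} {r : ℕ} {t : ℝ} {b : α}
    (h : IsRank v (l.filter fun x => v x < t) r b) : IsRank v l r b := by
  have b_lt : v b < t := by
    by_contra! t_le
    refine (h.1.trans_lt h.2).not_ge (List.countP_mono_left fun x hx _ => ?_)
    exact decide_eq_true ((of_decide_eq_true (List.mem_filter.1 hx).2).trans_le t_le)
  have countP_eq : ∀ p : ℝ → Prop, [DecidablePred p] → (∀ y, p y → y < t) →
      (l.filter fun x => v x < t).countP (fun x => p (v x)) = l.countP fun x => p (v x) := by
    intro p _ hp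
    rw [List.countP_filter]
    refine List.countP_congr fun x _ => ?_
    simpa using hp (v x)
  rw [IsRank, countP_eq (· < v b) fun _ hy => hy.trans b_lt,
    countP_eq (· ≤ v b) fun _ hy => hy.trans_lt b_lt] at h
  exact h

theorem IsRank.of_filter_gt {v : α → ℝ} {l : List α} {r : ℕ} {t : ℝ} {b : α}
    (h : IsRank v (l.filter fun x => t < v x) r b) :
    IsRank v l (l.countP (fun x => v x ≤ t) + r) b := by
  have lt_b : t < v b := by
    obtain ⟨x, hx, hxb⟩ := List.countP_pos_iff.1 ((Nat.zero_le r).trans_lt h.2)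
    exact (of_decide_eq_true (List.mem_filter.1 hx).2).trans_le (of_decide_eq_true hxb)
  have countP_eq : ∀ p : ℝ → Prop, [DecidablePred p] → (∀ y ≤ t, p y) →
      l.countP (fun x => p (v x)) = l.countP (fun x => v x ≤ t) +
        (l.filter fun x => t < v x).countP fun x => p (v x) := by
    intro p _ hp
    rw [List.countP_eq_countP_filter_add l _ fun x => v x ≤ t, List.countP_filter]
    congr 1
    · refine List.countP_congr fun x _ => ?_
      simpa using hp (v x)
    · simp only [← not_le, decide_not]
  rw [IsRank, countP_eq (· < v b) fun _ hy => hy.trans_lt lt_b,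
    countP_eq (· ≤ v b) fun _ hy => hy.trans lt_b.le]
  exact ⟨by linarith [h.1], by linarith [h.2]⟩

theorem three_mul_countP_le_countP_flatten (p : α → Bool) : ∀ {gs : List (List α)} {ms : List α},
    List.Forall₂ (fun g a => p a = true → 3 ≤ g.countP p) gs ms →
      3 * ms.countP p ≤ gs.flatten.countP p
  | _, _, .nil => by simp
  | _, _, .cons (b := a) h h' => by
    have ih := three_mul_countP_le_countP_flatten p h'
    rw [List.flatten_cons, List.countP_append, List.countP_cons]
    by_cases hp : p a = true
    · have := h hp
      simp only [hp, if_true]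
      lia
    · simp only [hp, Bool.false_eq_true, if_false]
      lia

section Medians

variable {v : α → ℝ} {gs : List (List α)} {ms : List α} {a : α}
  (hms : List.Forall₂ (fun g a => g.length = 5 ∧ IsRank v g 2 a) gs ms)
  (ha : IsRank v ms (ms.length / 2) a)

include hms ha

theorem three_mul_length_le_countP_flatten_le :
    3 * ms.length ≤ 2 * gs.flatten.countP fun x => v x ≤ v a := by
  have flatten_ge := three_mul_countP_le_countP_flatten (fun x => decide (v x ≤ v a))
    (hms.imp fun g m ⟨_, hm⟩ hma => by
      have three_le : 3 ≤ g.countP fun x => v x ≤ v m := hm.2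
      exact three_le.trans (List.countP_mono_left fun x _ hx =>
        decide_eq_true ((of_decide_eq_true hx).trans (of_decide_eq_true hma))))
  have := ha.2
  lia

theorem three_mul_length_le_countP_flatten_ge :
    3 * ms.length ≤ 2 * gs.flatten.countP fun x => v a ≤ v x := by
  have flatten_ge := three_mul_countP_le_countP_flatten (fun x => decide (v a ≤ v x))
    (hms.imp fun g m ⟨g_length, hm⟩ hma => by
      have g_split := countP_lt_add_countP_le v g (v m)
      have three_le : 3 ≤ g.countP fun x => v m ≤ v x := by
        rw [g_length] at g_split
        have := hm.1
        lia
      exact three_le.trans (List.countP_mono_left fun x _ hx =>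
        decide_eq_true ((of_decide_eq_true hma).trans (of_decide_eq_true hx))))
  have ms_split := countP_lt_add_countP_le v ms (v a)
  have := ha.1
  lia

end Medians

end Rank

section Selection

open CmpTree

variable {α : Type}

/-- The tree `t` selects the element of rank `r` of the list `l` with at most `c` comparisons. -/
def Selects (t : CmpTree α α) (l : List α) (r c : ℕ) : Prop :=
  ∀ v, IsRank v l r (t.run v) ∧ t.costOn v ≤ c

theorem exists_selects_sq {l : List α} {r : ℕ} (hr : r < l.length) :
    ∃ t, Selects t l r (2 * l.length ^ 2) := by
  suffices among_candidates : ∀ c : List α, ∃ t : CmpTree α α, ∀ v,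
      ((∃ a ∈ c, IsRank v l r a) → IsRank v l r (t.run v)) ∧
        t.costOn v ≤ 2 * l.length * c.length by
    obtain ⟨t, ht⟩ := among_candidates l
    exact ⟨t, fun v => ⟨(ht v).1 (exists_isRank v hr), (ht v).2.trans (by rw [sq, mul_assoc])⟩⟩
  intro c
  induction c with
  | nil => exact ⟨.ret l[r], fun v => ⟨by simp, by simp [costOn]⟩⟩
  | cons a c ih =>
    obtain ⟨t, ht⟩ := ih
    refine ⟨(filterLt id (fun _ => a) l).bind fun L => (filterLt (fun _ => a) id l).bind fun G =>
      if L.length ≤ r ∧ G.length + r < l.length then .ret a else t, fun v => ?_⟩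
    simp only [run_bind, costOn_bind, run_filterLt, costOn_filterLt, id,
      List.length_cons]
    split_ifs with h <;>
      rw [← List.countP_eq_length_filter, ← List.countP_eq_length_filter, ← isRank_iff_countP] at h
    · exact ⟨fun _ => h, by simp only [costOn]; nlinarith⟩
    · refine ⟨?_, by linarith [(ht v).2]⟩
      rintro ⟨b, hb, b_isRank⟩
      rcases List.mem_cons.1 hb with rfl | hb
      · exact absurd b_isRank h
      · exact (ht v).1 ⟨b, hb, b_isRank⟩

theorem exists_eq_flatten_append (k : ℕ) : ∀ (q : ℕ) (l : List α), k * q ≤ l.length →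
    ∃ (gs : List (List α)) (rest : List α), gs.length = q ∧ (∀ g ∈ gs, g.length = k) ∧
      l = gs.flatten ++ rest
  | 0, l, _ => ⟨[], l, rfl, by simp, by simp⟩
  | q + 1, l, h => by
    rw [mul_add_one] at h
    obtain ⟨gs, rest, gs_length, length_eq, drop_eq⟩ :=
      exists_eq_flatten_append k q (l.drop k) (by simp; lia)
    refine ⟨l.take k :: gs, rest, by simp [gs_length], ?_, ?_⟩
    · simpa [or_imp, forall_and] using ⟨(Nat.le_add_left k _).trans h, length_eq⟩
    · rw [List.flatten_cons, List.append_assoc, ← drop_eq, List.take_append_drop]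

theorem exists_cmpTree_medians : ∀ gs : List (List α), (∀ g ∈ gs, g.length = 5) →
    ∃ t : CmpTree α (List α), ∀ v,
      List.Forall₂ (fun g a => g.length = 5 ∧ IsRank v g 2 a) gs (t.run v) ∧
        t.costOn v ≤ 50 * gs.length
  | [], _ => ⟨.ret [], fun v => ⟨by simp [run], by simp [costOn]⟩⟩
  | g :: gs, h => by
    obtain ⟨t, ht⟩ := exists_cmpTree_medians gs fun g hg => h g (List.mem_cons_of_mem _ hg)
    have g_length := h g List.mem_cons_self
    obtain ⟨s, hs⟩ := exists_selects_sq (l := g) (r := 2) (by lia)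
    rw [g_length] at hs
    refine ⟨s.bind fun a => t.bind fun as => .ret (a :: as), fun v => ⟨?_, ?_⟩⟩
    · simp only [run_bind, run]
      exact List.Forall₂.cons ⟨g_length, (hs v).1⟩ (ht v).1
    · simp only [costOn_bind, costOn, List.length_cons]
      linarith [(hs v).2, (ht v).2]

theorem exists_cmpTree_pivot {l : List α} {K : ℕ} (hl : 5 ≤ l.length)
    (ih : ∀ (l' : List α) (r : ℕ), l'.length < l.length → r < l'.length →
      ∃ t, Selects t l' r (K * l'.length)) :
    ∃ t : CmpTree α α, ∀ v,
      2 * l.countP (fun x => v x < v (t.run v)) + 3 * (l.length / 5) ≤ 2 * l.length ∧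
      2 * l.countP (fun x => v (t.run v) < v x) + 3 * (l.length / 5) ≤ 2 * l.length ∧
      t.costOn v ≤ (50 + K) * (l.length / 5) := by
  have : Nonempty (CmpTree α α) := ⟨.ret l[0]⟩
  choose! select hselect using ih
  obtain ⟨gs, rest, gs_length, group_length, l_eq⟩ :=
    exists_eq_flatten_append 5 (l.length / 5) l (by lia)
  obtain ⟨M, hM⟩ := exists_cmpTree_medians gs group_length
  refine ⟨M.bind fun ms => select ms (ms.length / 2), fun v => ?_⟩
  obtain ⟨hms, M_cost⟩ := hM v
  simp only [run_bind, costOn_bind]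
  set ms := M.run v
  have ms_length : ms.length = l.length / 5 := by rw [← hms.length_eq, gs_length]
  obtain ⟨ha, a_cost⟩ := hselect ms (ms.length / 2) (by lia) (by lia) v
  set a := (select ms (ms.length / 2)).run v
  have flatten_le := three_mul_length_le_countP_flatten_le hms ha
  have flatten_ge := three_mul_length_le_countP_flatten_ge hms ha
  have countP_flatten_le : ∀ p : α → Bool, gs.flatten.countP p ≤ l.countP p := fun p => by
    conv_rhs => rw [l_eq, List.countP_append]
    lia
  have le_split := countP_le_add_countP_lt v l (v a)
  have ge_split := countP_lt_add_countP_le v l (v a)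
  have le_count := countP_flatten_le fun x => v x ≤ v a
  have ge_count := countP_flatten_le fun x => v a ≤ v x
  refine ⟨by lia, by lia, (add_le_add M_cost a_cost).trans_eq ?_⟩
  rw [gs_length, ms_length, add_mul]

theorem exists_selects_of_pivot {l : List α} {r : ℕ} (hr : r < l.length) (P : CmpTree α α)
    (select : List α → ℕ → CmpTree α α) {b c e : ℕ}
    (hselect : ∀ l' r', l'.length ≤ b → r' < l'.length → Selects (select l' r') l' r' c)
    (hP : ∀ v, l.countP (fun x => v x < v (P.run v)) ≤ b ∧
      l.countP (fun x => v (P.run v) < v x) ≤ b ∧ P.costOn v ≤ e) :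
    ∃ t, Selects t l r (e + 2 * l.length + c) := by
  refine ⟨P.bind fun a => (filterLt id (fun _ => a) l).bind fun L =>
    (filterLt (fun _ => a) id l).bind fun G => if r < L.length then select L r else
      if l.length ≤ G.length + r then select G (r - (l.length - G.length)) else .ret a,
    fun v => ?_⟩
  obtain ⟨L_length, G_length, P_cost⟩ := hP v
  simp only [run_bind, costOn_bind, run_filterLt, costOn_filterLt, id]
  generalize P.run v = a at L_length G_length ⊢
  rw [List.countP_eq_length_filter] at L_length G_length
  have G_split := countP_le_add_countP_lt v l (v a)
  rw [List.countP_eq_length_filter (p := fun x => decide (v a < v x))] at G_split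
  split_ifs with r_lt le_r
  · obtain ⟨isRank, cost⟩ := hselect _ r L_length r_lt v
    exact ⟨isRank.of_filter_lt, by linarith⟩
  · obtain ⟨isRank, cost⟩ := hselect (l.filter fun x => v a < v x)
      (r - (l.length - (l.filter fun x => v a < v x).length)) G_length (by omega) v
    refine ⟨?_, by linarith⟩
    convert isRank.of_filter_gt using 1
    omega
  · refine ⟨isRank_iff_countP.2 ⟨?_, ?_⟩, by simp only [costOn]; lia⟩
    · rw [List.countP_eq_length_filter]; exact not_lt.1 r_lt
    · rw [List.countP_eq_length_filter]; exact not_le.1 le_r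

theorem exists_selects (l : List α) (r : ℕ) (hr : r < l.length) :
    ∃ t, Selects t l r (240 * l.length) := by
  induction hn : l.length using Nat.strong_induction_on generalizing l r with
  | _ n ih =>
  subst hn
  have shorter : ∀ (l' : List α) (r' : ℕ), l'.length < l.length → r' < l'.length →
      ∃ t, Selects t l' r' (240 * l'.length) := fun l' r' h h' => ih _ h l' r' h' rfl
  rcases lt_or_ge l.length 5 with short | long
  · obtain ⟨t, ht⟩ := exists_selects_sq hr
    exact ⟨t, fun v => ⟨(ht v).1, (ht v).2.trans (by nlinarith)⟩⟩
  obtain ⟨P, hP⟩ := exists_cmpTree_pivot long shorter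
  have : Nonempty (CmpTree α α) := ⟨P⟩
  choose! select hselect using shorter
  obtain ⟨t, ht⟩ := exists_selects_of_pivot hr (b := (2 * l.length - 3 * (l.length / 5)) / 2)
    (c := 240 * ((2 * l.length - 3 * (l.length / 5)) / 2)) (e := 290 * (l.length / 5)) P select
    (fun l' r' h h' v => ⟨(hselect l' r' (by lia) h' v).1,
      (hselect l' r' (by lia) h' v).2.trans (by lia)⟩)
    (fun v => ⟨by have := (hP v).1; lia, by have := (hP v).2.1; lia, (hP v).2.2⟩)
  exact ⟨t, fun v => ⟨(ht v).1, (ht v).2.trans (by lia)⟩⟩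

theorem computableInTime_ordStat {k r : ℕ} (hr : r < k) :
    ComputableInTime (fun (x : Fin k → ℝ) (_ : Unit) => ordStat (Finset.univ.val.map x) r)
      (240 * k) := by
  obtain ⟨t, ht⟩ := exists_selects (List.finRange k) r (by simpa using hr)
  rw [List.length_finRange] at ht
  refine ⟨t.toArith (fun a _ => a) (240 * k), by exact_mod_cast cost_toArith_le _ _ _,
    fun v => ?_⟩
  obtain ⟨isRank, cost⟩ := ht v
  rw [eval_toArith _ _ _ _ cost, ← (isRank_iff_ordStat_eq (by simpa using hr)).1 isRank]
  rfl

theorem computableInTime_sampleMedian (k : ℕ) :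
    ComputableInTime (fun (x : Fin k → ℝ) (_ : Unit) => sampleMedian x) (480 * k + 3) := by
  rcases Nat.eq_zero_or_pos k with rfl | hk
  · have zero := ComputableInTime.const (α := Fin 0) 0
    refine ComputableInTime.mono (S := 1) ?_ (by norm_num)
    convert zero using 3
    simp [sampleMedian]
  · simp only [sampleMedian_eq]
    have mean := ((computableInTime_ordStat (k := k) (r := (k - 1) / 2) (by lia)).add
      (computableInTime_ordStat (k := k) (r := k / 2) (by lia))).div
      (ComputableInTime.const 2)
    refine ComputableInTime.mono (S := 240 * k + 240 * k + 1 + 1 + 1) ?_ (by linarith)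
    simpa using mean

end Selection

/-! ### Solving linear systems in matrix multiplication time -/

section MatrixComputations

variable {α κ τ : Type}

theorem ComputableInTime.map₂ [Fintype κ] (o : ArithOp) {F G : (α → ℝ) → κ → ℝ} {S T : ℝ}
    (hF : ComputableInTime F S) (hG : ComputableInTime G T) :
    ComputableInTime (fun v k => o.apply (F v k) (G v k)) (S + T + Fintype.card κ) := by
  have entrywise := (ComputableInTime.of_forall fun k : κ => ComputableInTime.op o
    (ComputableInTime.var (Sum.inl k : κ ⊕ κ)) (ComputableInTime.var (Sum.inr k))).comp (hF.pair hG)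
  simpa using entrywise

/-- The entries of the matrix-valued map `M` can be computed in at most `T` steps. -/
def MatComputable (M : (α → ℝ) → Matrix κ τ ℝ) (T : ℝ) : Prop :=
  ComputableInTime (fun v (e : κ × τ) => M v e.1 e.2) T

/-- Square matrices indexed by `κ` can be multiplied in at most `T` steps. -/
def MulComputable (κ : Type) [Fintype κ] (T : ℝ) : Prop :=
  ∀ {α : Type} {M N : (α → ℝ) → Matrix κ κ ℝ} {S S' : ℝ}, MatComputable M S →
    MatComputable N S' → MatComputable (fun v => M v * N v) (S + S' + T)

theorem mulComputable_of_matMul [Fintype κ] {p : ℕ} {T : ℝ} (e : κ ≃ Fin p)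
    (h : ComputableInTime (matMul p) T) : MulComputable κ T := by
  intro α M N S S' hM hN
  have product := (h.comp ((hM.reindex fun x : Fin p × Fin p => (e.symm x.1, e.symm x.2)).pair
    (hN.reindex fun x : Fin p × Fin p => (e.symm x.1, e.symm x.2)))).reindex
    fun x : κ × κ => (e x.1, e x.2)
  unfold MatComputable
  convert product using 3 with v x
  simp only [matMul, Matrix.mul_apply, Matrix.of_apply, Sum.elim_inl, Sum.elim_inr,
    Equiv.symm_apply_apply]
  exact (e.symm.sum_comp fun j => M v x.1 j * N v j x.2).symm

namespace MatComputable

theorem proj (f : κ × τ → α) : MatComputable (fun v => Matrix.of fun i j => v (f (i, j))) 0 :=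
  ComputableInTime.proj f

theorem fromBlocks {A B C D : (α → ℝ) → Matrix κ κ ℝ} {a b c d : ℝ}
    (hA : MatComputable A a) (hB : MatComputable B b) (hC : MatComputable C c)
    (hD : MatComputable D d) :
    MatComputable (fun v => Matrix.fromBlocks (A v) (B v) (C v) (D v)) (a + b + (c + d)) := by
  have blocks := ((ComputableInTime.pair hA hB).pair (ComputableInTime.pair hC hD)).reindex
    fun x : (κ ⊕ κ) × (κ ⊕ κ) => x.1.elim
      (fun i => x.2.elim (fun j => Sum.inl (Sum.inl (i, j))) fun j => Sum.inl (Sum.inr (i, j)))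
      fun i => x.2.elim (fun j => Sum.inr (Sum.inl (i, j))) fun j => Sum.inr (Sum.inr (i, j))
  unfold MatComputable
  convert blocks using 3 with v x
  obtain ⟨i | i, j | j⟩ := x <;> rfl

variable [Fintype κ] [Fintype τ] {M N : (α → ℝ) → Matrix κ τ ℝ} {S T : ℝ}

theorem add (hM : MatComputable M S) (hN : MatComputable N T) :
    MatComputable (fun v => M v + N v) (S + T + Fintype.card (κ × τ)) :=
  ComputableInTime.map₂ .add hM hN

theorem sub (hM : MatComputable M S) (hN : MatComputable N T) :
    MatComputable (fun v => M v - N v) (S + T + Fintype.card (κ × τ)) :=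
  ComputableInTime.map₂ .sub hM hN

theorem smul {c : (α → ℝ) → ℝ} (hc : ComputableInTime (fun v (_ : Unit) => c v) S)
    (hM : MatComputable M T) :
    MatComputable (fun v => c v • M v) (S + T + Fintype.card (κ × τ)) :=
  ComputableInTime.map₂ .mul (hc.reindex fun _ : κ × τ => ()) hM

theorem neg (hM : MatComputable M S) :
    MatComputable (fun v => -M v) (S + 1 + Fintype.card (κ × τ)) := by
  have neg_one_smul := smul (ComputableInTime.const (-1)) hM
  simp only [Rat.cast_neg, Rat.cast_one, neg_smul, one_smul] at neg_one_smul
  rwa [add_comm S 1]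

theorem mulVec {x : (α → ℝ) → τ → ℝ} (hM : MatComputable M S) (hx : ComputableInTime x T) :
    ComputableInTime (fun v => M v *ᵥ x v)
      (S + T + Fintype.card κ * (2 * Fintype.card τ + 1)) := by
  have rows : ComputableInTime (fun (w : (κ × τ) ⊕ τ → ℝ) (i : κ) =>
      ∑ j, w (.inl (i, j)) * w (.inr j)) _ :=
    ComputableInTime.of_forall fun i => ComputableInTime.sum fun j =>
      ComputableInTime.mul (ComputableInTime.var (Sum.inl (i, j) : (κ × τ) ⊕ τ))
        (ComputableInTime.var (Sum.inr j))
  refine (rows.comp (ComputableInTime.pair hM hx)).mono (le_of_eq ?_)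
  simp only [Finset.sum_const, Finset.card_univ, nsmul_eq_mul]
  ring

end MatComputable

end MatrixComputations

section BlockInversion

variable {κ τ : Type} [Fintype κ] [DecidableEq κ] [Fintype τ] [DecidableEq τ]

/-- The indicator that `M` is nonsingular. -/
noncomputable def nonsingularFlag (M : Matrix κ κ ℝ) : ℝ := if M.det = 0 then 0 else 1

theorem inv_eq_zero_of_det_eq_zero {M : Matrix κ κ ℝ} (h : M.det = 0) : M⁻¹ = 0 :=
  Matrix.nonsing_inv_apply_not_isUnit _ (by simp [h])

theorem posDef_of_det_ne_zero {M : Matrix κ κ ℝ} (hM : M.PosSemidef) (h : M.det ≠ 0) :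
    M.PosDef :=
  hM.posDef_iff_isUnit.2 ((Matrix.isUnit_iff_isUnit_det _).2 h.isUnit)

variable {A : Matrix κ κ ℝ} {B : Matrix κ τ ℝ} {C : Matrix τ κ ℝ} {D : Matrix τ τ ℝ}

omit [Fintype τ] [DecidableEq τ] in
/- For singular `A` the junk value `A⁻¹ = 0` leaves `D`. -/
theorem posSemidef_schur [Finite τ] (hM : (fromBlocks A B C D).PosSemidef) :
    (D - C * (A⁻¹ * B)).PosSemidef := by
  by_cases hA : A.det = 0
  · rw [inv_eq_zero_of_det_eq_zero hA, Matrix.zero_mul, Matrix.mul_zero, sub_zero]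
    exact hM.submatrix (Sum.inr : τ → κ ⊕ τ)
  · obtain rfl : Bᴴ = C := (Matrix.isHermitian_fromBlocks_iff.1 hM.isHermitian).2.1
    have : Fintype τ := Fintype.ofFinite τ
    have A_posDef : A.PosDef := posDef_of_det_ne_zero (hM.submatrix (Sum.inl : κ → κ ⊕ τ)) hA
    have : Invertible A := A.invertibleOfIsUnitDet (Ne.isUnit hA)
    rw [← Matrix.mul_assoc]
    exact (Matrix.PosDef.fromBlocks₁₁ B D A_posDef).1 hM

theorem det_fromBlocks_eq_mul_det_schur (hA : A.det ≠ 0) :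
    (fromBlocks A B C D).det = A.det * (D - C * (A⁻¹ * B)).det := by
  have : Invertible A := A.invertibleOfIsUnitDet hA.isUnit
  rw [Matrix.det_fromBlocks₁₁, Matrix.invOf_eq_nonsing_inv, Matrix.mul_assoc]

theorem nonsingularFlag_fromBlocks (hM : (fromBlocks A B C D).PosSemidef) :
    nonsingularFlag (fromBlocks A B C D) =
      nonsingularFlag A * nonsingularFlag (D - C * (A⁻¹ * B)) := by
  by_cases hA : A.det = 0
  · have det_eq_zero : (fromBlocks A B C D).det = 0 := by
      by_contra det_ne
      exact ((posDef_of_det_ne_zero hM det_ne).submatrix Sum.inl_injective).det_pos.ne' hA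
    simp [nonsingularFlag, hA, det_eq_zero]
  · simp [nonsingularFlag, hA, det_fromBlocks_eq_mul_det_schur hA]

theorem inv_fromBlocks_eq (hA : A.det ≠ 0) (hS : (D - C * (A⁻¹ * B)).det ≠ 0) :
    (fromBlocks A B C D)⁻¹ = fromBlocks
      (A⁻¹ + A⁻¹ * B * ((D - C * (A⁻¹ * B))⁻¹ * (C * A⁻¹)))
      (-(A⁻¹ * B * (D - C * (A⁻¹ * B))⁻¹))
      (-((D - C * (A⁻¹ * B))⁻¹ * (C * A⁻¹))) (D - C * (A⁻¹ * B))⁻¹ := by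
  have : Invertible A := A.invertibleOfIsUnitDet hA.isUnit
  simp only [← Matrix.invOf_eq_nonsing_inv A, ← Matrix.mul_assoc] at hS ⊢
  have := Matrix.invertibleOfIsUnitDet _ hS.isUnit
  have := Matrix.fromBlocks₁₁Invertible A B C D
  rw [← Matrix.invOf_eq_nonsing_inv, Matrix.invOf_fromBlocks₁₁_eq,
    ← Matrix.invOf_eq_nonsing_inv (D - _)]

theorem inv_fromBlocks_of_posSemidef (hM : (fromBlocks A B C D).PosSemidef) :
    (fromBlocks A B C D)⁻¹ = (nonsingularFlag A * nonsingularFlag (D - C * (A⁻¹ * B))) • fromBlocks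
      (A⁻¹ + A⁻¹ * B * ((D - C * (A⁻¹ * B))⁻¹ * (C * A⁻¹)))
      (-(A⁻¹ * B * (D - C * (A⁻¹ * B))⁻¹))
      (-((D - C * (A⁻¹ * B))⁻¹ * (C * A⁻¹))) (D - C * (A⁻¹ * B))⁻¹ := by
  rw [← nonsingularFlag_fromBlocks hM, nonsingularFlag]
  split_ifs with det_eq
  · rw [inv_eq_zero_of_det_eq_zero det_eq, zero_smul]
  · rw [one_smul, inv_fromBlocks_eq]
    all_goals
      intro h
      refine det_eq ?_
      have flag_eq := nonsingularFlag_fromBlocks hM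
      simpa [nonsingularFlag, h] using flag_eq

end BlockInversion

section FlaggedInversion

variable {α κ τ : Type} [Fintype κ] [DecidableEq κ] [Fintype τ] [DecidableEq τ]

/-- The entries of `M⁻¹` together with the indicator that `M` is nonsingular. -/
noncomputable def flaggedInv (M : Matrix κ κ ℝ) : (κ × κ) ⊕ Unit → ℝ :=
  Sum.elim (fun e => M⁻¹ e.1 e.2) fun _ => nonsingularFlag M

/-- Positive semidefinite matrices indexed by `κ` can be inverted, with detection of singularity,
in at most `T` steps. -/
def PSDInvComputable (κ : Type) [Fintype κ] [DecidableEq κ] (T : ℝ) : Prop :=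
  ∃ F : (κ × κ → ℝ) → (κ × κ) ⊕ Unit → ℝ, ComputableInTime F T ∧
    ∀ M : Matrix κ κ ℝ, M.PosSemidef → F (fun e => M e.1 e.2) = flaggedInv M

omit [DecidableEq κ] in
theorem computableInTime_fromBlocks_inv {A B C S : (α → ℝ) → Matrix κ κ ℝ}
    {a s : (α → ℝ) → ℝ} {R : ℝ} (hmul : MulComputable κ R) (hA : MatComputable A 0)
    (hB : MatComputable B 0) (hC : MatComputable C 0) (hS : MatComputable S 0)
    (ha : ComputableInTime (fun v (_ : Unit) => a v) 0)
    (hs : ComputableInTime (fun v (_ : Unit) => s v) 0) :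
    ComputableInTime (fun v => Sum.elim (fun e : (κ ⊕ κ) × (κ ⊕ κ) => ((a v * s v) • fromBlocks
        (A v + A v * B v * (S v * (C v * A v))) (-(A v * B v * S v)) (-(S v * (C v * A v)))
        (S v)) e.1 e.2) fun _ : Unit => a v * s v)
      (8 * R + 7 * (Fintype.card κ : ℝ) ^ 2 + 4) := by
  have flag := ha.mul hs
  have SCA := hmul hS (hmul hC hA)
  have inverse := MatComputable.smul flag (MatComputable.fromBlocks
    (hA.add (hmul (hmul hA hB) SCA)) (hmul (hmul hA hB) hS).neg SCA.neg hS)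
  refine (ComputableInTime.pair inverse flag).mono (le_of_eq ?_)
  simp only [Fintype.card_prod, Fintype.card_sum]
  push_cast
  ring

omit [Fintype κ] [DecidableEq κ] [Fintype τ] in
theorem posSemidef_fromBlocks_one [Finite κ] [Finite τ] {M : Matrix κ κ ℝ} (hM : M.PosSemidef) :
    (fromBlocks M 0 0 (1 : Matrix τ τ ℝ)).PosSemidef := by
  have : Fintype κ := Fintype.ofFinite κ
  have : Fintype τ := Fintype.ofFinite τ
  have : Invertible (1 : Matrix τ τ ℝ) := invertibleOne
  simpa using (Matrix.PosDef.fromBlocks₂₂ M (0 : Matrix κ τ ℝ) Matrix.PosDef.one).2 (by simpa)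

theorem toBlocks₁₁_inv_fromBlocks_one (M : Matrix κ κ ℝ) :
    (fromBlocks M 0 0 (1 : Matrix τ τ ℝ))⁻¹.toBlocks₁₁ = M⁻¹ := by
  by_cases h : M.det = 0
  · rw [inv_eq_zero_of_det_eq_zero h, inv_eq_zero_of_det_eq_zero (by simp [h])]
    rfl
  · rw [Matrix.inv_fromBlocks_zero₁₂_of_isUnit_iff _ _ _ (by
      simp [Matrix.isUnit_iff_isUnit_det, h]), Matrix.toBlocks_fromBlocks₁₁]

theorem sq_le_rpow {x ω : ℝ} (hx : 1 ≤ x) (hω : 2 ≤ ω) : x ^ 2 ≤ x ^ ω := by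
  rw [← Real.rpow_natCast]
  exact Real.rpow_le_rpow_of_exponent_le hx (by exact_mod_cast hω)

namespace PSDInvComputable

theorem mono {S T : ℝ} (h : PSDInvComputable κ S) (hST : S ≤ T) : PSDInvComputable κ T := by
  obtain ⟨F, hF, F_eq⟩ := h
  exact ⟨F, hF.mono hST, F_eq⟩

theorem congr {T : ℝ} (h : PSDInvComputable κ T) (e : τ ≃ κ) : PSDInvComputable τ T := by
  obtain ⟨F, hF, F_eq⟩ := h
  refine ⟨_, (hF.precomp fun x : κ × κ => (e.symm x.1, e.symm x.2)).reindex
    (Sum.map (fun x : τ × τ => (e x.1, e x.2)) id), fun M hM => ?_⟩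
  funext k
  refine (congrFun (F_eq (M.submatrix e.symm e.symm) (hM.submatrix _)) _).trans ?_
  rcases k with k | k
  · simp [flaggedInv, Matrix.inv_submatrix_equiv]
  · simp [flaggedInv, nonsingularFlag, Matrix.det_submatrix_equiv_self]

theorem unit : PSDInvComputable Unit 3 := by
  have entry := ComputableInTime.var ((), ())
  refine ⟨_, (((ComputableInTime.const 1).div entry).reindex fun _ : Unit × Unit => ()).pair
    (entry.div entry) |>.mono (by norm_num), fun M _ => ?_⟩
  funext k
  rcases k with k | k
  · simp [flaggedInv]
  · by_cases h : M () () = 0 <;> simp [flaggedInv, nonsingularFlag, Matrix.det_unique, h]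

theorem double {T R : ℝ} (h : PSDInvComputable κ T) (hmul : MulComputable κ R) :
    PSDInvComputable (κ ⊕ κ) (2 * T + 10 * R + 8 * (Fintype.card κ : ℝ) ^ 2 + 4) := by
  obtain ⟨F, hF, F_eq⟩ := h
  let Input : Type := (κ ⊕ κ) × (κ ⊕ κ)
  let Output : Type := (κ × κ) ⊕ Unit
  have inv_A := hF.precomp fun x : κ × κ => ((.inl x.1, .inl x.2) : Input)
  have inv_schur := hF.comp (MatComputable.sub
    (.proj fun x : κ × κ => (.inr (.inr x.1, .inr x.2) : Output ⊕ Input))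
    (hmul (.proj fun x : κ × κ => (.inr (.inr x.1, .inl x.2) : Output ⊕ Input))
      (hmul (.proj fun x : κ × κ => (.inl (.inl x) : Output ⊕ Input))
        (.proj fun x : κ × κ => (.inr (.inl x.1, .inr x.2) : Output ⊕ Input)))))
  have inv_M := computableInTime_fromBlocks_inv hmul (α := Output ⊕ (Output ⊕ Input))
    (.proj fun x : κ × κ => .inr (.inl (.inl x)))
    (.proj fun x : κ × κ => .inr (.inr (.inl x.1, .inr x.2)))
    (.proj fun x : κ × κ => .inr (.inr (.inr x.1, .inl x.2)))
    (.proj fun x : κ × κ => .inl (.inl x))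
    (.var (.inr (.inl (.inr ())))) (.var (.inl (.inr ())))
  refine ⟨_, (inv_A.bind (inv_schur.bind inv_M)).mono ?_, fun M hM => ?_⟩
  · rw [Fintype.card_prod]
    push_cast
    linarith
  rw [← Matrix.fromBlocks_toBlocks M] at hM ⊢
  have F_A := F_eq M.toBlocks₁₁ (hM.submatrix (Sum.inl : κ → κ ⊕ κ))
  have F_schur := F_eq _ (posSemidef_schur hM)
  rw [flaggedInv, inv_fromBlocks_of_posSemidef hM, nonsingularFlag_fromBlocks hM]
  simp only [Matrix.fromBlocks_apply₁₁, F_A]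
  erw [F_schur]
  rfl

/- A matrix is inverted by padding it with an identity block. -/
theorem of_sum {T : ℝ} (h : PSDInvComputable (κ ⊕ τ) T) : PSDInvComputable κ (T + 2) := by
  obtain ⟨F, hF, F_eq⟩ := h
  have zero_one := (ComputableInTime.const (α := κ × κ) 0).pair (ComputableInTime.const 1)
  have padded := (zero_one.bind (hF.precomp fun x : (κ ⊕ τ) × (κ ⊕ τ) => x.1.elim
    (fun i => x.2.elim (fun j => Sum.inr (i, j)) fun _ => Sum.inl (Sum.inl ()))
    fun i => x.2.elim (fun _ => Sum.inl (Sum.inl ()))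
      fun j => if i = j then Sum.inl (Sum.inr ()) else Sum.inl (Sum.inl ()))).reindex
    (Sum.map (fun x : κ × κ => ((Sum.inl x.1, Sum.inl x.2) : (κ ⊕ τ) × (κ ⊕ τ))) id)
  refine ⟨_, padded.mono (by linarith), fun M hM => ?_⟩
  funext k
  refine (congrArg (F · _) ?_).trans
    ((congrFun (F_eq _ (posSemidef_fromBlocks_one (τ := τ) hM)) _).trans ?_)
  · funext x
    obtain ⟨i | i, j | j⟩ := x
    · rfl
    · simp
    · simp
    · by_cases hij : i = j <;> simp [hij]
  · rcases k with k | k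
    · exact congrFun₂ (toBlocks₁₁_inv_fromBlocks_one (τ := τ) M) k.1 k.2
    · simp [flaggedInv, nonsingularFlag]

theorem two_pow {ω K : ℝ} (hω : 2 ≤ ω) (hK : 0 ≤ K)
    (h : ∀ p : ℕ, 1 ≤ p → ComputableInTime (matMul p) (K * (p : ℝ) ^ ω)) (k : ℕ) :
    PSDInvComputable (Fin (2 ^ k)) ((5 * K + 6) * ((2 ^ k : ℕ) : ℝ) ^ ω) := by
  induction k with
  | zero =>
    refine (unit.congr (finOneEquiv : Fin (2 ^ 0) ≃ Unit)).mono ?_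
    simp only [pow_zero, Nat.cast_one, Real.one_rpow]
    linarith
  | succ k ih =>
    refine ((ih.double (mulComputable_of_matMul (Equiv.refl _)
      (h (2 ^ k) Nat.one_le_two_pow))).congr
        ((finCongr (by ring)).trans finSumFinEquiv.symm)).mono ?_
    have one_le : (1 : ℝ) ≤ ((2 ^ k : ℕ) : ℝ) := by exact_mod_cast Nat.one_le_two_pow
    have sq_le := sq_le_rpow one_le hω
    have one_le_rpow : (1 : ℝ) ≤ ((2 ^ k : ℕ) : ℝ) ^ ω := Real.one_le_rpow one_le (by linarith)
    have four_le : (4 : ℝ) ≤ 2 ^ ω := by linarith [sq_le_rpow one_le_two hω]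
    have rpow_succ : ((2 ^ (k + 1) : ℕ) : ℝ) ^ ω = 2 ^ ω * ((2 ^ k : ℕ) : ℝ) ^ ω := by
      rw [← Real.mul_rpow (by norm_num) (by positivity), pow_succ']
      push_cast
      rfl
    rw [rpow_succ, Fintype.card_fin]
    calc 2 * ((5 * K + 6) * ((2 ^ k : ℕ) : ℝ) ^ ω) + 10 * (K * ((2 ^ k : ℕ) : ℝ) ^ ω) +
          8 * ((2 ^ k : ℕ) : ℝ) ^ 2 + 4
        ≤ (5 * K + 6) * (4 * ((2 ^ k : ℕ) : ℝ) ^ ω) := by linarith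
      _ ≤ (5 * K + 6) * (2 ^ ω * ((2 ^ k : ℕ) : ℝ) ^ ω) := by gcongr

end PSDInvComputable

end FlaggedInversion

section LinearSolve

variable {κ : Type} {ω : ℝ}

theorem IsMatMulExponent.exists_nonneg (h : IsMatMulExponent ω) : ∃ K : ℝ, 0 ≤ K ∧
    ∀ p : ℕ, 1 ≤ p → ComputableInTime (matMul p) (K * (p : ℝ) ^ ω) := by
  obtain ⟨-, K, hK⟩ := h
  exact ⟨K, by simpa using (hK 1 le_rfl).nonneg, hK⟩

theorem exists_two_pow_between {p : ℕ} (hp : 1 ≤ p) : ∃ k : ℕ, p ≤ 2 ^ k ∧ 2 ^ k ≤ 2 * p := by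
  refine ⟨Nat.log 2 p + 1, (Nat.lt_pow_succ_log_self one_lt_two p).le, ?_⟩
  rw [pow_succ']
  exact Nat.mul_le_mul le_rfl (Nat.pow_log_le_self 2 (by lia))

theorem IsMatMulExponent.exists_psdInv_time (h : IsMatMulExponent ω) :
    ∃ K : ℝ, 0 ≤ K ∧ ∀ p : ℕ, 1 ≤ p → PSDInvComputable (Fin p) (K * (p : ℝ) ^ ω) := by
  obtain ⟨K, K_nonneg, hK⟩ := h.exists_nonneg
  refine ⟨(5 * K + 6) * 2 ^ ω + 2, by positivity, fun p hp => ?_⟩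
  obtain ⟨k, p_le, le_two_mul⟩ := exists_two_pow_between hp
  have e : Fin p ⊕ Fin (2 ^ k - p) ≃ Fin (2 ^ k) := finSumFinEquiv.trans (finCongr (by lia))
  refine ((PSDInvComputable.two_pow h.1 K_nonneg hK k).congr e).of_sum.mono ?_
  have one_le_rpow : (1 : ℝ) ≤ (p : ℝ) ^ ω :=
    Real.one_le_rpow (by exact_mod_cast hp) (by linarith [h.1])
  have rpow_le : ((2 ^ k : ℕ) : ℝ) ^ ω ≤ 2 ^ ω * (p : ℝ) ^ ω := by
    rw [← Real.mul_rpow (by norm_num) (by positivity)]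
    exact Real.rpow_le_rpow (by positivity) (by exact_mod_cast le_two_mul) (by linarith [h.1])
  calc (5 * K + 6) * ((2 ^ k : ℕ) : ℝ) ^ ω + 2
      ≤ (5 * K + 6) * (2 ^ ω * (p : ℝ) ^ ω) + 2 * (p : ℝ) ^ ω := by gcongr; linarith
    _ = ((5 * K + 6) * 2 ^ ω + 2) * (p : ℝ) ^ ω := by ring

/- Since `Uᵀ * U` is positive semidefinite, this reduces linear systems to the inversion of
positive semidefinite matrices, for which the recursion on blocks needs no pivoting. -/
theorem inv_mulVec_eq_normal_equations [Fintype κ] [DecidableEq κ] (U : Matrix κ κ ℝ)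
    (b : κ → ℝ) : U⁻¹ *ᵥ b = (Uᵀ * U)⁻¹ *ᵥ (Uᵀ *ᵥ b) := by
  rw [Matrix.mul_inv_rev, Matrix.mulVec_mulVec, Matrix.mul_assoc]
  by_cases h : U.det = 0
  · simp [inv_eq_zero_of_det_eq_zero h]
  · rw [Matrix.nonsing_inv_mul Uᵀ (by rw [Matrix.det_transpose]; exact Ne.isUnit h),
      Matrix.mul_one]

/-- The solution `U⁻¹ b` of a square linear system `U x = b`, on the lists of entries of `U` and
`b` (`0` if `U` is singular). -/
noncomputable def linearSolve (κ : Type) [Fintype κ] [DecidableEq κ] (v : (κ × κ) ⊕ κ → ℝ) :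
    κ → ℝ :=
  (Matrix.of fun i j => v (.inl (i, j)) : Matrix κ κ ℝ)⁻¹ *ᵥ fun r => v (.inr r)

theorem PSDInvComputable.computableInTime_linearSolve [Fintype κ] [DecidableEq κ] {S T : ℝ}
    (h : PSDInvComputable κ S) (hmul : MulComputable κ T) :
    ComputableInTime (linearSolve κ) (S + T + 6 * (Fintype.card κ : ℝ) ^ 2) := by
  obtain ⟨F, hF, F_eq⟩ := h
  have hU := MatComputable.proj fun x : κ × κ => (Sum.inl x : (κ × κ) ⊕ κ)
  have hUT := MatComputable.proj fun x : κ × κ => (Sum.inl (x.2, x.1) : (κ × κ) ⊕ κ)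
  have gram_inv : MatComputable (fun v : (κ × κ) ⊕ κ → ℝ =>
      ((Matrix.of fun i j => v (.inl (i, j)))ᵀ * Matrix.of fun i j => v (.inl (i, j)) :
        Matrix κ κ ℝ)⁻¹) (0 + 0 + T + S) := by
    unfold MatComputable
    convert (hF.comp (hmul hUT hU)).reindex (Sum.inl : κ × κ → _) using 3 with v e
    exact (congrFun (F_eq _ (Matrix.posSemidef_conjTranspose_mul_self
      (Matrix.of fun i j => v (.inl (i, j)) : Matrix κ κ ℝ))) (.inl e)).symm
  have solution := gram_inv.mulVec (hUT.mulVec (ComputableInTime.proj Sum.inr))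
  have card_le_sq : (Fintype.card κ : ℝ) ≤ (Fintype.card κ : ℝ) ^ 2 := by
    exact_mod_cast Nat.le_self_pow two_ne_zero _
  convert solution.mono (T := S + T + 6 * (Fintype.card κ : ℝ) ^ 2) (by linarith) using 2 with v
  exact inv_mulVec_eq_normal_equations _ _

theorem IsMatMulExponent.exists_linearSolve_time (h : IsMatMulExponent ω) :
    ∃ K : ℝ, 0 ≤ K ∧ ∀ p : ℕ, ComputableInTime (linearSolve (Fin p)) (K * (p : ℝ) ^ ω) := by
  obtain ⟨K, K_nonneg, hK⟩ := h.exists_nonneg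
  obtain ⟨L, L_nonneg, hL⟩ := h.exists_psdInv_time
  refine ⟨L + K + 6, by positivity, fun p => ?_⟩
  rcases Nat.eq_zero_or_pos p with rfl | hp
  · refine ((ComputableInTime.of_forall (T := 0) finZeroElim).mono ?_)
    simp only [Finset.univ_eq_empty, Finset.sum_empty]
    positivity
  · refine ((hL p hp).computableInTime_linearSolve
      (mulComputable_of_matMul (Equiv.refl _) (hK p hp))).mono ?_
    have sq_le := sq_le_rpow (by exact_mod_cast hp : (1 : ℝ) ≤ p) h.1
    rw [Fintype.card_fin]
    linarith

end LinearSolve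

/-! ### Running time of the estimator -/

section EstimatorTime

theorem rpow_eq_mul_rpow_sub_one {x s : ℝ} (hx : 0 ≤ x) (hs : s ≠ 0) : x ^ s = x * x ^ (s - 1) := by
  rw [← Real.rpow_one_add' hx (by rwa [add_sub_cancel]), add_sub_cancel]

theorem natCast_le_rpow (p : ℕ) {s : ℝ} (hs : 1 ≤ s) : (p : ℝ) ≤ (p : ℝ) ^ s := by
  rcases Nat.eq_zero_or_pos p with rfl | hp
  · rw [Nat.cast_zero, Real.zero_rpow (by linarith)]
  · exact Real.self_le_rpow_of_one_le (by exact_mod_cast hp) hs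

variable {n m : ℕ} (π : Fin n → Finset (Fin n)) (i : Fin n)

theorem computableInTime_batchSolution {m₁ : ℕ} {f : Fin m₁ → Fin m} {S : Finset (Fin n)} {T : ℝ}
    (hsolve : ComputableInTime (linearSolve (Fin S.card)) T) (s : Fin (m₁ / S.card)) :
    ComputableInTime (fun v : Fin m × Fin n → ℝ =>
      batchSolution S i (batch (fun t j => v (f t, j)) s)) T :=
  hsolve.precomp (Sum.elim (fun e => (batch f s e.1, S.orderEmbOfFin rfl e.2))
    fun r => (batch f s r, i))

theorem computableInTime_coeffEst {S : ℝ}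
    (hsolve : ComputableInTime (linearSolve (Fin (π i).card)) S) :
    ComputableInTime (fun (v : Fin m × Fin n → ℝ) j => coeffEst π (fun s i => v (s, i)) i j)
      ((m / 2 / (π i).card : ℕ) * S + (π i).card * (480 * (m / 2 / (π i).card : ℕ) + 3)) := by
  have solutions := ComputableInTime.pi fun s =>
    computableInTime_batchSolution (f := firstHalf (id : Fin m → Fin m)) i hsolve s
  have medians := (ComputableInTime.of_forall fun j : {j // j ∈ π i} =>
    (computableInTime_sampleMedian (m / 2 / (π i).card)).precomp fun s =>
      (⟨s, ((π i).orderIsoOfFin rfl).symm j⟩ : Σ _ : Fin (m / 2 / (π i).card), Fin (π i).card)).comp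
    solutions
  simp only [Finset.sum_const, Finset.card_univ, nsmul_eq_mul, Fintype.card_fin,
    Fintype.card_coe] at medians
  exact medians

theorem computableInTime_varianceRecovery (hm : 1 ≤ m) :
    ComputableInTime
      (fun (w : ((i : Fin n) × {j // j ∈ π i}) ⊕ (Fin m × Fin n) → ℝ) (_ : Unit) =>
        varianceRecovery π (fun i j => w (.inl ⟨i, j⟩)) (secondHalf fun s i => w (.inr (s, i))) i)
      (m * (4 * (π i).card + 9)) := by
  let sample : Fin (m - m / 2) → Fin m := secondHalf id
  have residual := fun s => ComputableInTime.sub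
    (ComputableInTime.var (Sum.inr (sample s, i)))
    (ComputableInTime.sum fun j : {j // j ∈ π i} => ComputableInTime.mul
      (ComputableInTime.var (Sum.inl (⟨i, j⟩ : (i : Fin n) × {j // j ∈ π i})))
      (ComputableInTime.var (Sum.inr (sample s, j.1))))
  have mean_square := ComputableInTime.div
    (ComputableInTime.sum fun s => ComputableInTime.mul (residual s) (residual s))
    (ComputableInTime.const ((m - m / 2 : ℕ) : ℚ))
  have bounded := mean_square.mono (T := m * (4 * ((π i).card : ℝ) + 9)) <| by
    have one_le : (1 : ℝ) ≤ m := by exact_mod_cast hm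
    have half_le : ((m - m / 2 : ℕ) : ℝ) * (4 * (π i).card + 6) ≤ m * (4 * (π i).card + 6) := by
      gcongr
      exact Nat.sub_le _ _
    simp only [Finset.sum_const, Finset.card_univ, nsmul_eq_mul, Fintype.card_fin,
      Fintype.card_coe]
    linarith
  convert bounded using 3 with w
  simp only [varianceRecovery, sq, Rat.cast_natCast]
  rfl

theorem computableInTime_estimator (hm : 1 ≤ m) {S : Fin n → ℝ}
    (hsolve : ∀ i, ComputableInTime (linearSolve (Fin (π i).card)) (S i)) :
    ComputableInTime (estimator π m)
      (∑ i, ((m / 2 / (π i).card : ℕ) * S i + (π i).card * (480 * (m / 2 / (π i).card : ℕ) + 3)) +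
        ∑ i, (m * (4 * (π i).card + 9) : ℝ)) := by
  have coeffs := ComputableInTime.pi fun i => computableInTime_coeffEst (m := m) π i (hsolve i)
  have variances := ComputableInTime.of_forall
    (F := fun (w : ((i : Fin n) × {j // j ∈ π i}) ⊕ (Fin m × Fin n) → ℝ) =>
      varianceRecovery π (fun i j => w (.inl ⟨i, j⟩)) (secondHalf fun s i => w (.inr (s, i))))
    fun i => computableInTime_varianceRecovery π i hm
  have all_estimates := coeffs.bind ((ComputableInTime.proj Sum.inl).pair variances)
  rwa [zero_add] at all_estimates

theorem node_time_le {K ω : ℝ} (hK : 0 ≤ K) (hω : 2 ≤ ω) (hm : 1 ≤ m) (p : ℕ) :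
    (m / 2 / p : ℕ) * (K * (p : ℝ) ^ ω) + p * (480 * (m / 2 / p : ℕ) + 3) + m * (4 * p + 9) ≤
      m * ((K + 7) * (p : ℝ) ^ (ω - 1) + 489) := by
  have one_le : (1 : ℝ) ≤ m := by exact_mod_cast hm
  have samples_le : ((m / 2 / p : ℕ) : ℝ) * p ≤ m := by
    exact_mod_cast (Nat.div_mul_le_self _ _).trans (Nat.div_le_self _ _)
  have p_le_rpow := natCast_le_rpow p (by linarith : 1 ≤ ω - 1)
  rw [rpow_eq_mul_rpow_sub_one p.cast_nonneg (by linarith : ω ≠ 0)]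
  set x := (p : ℝ) ^ (ω - 1)
  set b := ((m / 2 / p : ℕ) : ℝ)
  calc b * (K * (p * x)) + p * (480 * b + 3) + m * (4 * p + 9)
      = b * p * (K * x + 480) + 3 * (1 * p) + m * (4 * p + 9) := by ring
    _ ≤ m * (K * x + 480) + 3 * (m * x) + m * (4 * x + 9) := by gcongr
    _ = m * ((K + 7) * x + 489) := by ring

theorem sum_card_rpow_le {ω : ℝ} (hω : 2 ≤ ω) {d : ℕ} (hd : ∀ i, (π i).card ≤ d) :
    ∑ i, ((π i).card : ℝ) ^ (ω - 1) ≤ n * (avgInDegree π * (d : ℝ) ^ (ω - 2)) := by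
  rcases Nat.eq_zero_or_pos n with rfl | hn
  · simp
  · rw [avgInDegree, div_mul_eq_mul_div, mul_div_cancel₀ _ (by positivity), Finset.sum_mul]
    refine Finset.sum_le_sum fun i _ => ?_
    rw [rpow_eq_mul_rpow_sub_one (Nat.cast_nonneg _) (by linarith : ω - 1 ≠ 0),
      show ω - 1 - 1 = ω - 2 by ring]
    gcongr
    exact hd i

theorem IsMatMulExponent.exists_estimator_time {ω : ℝ} (h : IsMatMulExponent ω) :
    ∃ K : ℝ, 0 < K ∧ ∀ (n d : ℕ) (π : Fin n → Finset (Fin n)), (∀ i, (π i).card ≤ d) →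
      ∀ m : ℕ, 1 ≤ m → ComputableInTime (estimator π m)
        (K * (m * n * max 1 (avgInDegree π * (d : ℝ) ^ (ω - 2)))) := by
  obtain ⟨K, K_nonneg, hsolve⟩ := h.exists_linearSolve_time
  refine ⟨K + 496, by linarith, fun n d π hd m hm => ?_⟩
  refine (computableInTime_estimator π hm fun i => hsolve (π i).card).mono ?_
  have sum_le := sum_card_rpow_le π h.1 hd
  have one_le_max := le_max_left 1 (avgInDegree π * (d : ℝ) ^ (ω - 2))
  have le_max := le_max_right 1 (avgInDegree π * (d : ℝ) ^ (ω - 2))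
  set M := max 1 (avgInDegree π * (d : ℝ) ^ (ω - 2))
  rw [← Finset.sum_add_distrib]
  calc _ ≤ ∑ i, m * ((K + 7) * ((π i).card : ℝ) ^ (ω - 1) + 489) :=
        Finset.sum_le_sum fun i _ => node_time_le K_nonneg h.1 hm (π i).card
    _ = m * ((K + 7) * ∑ i, ((π i).card : ℝ) ^ (ω - 1) + n * 489 * 1) := by
        rw [← Finset.mul_sum, Finset.sum_add_distrib, ← Finset.mul_sum, Finset.sum_const,
          Finset.card_univ, Fintype.card_fin, nsmul_eq_mul, mul_one]
    _ ≤ m * ((K + 7) * (n * M) + n * 489 * M) := by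
        gcongr
        exact sum_le.trans (by gcongr)
    _ = (K + 496) * (m * n * M) := by ring

end EstimatorTime

/-! ### Connected graphs and the theorem -/

section ConnectedGraphs

variable {n : ℕ} (π : Fin n → Finset (Fin n))

theorem card_edgeSet_underlyingGraph_le :
    Nat.card (underlyingGraph π).edgeSet ≤ ∑ i, (π i).card := by
  let edge : (Σ i, {j // j ∈ π i}) → Sym2 (Fin n) := fun e => s(e.1, e.2.1)
  have edgeSet_subset : (underlyingGraph π).edgeSet ⊆ Set.range edge := by
    intro e
    induction e with
    | _ a b =>
      rw [SimpleGraph.mem_edgeSet, underlyingGraph, SimpleGraph.fromRel_adj]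
      rintro ⟨-, hab | hab⟩
      · exact ⟨⟨a, b, hab⟩, rfl⟩
      · exact ⟨⟨b, a, hab⟩, Sym2.eq_swap⟩
  calc Nat.card (underlyingGraph π).edgeSet ≤ Nat.card (Set.range edge) :=
        Nat.card_mono (Set.toFinite _) edgeSet_subset
    _ ≤ Nat.card (Σ i, {j // j ∈ π i}) := Finite.card_range_le edge
    _ = ∑ i, (π i).card := by simp

variable {π} (hconn : (underlyingGraph π).Connected)

include hconn

theorem card_le_sum_card_add_one : n ≤ ∑ i, (π i).card + 1 := by
  simpa using hconn.card_vert_le_card_edgeSet_add_one.trans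
    (Nat.add_le_add_right (card_edgeSet_underlyingGraph_le π) 1)

theorem half_le_avgInDegree (hn : 2 ≤ n) : 1 / 2 ≤ avgInDegree π := by
  have n_le : (n : ℝ) ≤ ∑ i, ((π i).card : ℝ) + 1 := by
    exact_mod_cast card_le_sum_card_add_one hconn
  have two_le : (2 : ℝ) ≤ n := by exact_mod_cast hn
  rw [avgInDegree, le_div_iff₀ (by linarith)]
  linarith

theorem one_le_of_card_le (hn : 2 ≤ n) {d : ℕ} (hd : ∀ i, (π i).card ≤ d) : 1 ≤ d := by
  by_contra! d_lt
  have sum_eq : ∑ i, (π i).card = 0 := Finset.sum_eq_zero fun i _ => by have := hd i; omega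
  have n_le := card_le_sum_card_add_one hconn
  omega

end ConnectedGraphs

section SampleSize

variable {ε δ : ℝ} (hε0 : 0 < ε) (hε1 : ε < 1) (hδ0 : 0 < δ) (hδ1 : δ < 1)

include hε0 hε1 hδ0 hδ1

theorem le_div_mul_of_lt_one {x : ℝ} (hx : 0 ≤ x) : x ≤ x / (ε * δ) :=
  le_div_self hx (by positivity) (by nlinarith)

theorem log_div_nonneg (n : ℕ) : 0 ≤ Real.log (n / (ε * δ)) := by
  rcases Nat.eq_zero_or_pos n with rfl | hn
  · simp
  · exact Real.log_nonneg ((Nat.one_le_cast.2 hn).trans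
      (le_div_mul_of_lt_one hε0 hε1 hδ0 hδ1 n.cast_nonneg))

theorem half_le_log_div {n : ℕ} (hn : 2 ≤ n) : 1 / 2 ≤ Real.log (n / (ε * δ)) := by
  have two_le : (2 : ℝ) ≤ n / (ε * δ) :=
    (Nat.ofNat_le_cast.2 hn).trans (le_div_mul_of_lt_one hε0 hε1 hδ0 hδ1 n.cast_nonneg)
  linarith [Real.log_le_log (by norm_num) two_le, Real.log_two_gt_d9]

end SampleSize

theorem max_one_mul_le_two_mul {x y : ℝ} (hx : 1 / 2 ≤ x) (hy : 1 ≤ y) :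
    max 1 (x * y) ≤ 2 * (x * y) :=
  max_le (by nlinarith) (by nlinarith)

theorem one_le_sampleSize {C a d L ε : ℝ} {n : ℕ} (hC : 2 ≤ C) (ha : 1 / 2 ≤ a) (hd : 1 ≤ d)
    (hn : 2 ≤ n) (hL : 1 / 2 ≤ L) (hε0 : 0 < ε) (hε1 : ε < 1) :
    1 ≤ C * (n * a * d / ε ^ 2) * L := by
  have two_le : (2 : ℝ) ≤ n := by exact_mod_cast hn
  calc (1 : ℝ) = 2 * (2 * (1 / 2) * 1 / 1) * (1 / 2) := by norm_num
    _ ≤ C * (n * a * d / ε ^ 2) * L := by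
      gcongr
      exact pow_le_one₀ hε0.le hε1.le

theorem estimator_time_le_of_le_sampleSize {K C a d L ε ω m n : ℝ} (hK : 0 ≤ K) (hn : 0 ≤ n)
    (ha : 1 / 2 ≤ a) (hd : 1 ≤ d) (hω : 2 ≤ ω) (hm0 : 0 ≤ m)
    (hm : m ≤ 2 * (C * (n * a * d / ε ^ 2) * L)) :
    K * (m * n * max 1 (a * d ^ (ω - 2))) ≤
      K * (4 * C) * (n ^ 2 * a ^ 2 * d ^ (ω - 1) / ε ^ 2 * L) := by
  have max_le := max_one_mul_le_two_mul ha (Real.one_le_rpow hd (by linarith : 0 ≤ ω - 2))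
  rw [rpow_eq_mul_rpow_sub_one (by linarith) (by linarith : ω - 1 ≠ 0),
    show ω - 1 - 1 = ω - 2 by ring]
  calc K * (m * n * max 1 (a * d ^ (ω - 2)))
      ≤ K * (2 * (C * (n * a * d / ε ^ 2) * L) * n * (2 * (a * d ^ (ω - 2)))) := by
        gcongr
        exact mul_nonneg (hm0.trans hm) hn
    _ = K * (4 * C) * (n ^ 2 * a ^ 2 * (d * d ^ (ω - 2)) / ε ^ 2 * L) := by ring

end GBN

open GBN in
theorem stmt_14_general : ∃ C : ℝ, 0 < C ∧
    (∀ (ε δ : ℝ), 0 < ε → ε < 1 → 0 < δ → δ < 1 →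
      ∀ (n d : ℕ) (π : Fin n → Finset (Fin n)),
        (∀ i, ∀ j ∈ π i, j < i) → (∀ i, (π i).card ≤ d) → HasDisjointParents π →
        ∀ (A : ∀ i, {j // j ∈ π i} → ℝ) (σ : Fin n → ℝ), (∀ i, 0 < σ i) →
        ∀ m : ℕ,
          (C * (n * max 1 (avgInDegree π * d) / ε ^ 2) * Real.log (n / (ε * δ)) ≤ m →
            LearnsWithin π A σ m ε δ) ∧
          (2 ≤ n → (underlyingGraph π).Connected →
            C * (n * avgInDegree π * d / ε ^ 2) * Real.log (n / (ε * δ)) ≤ m →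
            LearnsWithin π A σ m ε δ)) ∧
    (∀ ω : ℝ, IsMatMulExponent ω → ∃ K : ℝ, 0 < K ∧
      ∀ (n d : ℕ) (π : Fin n → Finset (Fin n)), (∀ i, (π i).card ≤ d) →
        (∀ m : ℕ, 1 ≤ m →
          ComputableInTime (estimator π m)
            (K * (m * n * max 1 (avgInDegree π * (d : ℝ) ^ (ω - 2))))) ∧
        (2 ≤ n → (underlyingGraph π).Connected →
          ∀ (ε δ : ℝ), 0 < ε → ε < 1 → 0 < δ → δ < 1 →
          ∀ m : ℕ,
            m = ⌈C * (n * avgInDegree π * d / ε ^ 2) * Real.log (n / (ε * δ))⌉₊ →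
            ComputableInTime (estimator π m)
              (K * ((n : ℝ) ^ 2 * avgInDegree π ^ 2 * (d : ℝ) ^ (ω - 1) / ε ^ 2 *
                Real.log (n / (ε * δ)))))) := by
  obtain ⟨C, hC, hlearn⟩ := exists_learnsWithin_const
  refine ⟨2 * C, by linarith, ?_, fun ω hω => ?_⟩
  · intro ε δ hε0 hε1 hδ0 hδ1 n d π hπ hd hG A σ hσ m
    have log_nonneg := log_div_nonneg hε0 hε1 hδ0 hδ1 n
    refine ⟨fun hm => hlearn ε δ hε0 hε1 hδ0 hδ1 n d π hπ hd hG A σ hσ m (le_trans ?_ hm),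
      fun hn hconn hm => hlearn ε δ hε0 hε1 hδ0 hδ1 n d π hπ hd hG A σ hσ m (le_trans ?_ hm)⟩
    · gcongr
      linarith
    · have max_le := max_one_mul_le_two_mul (half_le_avgInDegree hconn hn)
        (Nat.one_le_cast.2 (one_le_of_card_le hconn hn hd))
      calc C * (n * max 1 (avgInDegree π * d) / ε ^ 2) * Real.log (n / (ε * δ))
          ≤ C * (n * (2 * (avgInDegree π * d)) / ε ^ 2) * Real.log (n / (ε * δ)) := by gcongr
        _ = _ := by ring
  · obtain ⟨K, hK, htime⟩ := hω.exists_estimator_time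
    refine ⟨K * (4 * (2 * C)), by positivity, fun n d π hd => ⟨fun m hm => ?_, ?_⟩⟩
    · refine (htime n d π hd m hm).mono ?_
      gcongr
      exact le_mul_of_one_le_right hK.le (by linarith)
    · rintro hn hconn ε δ hε0 hε1 hδ0 hδ1 m rfl
      have half_le_avg := half_le_avgInDegree hconn hn
      have one_le_d : (1 : ℝ) ≤ d := Nat.one_le_cast.2 (one_le_of_card_le hconn hn hd)
      have one_le := one_le_sampleSize (C := 2 * C) (by linarith) half_le_avg one_le_d hn
        (half_le_log_div hε0 hε1 hδ0 hδ1 hn) hε0 hε1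
      exact (htime n d π hd _ (Nat.one_le_ceil_iff.2 (by linarith))).mono
        (estimator_time_le_of_le_sampleSize hK.le n.cast_nonneg half_le_avg one_le_d hω.1
          (Nat.cast_nonneg _) (Nat.ceil_le_two_mul (by linarith)))

/-- Distribution learning on polytrees by coordinate-wise medians of batch solutions:
(1) sample complexity for arbitrary polytrees; (2) sample complexity for connected polytrees on
at least two nodes; (3) running time in terms of the number of samples; (4) running time at the
sample size of (2). -/
theorem stmt_14 : ∃ C : ℝ, 0 < C ∧
    (∀ (ε δ : ℝ), 0 < ε → ε < 1 → 0 < δ → δ < 1 →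
      ∀ (n d : ℕ) (π : Fin n → Finset (Fin n)),
        (∀ i, ∀ j ∈ π i, j < i) → (∀ i, (π i).card ≤ d) →
        (GBN.underlyingGraph π).IsAcyclic →
        ∀ (A : ∀ i, {j // j ∈ π i} → ℝ) (σ : Fin n → ℝ), (∀ i, 0 < σ i) →
        ∀ m : ℕ,
          (C * (n * max 1 (GBN.avgInDegree π * d) / ε ^ 2) * Real.log (n / (ε * δ)) ≤ m →
            GBN.LearnsWithin π A σ m ε δ) ∧
          (2 ≤ n → (GBN.underlyingGraph π).Connected →
            C * (n * GBN.avgInDegree π * d / ε ^ 2) * Real.log (n / (ε * δ)) ≤ m →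
            GBN.LearnsWithin π A σ m ε δ)) ∧
    (∀ ω : ℝ, GBN.IsMatMulExponent ω → ∃ K : ℝ, 0 < K ∧
      ∀ (n d : ℕ) (π : Fin n → Finset (Fin n)),
        (∀ i, ∀ j ∈ π i, j < i) → (∀ i, (π i).card ≤ d) →
        (GBN.underlyingGraph π).IsAcyclic →
        (∀ m : ℕ, 1 ≤ m →
          GBN.ComputableInTime (GBN.estimator π m)
            (K * (m * n * max 1 (GBN.avgInDegree π * (d : ℝ) ^ (ω - 2))))) ∧
        (2 ≤ n → (GBN.underlyingGraph π).Connected →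
          ∀ (ε δ : ℝ), 0 < ε → ε < 1 → 0 < δ → δ < 1 →
          ∀ m : ℕ,
            m = ⌈C * (n * GBN.avgInDegree π * d / ε ^ 2) * Real.log (n / (ε * δ))⌉₊ →
            GBN.ComputableInTime (GBN.estimator π m)
              (K * ((n : ℝ) ^ 2 * GBN.avgInDegree π ^ 2 * (d : ℝ) ^ (ω - 1) / ε ^ 2 *
                Real.log (n / (ε * δ)))))) := by
  obtain ⟨C, hC, hlearn, htime⟩ := stmt_14_general
  refine ⟨C, hC, fun ε δ hε0 hε1 hδ0 hδ1 n d π hπ hd hG => hlearn ε δ hε0 hε1 hδ0 hδ1 n d π hπ hd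
    (GBN.hasDisjointParents_of_isAcyclic hπ hG), fun ω hω => ?_⟩
  obtain ⟨K, hK, htime⟩ := htime ω hω
  exact ⟨K, hK, fun n d π _ hd _ => htime n d π hd⟩
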